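/- arXiv:1501.01649 — 5 statements merged into one kernel-verified Lean document; each statement's English description precedes it below -/
import Mathlib

section
/- There exist universal constants C₈ and C₉ such that the following holds. Let r ∈ [1, ∞), let X be a log-concave random vector in ℝⁿ, set d_i := (E X_i²)^{1/2} and d := (Σ_{i=1}^n d_i^r)^{1/r}, let K ⊂ ℝⁿ be a convex set and A := {X ∈ K} with 0 < P(A) ≤ 1/e. Then for every t > 0 and u ≥ 1, Σ_{k=0}^∞ 2^{kr} Σ_{i=1}^n d_i^r · 1_{{P(A ∩ {X_i ≥ 2^k·t·d_i}) ≥ e^{−u}·P(A)}} ≤ (C₈·u/t)^r · ( σ_{r,X}(−log P(A))^r + d^r · 1_{{t ≤ u·C₉}} ). -/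
/-!
The sum over `k` is geometric, so for each coordinate `i` it is comparable to its last term, at a
level `s = 2^k t d_i` which `X i` exceeds, given `A`, with probability at least `e^{-u}`. Borell's
lemma, applied under the conditional measure, turns this into `|X i| ≥ b_i = s / (2u)` with
conditional probability at least `1/4` (`borell_quarter`), and `∑ b_i^r` has to be bounded.
Coordinates with `b_i` below a constant multiple of `d_i` exist only when `t ≤ C₉ u` and contribute
at most a multiple of `d^r`.

For the others (`core_claim`) let `S = ∑ b_i^r`, `w_i = b_i^r / S` and `p = -log P(A)`. By a reverse
Markov inequality, with probability at least `e^{-p}/8` the event `A` holds and a `w`-proportion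
`1/8` of the coordinates satisfies `|X i| ≥ b_i`. The signs of these coordinates depend on the point,
so a single linear form does not see them all, and one has to localize (`localize`): there is a
point `y` of this event such that with probability at least `e^{-O(p)}` the vector `X` is close to
`y` in the norm `(∑ w_i (x_i / b_i)²)^{1/2}`. The linear form with coefficients
`S^{1/r} (w_i / b_i) sign y_i` on the large coordinates of `y` is in the dual ball of `ℓ_r` and is
at least `S^{1/r}/16` there, whence `S^{1/r} ≤ C σ_{r,X}(p)`.

The localization projects to `ℝᵐ`, `m = ⌈p⌉`, by a random Gaussian matrix. As `b_i` is much larger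
than `d_i`, half of the mass of `X` is sent to a ball of radius `√m`. Taking midpoints with this half,
log-concavity and a count of integer points show that one unit cell carries an `e^{-O(m)}` part of
the event (`exists_big_cell`), while a small ball estimate shows that most pairs of points in that
cell were already close before the projection.

The set `K` is not assumed measurable; `convex_null` shows that it is null-measurable for the law
of `X`, which is all that is needed.
-/

open MeasureTheory
open scoped Pointwise ENNReal ProbabilityTheory Classical

/-- A measure on a real topological vector space is log-concave if
`μ(λK + (1−λ)L) ≥ μ(K)^λ μ(L)^{1−λ}` for all compact nonempty `K, L` and `λ ∈ [0,1]`. -/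
def IsLogConcave {E : Type*} [AddCommGroup E] [Module ℝ E] [TopologicalSpace E]
    [MeasurableSpace E] (μ : Measure E) : Prop :=
  ∀ K L : Set E, K.Nonempty → L.Nonempty → IsCompact K → IsCompact L →
    ∀ l : ℝ, 0 ≤ l → l ≤ 1 →
      μ K ^ l * μ L ^ (1 - l) ≤ μ (l • K + (1 - l) • L)

/-- The `ℓ_r` norm on `ℝⁿ`: `‖x‖_r = (∑ |x i|^r)^{1/r}`. -/
noncomputable def lrNorm (r : ℝ) {n : ℕ} (x : Fin n → ℝ) : ℝ :=
  (∑ i, |x i| ^ r) ^ (1 / r)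

/-- The weak `p`-th moment `σ_{r,X}(p) = sup { (E|∑ tᵢXᵢ|^p)^{1/p} : ‖t‖_{r'} ≤ 1 }`, where the
condition `‖t‖_{r'} ≤ 1` on the Hölder-dual norm is expressed by duality as
`|∑ tᵢxᵢ| ≤ ‖x‖_r` for all `x` (this covers `r' = ∞` when `r = 1`). -/
noncomputable def sigmaR (r : ℝ) {n : ℕ} {Ω : Type*} [MeasureSpace Ω]
    (X : Ω → Fin n → ℝ) (p : ℝ) : ℝ :=
  ⨆ t : {t : Fin n → ℝ // ∀ x : Fin n → ℝ, |∑ i, t i * x i| ≤ lrNorm r x},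
    (∫ ω, |∑ i, t.1 i * X ω i| ^ p) ^ (1 / p)

/-! ### Null-measurability of convex sets under log-concave measures -/

theorem continuous_const_rpow_aux {a : ℝ≥0∞} (h0 : a ≠ 0) (h1 : a ≠ ∞) :
    Continuous fun x : ℝ => a ^ x := by
  have ha : 0 < a.toReal := ENNReal.toReal_pos h0 h1
  have : (fun x : ℝ => a ^ x) = fun x => ENNReal.ofReal (a.toReal ^ x) := by
    ext1 x
    rw [← ENNReal.ofReal_rpow_of_pos ha, ENNReal.ofReal_toReal h1]
  rw [this]
  exact ENNReal.continuous_ofReal.comp (Real.continuous_const_rpow ha.ne')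

/-- Log-concavity extends from compact sets to null-measurable ones by inner regularity; the
conclusion only asks for a superset `U` of the convex combinations, so that no measurability of the
Minkowski sum is involved. -/
theorem lc_null {E : Type} [NormedAddCommGroup E] [NormedSpace ℝ E] [FiniteDimensional ℝ E]
    [MeasurableSpace E] [BorelSpace E] {μ : Measure E} [IsFiniteMeasure μ] (h : IsLogConcave μ)
    {S T U : Set E} (hS : NullMeasurableSet S μ) (hT : NullMeasurableSet T μ) {l : ℝ}
    (h0 : 0 < l) (h1 : l < 1) (hU : ∀ x ∈ S, ∀ y ∈ T, l • x + (1 - l) • y ∈ U) :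
    μ S ^ l * μ T ^ (1 - l) ≤ μ U := by
  have : CompleteSpace E := FiniteDimensional.complete ℝ E
  have key : ∀ {S : Set E}, NullMeasurableSet S μ → ∀ {s : ℝ}, 0 < s → ∀ a < μ S ^ s,
      ∃ C ⊆ S, IsCompact C ∧ C.Nonempty ∧ a ≤ μ C ^ s := by
    intro S hS s hs a ha
    obtain ⟨S', hS'S, hS'm, hS'e⟩ := hS.exists_measurable_subset_ae_eq
    rw [← measure_congr hS'e] at ha
    have ha' : a ^ (1 / s) < μ S' := by
      rwa [one_div, ENNReal.rpow_inv_lt_iff hs]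
    obtain ⟨C, hC, hCc, hCm⟩ := hS'm.exists_lt_isCompact ha'
    refine ⟨C, hC.trans hS'S, hCc, ?_, ?_⟩
    · by_contra hne
      rw [Set.not_nonempty_iff_eq_empty] at hne
      simp [hne] at hCm
    · rw [one_div, ENNReal.rpow_inv_lt_iff hs] at hCm
      exact hCm.le
  refine ENNReal.mul_le_of_forall_lt fun a ha b hb => ?_
  obtain ⟨C, hCS, hCc, hCn, hC⟩ := key hS h0 a ha
  obtain ⟨D, hDT, hDc, hDn, hD⟩ := key hT (sub_pos.2 h1) b hb
  refine (mul_le_mul' hC hD).trans ((h C D hCn hDn hCc hDc l h0.le h1.le).trans ?_)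
  apply measure_mono
  rintro _ ⟨_, ⟨x, hx, rfl⟩, _, ⟨y, hy, rfl⟩, rfl⟩
  exact hU x (hCS hx) y (hDT hy)

/-- The restriction of a log-concave measure to a translate of a hyperplane, read as a measure on
the linear hyperplane, is log-concave. -/
theorem IsLogConcave.comap_ker {E : Type} [NormedAddCommGroup E] [NormedSpace ℝ E]
    [FiniteDimensional ℝ E] [MeasurableSpace E] [BorelSpace E] {μ : Measure E}
    (h : IsLogConcave μ) (f : E →L[ℝ] ℝ) (x₀ : E) :
    MeasurableEmbedding (fun v : f.ker => (v : E) + x₀) ∧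
      IsLogConcave (μ.comap (fun v : f.ker => (v : E) + x₀)) := by
  have hcl : IsClosed ((f.ker : Submodule ℝ E) : Set E) := f.isClosed_ker
  have hemb : MeasurableEmbedding (fun v : f.ker => (v : E) + x₀) :=
    (measurableEmbedding_addRight x₀).comp (MeasurableEmbedding.subtype_coe hcl.measurableSet)
  refine ⟨hemb, fun K L hK hL hKc hLc l h0 h1 => ?_⟩
  rw [hemb.comap_apply, hemb.comap_apply, hemb.comap_apply]
  have hc : Continuous (fun v : f.ker => (v : E) + x₀) := by fun_prop
  refine (h _ _ (hK.image _) (hL.image _) (hKc.image hc) (hLc.image hc) l h0 h1).trans ?_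
  apply measure_mono
  rintro _ ⟨_, ⟨_, ⟨x, hx, rfl⟩, rfl⟩, _, ⟨_, ⟨y, hy, rfl⟩, rfl⟩, rfl⟩
  refine ⟨l • x + (1 - l) • y, ⟨_, ⟨x, hx, rfl⟩, _, ⟨y, hy, rfl⟩, rfl⟩, ?_⟩
  simp only [Submodule.coe_add, Submodule.coe_smul, smul_add]
  have : l • x₀ + (1 - l) • x₀ = x₀ := by rw [← add_smul]; simp
  conv_lhs => rw [← this]
  abel

/-- If a log-concave measure charges the interior of a convex set, it does not charge the frontier:
moving a compact piece `F` of the frontier slightly towards a compact piece `T` of the interior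
gives interior sets which shrink to the empty set, but whose masses are at least
`μ(F)^(1-ε) μ(T)^ε → μ(F)`. -/
theorem measure_frontier_zero {E : Type} [NormedAddCommGroup E] [NormedSpace ℝ E]
    [FiniteDimensional ℝ E] [MeasurableSpace E] [BorelSpace E] {μ : Measure E}
    [IsFiniteMeasure μ] (h : IsLogConcave μ) {K : Set E} (hK : Convex ℝ K)
    (hpos : μ (interior K) ≠ 0) : μ (frontier K) = 0 := by
  have : CompleteSpace E := FiniteDimensional.complete ℝ E
  by_contra hF
  obtain ⟨F, hFK, hFc, hFm⟩ :=
    isClosed_frontier.measurableSet.exists_lt_isCompact (pos_iff_ne_zero.2 hF)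
  obtain ⟨T, hTK, hTc, hTm⟩ :=
    isOpen_interior.measurableSet.exists_lt_isCompact (pos_iff_ne_zero.2 hpos)
  obtain ⟨R, hR⟩ := (hFc.isBounded.union hTc.isBounded).exists_norm_le
  have hFne : F.Nonempty := by
    by_contra hne
    rw [Set.not_nonempty_iff_eq_empty] at hne
    simp [hne] at hFm
  -- the combinations with weight `1 - ε` on the frontier lie inside, within `2Rε` of the frontier
  let V : ℕ → Set E := fun k => interior K ∩ Metric.cthickening (2 * R * (1 / ((k : ℝ) + 2))) F
  have hle : ∀ k : ℕ, μ F ^ (1 - 1 / ((k : ℝ) + 2)) * μ T ^ (1 / ((k : ℝ) + 2)) ≤ μ (V k) := by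
    intro k
    have e0 : (0 : ℝ) < 1 / ((k : ℝ) + 2) := by positivity
    have e1 : 1 / ((k : ℝ) + 2) < 1 := by
      rw [div_lt_one (by positivity)]; linarith [(Nat.cast_nonneg k : (0 : ℝ) ≤ k)]
    have := lc_null h (U := V k) hFc.measurableSet.nullMeasurableSet
      hTc.measurableSet.nullMeasurableSet (l := 1 - 1 / ((k : ℝ) + 2)) (by linarith) (by linarith) ?_
    · simpa using this
    intro x hx y hy
    rw [sub_sub_cancel]
    refine ⟨hK.combo_closure_interior_mem_interior (frontier_subset_closure (hFK hx)) (hTK hy)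
      (by linarith) e0 (by ring), ?_⟩
    refine Metric.mem_cthickening_of_dist_le _ x _ _ hx ?_
    rw [dist_eq_norm]
    have : (1 - 1 / ((k : ℝ) + 2)) • x + (1 / ((k : ℝ) + 2)) • y - x
        = (1 / ((k : ℝ) + 2)) • (y - x) := by module
    rw [this, norm_smul, Real.norm_of_nonneg e0.le, mul_comm]
    have := norm_sub_le y x
    have := hR x (Or.inl hx)
    have := hR y (Or.inr hy)
    gcongr
    linarith
  have hinter : ⋂ k, V k = ∅ := by
    rw [Set.eq_empty_iff_forall_notMem]
    intro x hx
    rw [Set.mem_iInter] at hx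
    have hxF : x ∈ closure F := by
      rw [Metric.mem_closure_iff_infDist_zero hFne]
      refine le_antisymm ?_ Metric.infDist_nonneg
      have hlim : Filter.Tendsto (fun k : ℕ => 2 * R * (1 / ((k : ℝ) + 2))) Filter.atTop
          (nhds (2 * R * 0)) := by
        refine Filter.Tendsto.const_mul _ ?_
        have := (tendsto_one_div_add_atTop_nhds_zero_nat (𝕜 := ℝ)).comp (Filter.tendsto_add_atTop_nat 1)
        refine this.congr fun k => ?_
        simp only [Function.comp_apply]; push_cast; ring_nf
      rw [mul_zero] at hlim
      refine ge_of_tendsto' hlim fun k => ?_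
      have hk := (hx k).2
      rw [Metric.mem_cthickening_iff] at hk
      have hR0 : 0 ≤ R := (norm_nonneg _).trans (hR _ (Or.inl hFne.some_mem))
      rw [Metric.infDist]
      exact ENNReal.toReal_le_of_le_ofReal (by positivity) hk
    rw [hFc.isClosed.closure_eq] at hxF
    exact (hFK hxF).2 (hx 0).1
  have hanti : Antitone V := by
    intro i j hij
    refine Set.inter_subset_inter_right _ (Metric.cthickening_mono ?_ _)
    have hR0 : 0 ≤ R := (norm_nonneg _).trans (hR _ (Or.inl hFne.some_mem))
    have : (i : ℝ) ≤ j := by exact_mod_cast hij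
    gcongr
  have hlim1 := tendsto_measure_iInter_atTop (μ := μ) (s := V)
    (fun k => (isOpen_interior.measurableSet.inter
      Metric.isClosed_cthickening.measurableSet).nullMeasurableSet) hanti ⟨0, measure_ne_top _ _⟩
  rw [hinter, measure_empty] at hlim1
  have he : Filter.Tendsto (fun k : ℕ => 1 / ((k : ℝ) + 2)) Filter.atTop (nhds 0) := by
    have := (tendsto_one_div_add_atTop_nhds_zero_nat (𝕜 := ℝ)).comp (Filter.tendsto_add_atTop_nat 1)
    refine this.congr fun k => ?_
    simp only [Function.comp_apply]; push_cast; ring_nf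
  have hc1 : Filter.Tendsto (fun k : ℕ => μ F ^ (1 - 1 / ((k : ℝ) + 2)) * μ T ^ (1 / ((k : ℝ) + 2)))
      Filter.atTop (nhds (μ F ^ ((1 : ℝ) - 0) * μ T ^ (0 : ℝ))) := by
    refine ENNReal.Tendsto.mul ?_ ?_ ?_ ?_
    · exact ((continuous_const_rpow_aux hFm.ne' (measure_ne_top _ _)).tendsto _).comp (he.const_sub 1)
    · right; simp
    · exact ((continuous_const_rpow_aux hTm.ne' (measure_ne_top _ _)).tendsto _).comp he
    · right; simp [measure_ne_top]
  have := le_of_tendsto_of_tendsto' hc1 hlim1 hle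
  simp at this
  exact hFm.ne' this

/-- Convex sets are null-measurable for log-concave measures, by induction on the dimension: if `μ`
charges the interior, the frontier is null; if `μ` does not charge a nonempty interior, the part of
`μ` on the closure lives on a supporting hyperplane; and a convex set with empty interior lies in a
hyperplane. The space is quantified inside so that the induction can pass to hyperplanes. -/
theorem convex_null_aux : ∀ (d : ℕ) (E : Type) [NormedAddCommGroup E] [NormedSpace ℝ E]
    [FiniteDimensional ℝ E] [MeasurableSpace E] [BorelSpace E] (μ : Measure E)
    [IsFiniteMeasure μ], Module.finrank ℝ E = d → IsLogConcave μ → ∀ K : Set E, Convex ℝ K →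
    NullMeasurableSet K μ := by
  intro d
  induction d using Nat.strong_induction_on with
  | _ d ih =>
  intro E _ _ _ _ _ μ _ hd h K hK
  have : CompleteSpace E := FiniteDimensional.complete ℝ E
  -- sections by hyperplanes
  have hyper : ∀ (f : E →L[ℝ] ℝ) (c : ℝ), f ≠ 0 → NullMeasurableSet (K ∩ {x | f x = c}) μ := by
    intro f c hf
    obtain ⟨v, hv⟩ : ∃ v, f v ≠ 0 := by
      by_contra! hcon
      exact hf (ContinuousLinearMap.ext hcon)
    set x₀ : E := (c / f v) • v with hx₀
    have hfx : f x₀ = c := by simp [hx₀, hv]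
    obtain ⟨hemb, hlc⟩ := h.comap_ker f x₀
    have hlt : Module.finrank ℝ f.ker < d := by
      rw [← hd]
      apply Submodule.finrank_lt
      intro htop
      have : v ∈ f.ker := by rw [htop]; trivial
      exact hv (by simpa using this)
    have : IsFiniteMeasure (μ.comap (fun v : f.ker => (v : E) + x₀)) := by
      constructor
      rw [hemb.comap_apply]
      exact measure_lt_top _ _
    have hconv : Convex ℝ ((fun v : f.ker => (v : E) + x₀) ⁻¹' K) := by
      intro x hx y hy a b ha hb hab
      have := hK hx hy ha hb hab
      simp only [Set.mem_preimage, Submodule.coe_add, Submodule.coe_smul] at this ⊢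
      convert this using 1
      have h2 : a • x₀ + b • x₀ = x₀ := by rw [← add_smul, hab, one_smul]
      rw [smul_add, smul_add]
      conv_lhs => rw [← h2]
      abel
    have hn := ih _ hlt f.ker (μ.comap _) rfl hlc _ hconv
    have him := Measure.NullMeasurableSet.image _ μ hemb.injective
      (fun s hs => (hemb.measurableSet_image.2 hs).nullMeasurableSet) hn
    convert him using 1
    ext x
    simp only [Set.mem_inter_iff, Set.mem_ofPred_eq, Set.mem_image, Set.mem_preimage]
    constructor
    · rintro ⟨hxK, hxc⟩
      refine ⟨⟨x - x₀, by simp [hxc, hfx]⟩, by simpa using hxK, by simp⟩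
    · rintro ⟨y, hy, rfl⟩
      refine ⟨hy, ?_⟩
      have : f (y : E) = 0 := y.2
      simp [this, hfx]
  by_cases hint : (interior K).Nonempty
  · by_cases hpos : μ (interior K) = 0
    · -- the support of `μ` restricted to the closure is convex and misses the interior
      set ν := μ.restrict (closure K) with hν
      have hcm : MeasurableSet (closure K) := isClosed_closure.measurableSet
      have hconv : Convex ℝ ν.support := by
        rw [convex_iff_forall_pos]
        intro x hx y hy a b ha hb hab
        rw [Measure.mem_support_iff_forall] at hx hy ⊢
        intro U hU
        obtain ⟨ε, hε, hεU⟩ := Metric.mem_nhds_iff.1 hU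
        have hx' := hx _ (Metric.ball_mem_nhds x hε)
        have hy' := hy _ (Metric.ball_mem_nhds y hε)
        refine lt_of_lt_of_le ?_ (measure_mono hεU)
        rw [hν, Measure.restrict_apply Metric.isOpen_ball.measurableSet] at hx' hy' ⊢
        have hb' : b = 1 - a := by linarith
        subst hb'
        refine lt_of_lt_of_le ?_ (lc_null h
          ((Metric.isOpen_ball (x := x) (ε := ε)).measurableSet.inter hcm).nullMeasurableSet
          ((Metric.isOpen_ball (x := y) (ε := ε)).measurableSet.inter hcm).nullMeasurableSet
          ha (by linarith) (U := Metric.ball (a • x + (1 - a) • y) ε ∩ closure K) ?_)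
        · exact ENNReal.mul_pos (by simp [ENNReal.rpow_eq_zero_iff, hx'.ne'])
            (by simp [ENNReal.rpow_eq_zero_iff, hy'.ne'])
        · rintro p ⟨hp, hpK⟩ q ⟨hq, hqK⟩
          refine ⟨?_, hK.closure hpK hqK ha.le hb.le hab⟩
          rw [Metric.mem_ball, dist_eq_norm] at hp hq ⊢
          have : a • p + (1 - a) • q - (a • x + (1 - a) • y)
              = a • (p - x) + (1 - a) • (q - y) := by module
          rw [this]
          refine (norm_add_le _ _).trans_lt ?_
          rw [norm_smul, norm_smul, Real.norm_of_nonneg ha.le, Real.norm_of_nonneg hb.le]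
          nlinarith
      have hdisj : Disjoint (interior K) ν.support := by
        rw [Set.disjoint_left]
        intro x hx hxs
        rw [Measure.mem_support_iff_forall] at hxs
        have := hxs _ (isOpen_interior.mem_nhds hx)
        exact this.ne' (le_antisymm ((Measure.restrict_apply_le _ _).trans hpos.le) bot_le)
      by_cases hsne : ν.support.Nonempty
      · obtain ⟨f, c, hf1, hf2⟩ :=
          geometric_hahn_banach_open hK.interior isOpen_interior hconv hdisj
        have hf0 : f ≠ 0 := by
          rintro rfl
          obtain ⟨x, hx⟩ := hint
          obtain ⟨y, hy⟩ := hsne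
          have := hf1 x hx
          have := hf2 y hy
          simp at *
          linarith
        have hle : ∀ x ∈ closure K, f x ≤ c := by
          intro x hx
          rw [← hK.closure_interior_eq_closure_of_nonempty_interior hint] at hx
          exact closure_minimal (fun y hy => (hf1 y hy).le)
            (isClosed_le f.continuous continuous_const) hx
        have hz : μ (K ∩ {x | f x = c}ᶜ) = 0 := by
          have : ν (ν.supportᶜ) = 0 := Measure.measure_compl_support
          rw [hν, Measure.restrict_apply' hcm] at this
          refine measure_mono_null ?_ this
          rintro x ⟨hx, hxc⟩
          refine ⟨fun hs => hxc (le_antisymm (hle x (subset_closure hx)) (hf2 x hs)),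
            subset_closure hx⟩
        rw [← Set.inter_union_compl K {x | f x = c}]
        exact (hyper f c hf0).union (NullMeasurableSet.of_null hz)
      · have : ν = 0 := by
          by_contra hne
          exact hsne (Measure.nonempty_support hne)
        refine NullMeasurableSet.of_null (measure_mono_null subset_closure ?_)
        rw [← Measure.restrict_eq_zero]
        exact this
    · have hfr := measure_frontier_zero h hK hpos
      have : K = interior K ∪ (K ∩ frontier K) := by
        ext x
        constructor
        · intro hx
          by_cases hxi : x ∈ interior K
          · exact Or.inl hxi
          · exact Or.inr ⟨hx, subset_closure hx, hxi⟩
        · rintro (hx | hx)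
          · exact interior_subset hx
          · exact hx.1
      rw [this]
      exact isOpen_interior.measurableSet.nullMeasurableSet.union
        (NullMeasurableSet.of_null (measure_mono_null Set.inter_subset_right hfr))
  · -- a convex set without interior lies in a hyperplane
    rcases K.eq_empty_or_nonempty with rfl | ⟨x₁, hx₁⟩
    · exact MeasurableSet.empty.nullMeasurableSet
    rw [hK.interior_nonempty_iff_affineSpan_eq_top] at hint
    have hdir : (affineSpan ℝ K).direction ≠ ⊤ := by
      intro htop
      apply hint
      rwa [AffineSubspace.direction_eq_top_iff_of_nonempty
        ⟨x₁, subset_affineSpan ℝ K hx₁⟩] at htop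
    obtain ⟨g, hg0, hg⟩ := Submodule.exists_le_ker_of_lt_top _ (lt_top_iff_ne_top.2 hdir)
    let f : E →L[ℝ] ℝ := LinearMap.toContinuousLinearMap g
    have hf0 : f ≠ 0 := by
      intro hf
      apply hg0
      ext x
      exact congrArg (fun φ : E →L[ℝ] ℝ => φ x) hf
    have := hyper f (f x₁) hf0
    rwa [Set.inter_eq_left.2] at this
    intro x hx
    have hm : x - x₁ ∈ (affineSpan ℝ K).direction := by
      rw [← vsub_eq_sub]
      exact AffineSubspace.vsub_mem_direction (subset_affineSpan ℝ K hx) (subset_affineSpan ℝ K hx₁)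
    have := hg hm
    rw [LinearMap.mem_ker, map_sub, sub_eq_zero] at this
    exact this

/-! ### Borell's lemma, moments and the weak moment -/

theorem convex_null {n : ℕ} {μ : Measure (Fin n → ℝ)} [IsFiniteMeasure μ] (h : IsLogConcave μ)
    {K : Set (Fin n → ℝ)} (hK : Convex ℝ K) : NullMeasurableSet K μ :=
  convex_null_aux _ _ μ rfl h K hK

theorem lc_null_real {n : ℕ} {μ : Measure (Fin n → ℝ)} [IsFiniteMeasure μ] (h : IsLogConcave μ)
    {S T U : Set (Fin n → ℝ)} (hS : NullMeasurableSet S μ) (hT : NullMeasurableSet T μ) {l : ℝ}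
    (h0 : 0 < l) (h1 : l < 1) (hU : ∀ x ∈ S, ∀ y ∈ T, l • x + (1 - l) • y ∈ U) :
    μ.real S ^ l * μ.real T ^ (1 - l) ≤ μ.real U := by
  have := lc_null h hS hT h0 h1 hU
  have h2 := ENNReal.toReal_mono (measure_ne_top μ U) this
  rwa [ENNReal.toReal_mul, ← ENNReal.toReal_rpow, ← ENNReal.toReal_rpow] at h2

theorem measurableSet_abs_ge {n : ℕ} (i : Fin n) (b : ℝ) :
    MeasurableSet {x : Fin n → ℝ | b ≤ |x i|} :=
  measurableSet_le measurable_const (by fun_prop)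

/-- Borell's lemma, conditioned on a convex set `K`: if `|x i| < b` holds with conditional
probability more than `3/4`, then `{|x i| ≥ τ b}` has exponentially small conditional probability
in `τ`. Indeed a combination with weight `2/(τ+1)` on a point with `|x i| ≥ τ b` and the remaining
weight on a point with `|x i| < b` still satisfies `|x i| ≥ b`. -/
theorem borell {n : ℕ} {μ : Measure (Fin n → ℝ)} [IsFiniteMeasure μ] (h : IsLogConcave μ)
    {K : Set (Fin n → ℝ)} (hK : Convex ℝ K) (i : Fin n) {b τ : ℝ} (hb : 0 < b) (hτ : 1 < τ)
    (hlt : μ.real ({x | b ≤ |x i|} ∩ K) < 1 / 4 * μ.real K) :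
    μ.real ({x | τ * b ≤ |x i|} ∩ K) ≤ 3 ^ (-((τ + 1) / 2)) * μ.real K := by
  have hKn := convex_null h hK
  have hα : 0 < μ.real K := by
    have : 0 ≤ μ.real ({x | b ≤ |x i|} ∩ K) := measureReal_nonneg
    linarith
  have hl0 : 0 < 2 / (τ + 1) := by positivity
  have hl1 : 2 / (τ + 1) < 1 := by rw [div_lt_one (by linarith)]; linarith
  have hT : 3 / 4 * μ.real K ≤ μ.real ({x | b ≤ |x i|}ᶜ ∩ K) := by
    have hsub : K ⊆ ({x | b ≤ |x i|} ∩ K) ∪ ({x | b ≤ |x i|}ᶜ ∩ K) := by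
      intro x hx
      by_cases hxb : b ≤ |x i|
      · exact Or.inl ⟨hxb, hx⟩
      · exact Or.inr ⟨hxb, hx⟩
    have h1 := measureReal_mono (μ := μ) hsub
    have h2 := measureReal_union_le (μ := μ) ({x | b ≤ |x i|} ∩ K) ({x | b ≤ |x i|}ᶜ ∩ K)
    linarith
  have key := lc_null_real h (S := {x | τ * b ≤ |x i|} ∩ K) (T := {x | b ≤ |x i|}ᶜ ∩ K)
    (U := {x | b ≤ |x i|} ∩ K)
    ((measurableSet_abs_ge i _).nullMeasurableSet.inter hKn)
    ((measurableSet_abs_ge i _).compl.nullMeasurableSet.inter hKn) hl0 hl1 ?_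
  · by_contra! hcon
    set α := μ.real K
    set s := μ.real ({x | τ * b ≤ |x i|} ∩ K)
    have e1 : 1 / 3 * α ^ (2 / (τ + 1)) ≤ s ^ (2 / (τ + 1)) := by
      have : (3 ^ (-((τ + 1) / 2)) * α) ^ (2 / (τ + 1)) = 1 / 3 * α ^ (2 / (τ + 1)) := by
        rw [Real.mul_rpow (by positivity) hα.le, ← Real.rpow_mul (by norm_num)]
        have : -((τ + 1) / 2) * (2 / (τ + 1)) = -1 := by field_simp
        rw [this, Real.rpow_neg_one]; norm_num
      rw [← this]
      exact Real.rpow_le_rpow (by positivity) hcon.le hl0.le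
    have e2 : 3 / 4 * α ^ (1 - 2 / (τ + 1)) ≤ μ.real ({x | b ≤ |x i|}ᶜ ∩ K) ^ (1 - 2 / (τ + 1)) := by
      refine le_trans ?_ (Real.rpow_le_rpow (by positivity) hT (by linarith))
      rw [Real.mul_rpow (by norm_num) hα.le]
      gcongr
      exact Real.self_le_rpow_of_le_one (by norm_num) (by norm_num) (by linarith)
    have e3 : 1 / 3 * α ^ (2 / (τ + 1)) * (3 / 4 * α ^ (1 - 2 / (τ + 1))) ≤ _ :=
      (mul_le_mul e1 e2 (by positivity) (by positivity)).trans key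
    have e4 : 1 / 3 * α ^ (2 / (τ + 1)) * (3 / 4 * α ^ (1 - 2 / (τ + 1))) = 1 / 4 * α := by
      have : α ^ (2 / (τ + 1)) * α ^ (1 - 2 / (τ + 1)) = α := by
        rw [← Real.rpow_add hα]; simp
      linear_combination 1 / 4 * this
    linarith
  · rintro x ⟨hx, hxK⟩ y ⟨hy, hyK⟩
    refine ⟨?_, hK hxK hyK hl0.le (by linarith) (by ring)⟩
    simp only [Set.mem_ofPred_eq, Set.mem_compl_iff, not_le, Pi.add_apply, Pi.smul_apply,
      smul_eq_mul] at hx hy ⊢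
    set l := 2 / (τ + 1) with hl
    have h1 : |l * x i| - |(1 - l) * y i| ≤ |l * x i + (1 - l) * y i| := by
      have := abs_sub_abs_le_abs_sub (l * x i) (-((1 - l) * y i))
      rwa [abs_neg, sub_neg_eq_add] at this
    rw [abs_mul, abs_mul, abs_of_pos hl0, abs_of_pos (by linarith : 0 < 1 - l)] at h1
    have h2 : l * (τ * b) - (1 - l) * b = b := by rw [hl]; field_simp; ring
    have h3 := mul_le_mul_of_nonneg_left hx hl0.le
    have h4 := mul_le_mul_of_nonneg_left hy.le (by linarith : 0 ≤ 1 - l)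
    linarith

/-- A level which is exceeded with conditional probability at least `e^{-u}` becomes, after division
by `2u`, a level exceeded in absolute value with conditional probability at least `1/4`. -/
theorem borell_quarter {n : ℕ} {μ : Measure (Fin n → ℝ)} [IsFiniteMeasure μ] (h : IsLogConcave μ)
    {K : Set (Fin n → ℝ)} (hK : Convex ℝ K) (hK0 : 0 < μ.real K) (i : Fin n) {s u : ℝ} (hs : 0 < s)
    (hu : 1 ≤ u) (hge : Real.exp (-u) * μ.real K ≤ μ.real ({x | s ≤ x i} ∩ K)) :
    1 / 4 * μ.real K ≤ μ.real ({x | s / (2 * u) ≤ |x i|} ∩ K) := by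
  by_contra! hcon
  have h1 := borell h hK i (b := s / (2 * u)) (τ := 2 * u) (by positivity) (by linarith) hcon
  rw [mul_div_cancel₀ _ (by positivity)] at h1
  have h2 : μ.real ({x | s ≤ x i} ∩ K) ≤ μ.real ({x | s ≤ |x i|} ∩ K) :=
    measureReal_mono (Set.inter_subset_inter_left _ fun x (hx : s ≤ x i) =>
      hx.trans (le_abs_self _))
  have h3 : (3 : ℝ) ^ (-((2 * u + 1) / 2)) < Real.exp (-u) := by
    rw [Real.rpow_neg (by norm_num), Real.exp_neg]
    apply inv_strictAnti₀ (Real.exp_pos _)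
    rw [Real.rpow_def_of_pos (by norm_num)]
    apply Real.exp_lt_exp.2
    have : 1 < Real.log 3 := by
      rw [Real.lt_log_iff_exp_lt (by norm_num)]
      have := Real.exp_one_lt_d9
      linarith
    nlinarith
  have := mul_lt_mul_of_pos_right h3 hK0
  linarith

/-- The coordinates of a log-concave random vector have exponential tails. -/
theorem tail_bound {n : ℕ} {μ : Measure (Fin n → ℝ)} [IsProbabilityMeasure μ]
    (h : IsLogConcave μ) (i : Fin n) :
    ∃ b : ℝ, 0 < b ∧ ∀ k : ℕ, μ.real {x | k * b ≤ |x i|} ≤ ((3 : ℝ) ^ (-(1 / 2 : ℝ))) ^ k := by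
  have hlim : Filter.Tendsto (fun k : ℕ => μ {x | ((k : ℝ) + 1) ≤ |x i|}) Filter.atTop
      (nhds (μ (⋂ k : ℕ, {x | ((k : ℝ) + 1) ≤ |x i|}))) := by
    apply tendsto_measure_iInter_atTop
    · exact fun k => (measurableSet_abs_ge i _).nullMeasurableSet
    · intro k l hkl x hx
      have : (k : ℝ) ≤ l := by exact_mod_cast hkl
      simp only [Set.mem_ofPred_eq] at hx ⊢
      linarith
    · exact ⟨0, measure_ne_top _ _⟩
  have hempty : (⋂ k : ℕ, {x : Fin n → ℝ | ((k : ℝ) + 1) ≤ |x i|}) = ∅ := by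
    rw [Set.eq_empty_iff_forall_notMem]
    intro x hx
    rw [Set.mem_iInter] at hx
    obtain ⟨k, hk⟩ := exists_nat_gt |x i|
    have := hx k
    simp only [Set.mem_ofPred_eq] at this
    linarith
  rw [hempty, measure_empty] at hlim
  obtain ⟨k, hk⟩ := (hlim.eventually_lt_const (show (0 : ℝ≥0∞) < ENNReal.ofReal (1 / 4) by
    simp)).exists
  refine ⟨k + 1, by positivity, ?_⟩
  have hk' : μ.real {x | ((k : ℝ) + 1) ≤ |x i|} < 1 / 4 := by
    rw [Measure.real]
    exact (ENNReal.lt_ofReal_iff_toReal_lt (measure_ne_top _ _)).1 hk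
  have hρ : (1 : ℝ) / 4 ≤ 3 ^ (-(1 / 2 : ℝ)) := by
    rw [Real.rpow_neg (by norm_num), one_div]
    apply inv_anti₀ (by positivity)
    calc (3 : ℝ) ^ (1 / 2 : ℝ) ≤ 3 ^ (1 : ℝ) :=
          Real.rpow_le_rpow_of_exponent_le (by norm_num) (by norm_num)
      _ ≤ 4 := by norm_num
  intro j
  rcases j with _ | _ | j
  · simp
  · simpa using hk'.le.trans hρ
  · have := borell h convex_univ i (b := (k : ℝ) + 1) (τ := ((j + 2 : ℕ) : ℝ)) (by positivity)
      (by push_cast; linarith [(Nat.cast_nonneg j : (0 : ℝ) ≤ j)]) (by simpa using hk')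
    simp only [Set.inter_univ, probReal_univ, mul_one] at this
    refine this.trans ?_
    rw [← Real.rpow_natCast, ← Real.rpow_mul (by norm_num)]
    apply Real.rpow_le_rpow_of_exponent_le (by norm_num)
    push_cast
    linarith

/-- The coordinates have moments of all orders, so that the expectations in the statement and in
`sigmaR` are those of integrable functions. -/
theorem memLp_coord {n : ℕ} {μ : Measure (Fin n → ℝ)} [IsProbabilityMeasure μ]
    (h : IsLogConcave μ) (i : Fin n) {p : ℝ} (hp : 0 < p) :
    MemLp (fun x : Fin n → ℝ => x i) (ENNReal.ofReal p) μ := by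
  obtain ⟨b, hb, htail⟩ := tail_bound h i
  set ρ : ℝ := (3 : ℝ) ^ (-(1 / 2 : ℝ)) with hρdef
  have hρ0 : 0 < ρ := by positivity
  have hρ1 : ρ < 1 := Real.rpow_lt_one_of_one_lt_of_neg (by norm_num) (by norm_num)
  refine ⟨(measurable_pi_apply i).aestronglyMeasurable, ?_⟩
  rw [eLpNorm_lt_top_iff_lintegral_rpow_enorm_lt_top (by simpa using hp) (by simp),
    ENNReal.toReal_ofReal hp.le]
  have hpt : ∀ x : Fin n → ℝ, ‖x i‖ₑ ^ p ≤
      ∑' k : ℕ, ({x | k * b ≤ |x i|} : Set (Fin n → ℝ)).indicator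
        (fun _ => ENNReal.ofReal (((k + 1) * b) ^ p)) x := by
    intro x
    refine le_trans ?_ (ENNReal.le_tsum ⌊|x i| / b⌋₊)
    have hx : x ∈ {y : Fin n → ℝ | (⌊|x i| / b⌋₊ : ℝ) * b ≤ |y i|} := by
      have := Nat.floor_le (div_nonneg (abs_nonneg (x i)) hb.le)
      rwa [le_div_iff₀ hb] at this
    rw [Set.indicator_of_mem hx]
    rw [← ofReal_norm, ENNReal.ofReal_rpow_of_nonneg (norm_nonneg _) hp.le]
    apply ENNReal.ofReal_le_ofReal
    apply Real.rpow_le_rpow (norm_nonneg _) _ hp.le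
    rw [Real.norm_eq_abs]
    have := (Nat.lt_floor_add_one (|x i| / b)).le
    rwa [div_le_iff₀ hb] at this
  refine lt_of_le_of_lt (lintegral_mono hpt) ?_
  rw [lintegral_tsum (fun k => by
    exact (measurable_const.indicator (measurableSet_abs_ge i _)).aemeasurable)]
  have hsum : Summable fun k : ℕ => ((k + 1) * b) ^ p * ρ ^ k := by
    have h1 := summable_pow_mul_geometric_of_norm_lt_one (R := ℝ) ⌈p⌉₊
      (show ‖ρ‖ < 1 by rwa [Real.norm_of_nonneg hρ0.le])
    have h2 := ((summable_nat_add_iff 1).2 h1).mul_left (b ^ p * ρ⁻¹)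
    refine Summable.of_nonneg_of_le (fun k => by positivity) (fun k => ?_) h2
    rw [Real.mul_rpow (by positivity) hb.le]
    have : ((k : ℝ) + 1) ^ p ≤ (k + 1) ^ ⌈p⌉₊ := by
      rw [← Real.rpow_natCast]
      exact Real.rpow_le_rpow_of_exponent_le (by linarith [(Nat.cast_nonneg k : (0 : ℝ) ≤ k)])
        (Nat.le_ceil p)
    have e : b ^ p * ρ⁻¹ * (((k + 1 : ℕ) : ℝ) ^ ⌈p⌉₊ * ρ ^ (k + 1))
        = ((k : ℝ) + 1) ^ ⌈p⌉₊ * b ^ p * ρ ^ k := by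
      push_cast; rw [pow_succ]; field_simp
    rw [e]
    gcongr
  refine lt_of_le_of_lt (ENNReal.tsum_le_tsum fun k => ?_)
    (lt_top_iff_ne_top.2 hsum.tsum_ofReal_ne_top)
  rw [lintegral_indicator_const (measurableSet_abs_ge i _), ENNReal.ofReal_mul (by positivity)]
  gcongr
  rw [← ofReal_measureReal]
  exact ENNReal.ofReal_le_ofReal (htail k)

theorem integrable_form {n : ℕ} {μ : Measure (Fin n → ℝ)} [IsProbabilityMeasure μ]
    (h : IsLogConcave μ) (t : Fin n → ℝ) {p : ℝ} (hp : 0 < p) :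
    Integrable (fun x : Fin n → ℝ => |∑ i, t i * x i| ^ p) μ := by
  have h1 : MemLp (fun x : Fin n → ℝ => ∑ i, t i * x i) (ENNReal.ofReal p) μ :=
    memLp_finsetSum _ fun i _ => (memLp_coord h i hp).const_mul (t i)
  have := h1.integrable_norm_rpow (by simpa using hp) (by simp)
  simpa [ENNReal.toReal_ofReal hp.le] using this

theorem integrable_form_abs {n : ℕ} {μ : Measure (Fin n → ℝ)} [IsProbabilityMeasure μ]
    (h : IsLogConcave μ) {p : ℝ} (hp : 0 < p) :
    Integrable (fun x : Fin n → ℝ => (∑ i, |x i|) ^ p) μ := by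
  have h1 : MemLp (fun x : Fin n → ℝ => ∑ i, |x i|) (ENNReal.ofReal p) μ :=
    memLp_finsetSum _ fun i _ => (memLp_coord h i hp).norm
  have := h1.integrable_norm_rpow (by simpa using hp) (by simp)
  refine this.congr (Filter.Eventually.of_forall fun x => ?_)
  simp only [ENNReal.toReal_ofReal hp.le, Real.norm_eq_abs]
  rw [abs_of_nonneg (Finset.sum_nonneg fun i _ => abs_nonneg _)]

theorem integrable_sq {n : ℕ} {μ : Measure (Fin n → ℝ)} [IsProbabilityMeasure μ]
    (h : IsLogConcave μ) (i : Fin n) : Integrable (fun x : Fin n → ℝ => x i ^ 2) μ := by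
  have h1 := memLp_coord h i (p := 2) (by norm_num)
  rw [ENNReal.ofReal_ofNat] at h1
  exact h1.integrable_sq

/-- Lower bound for the weak moment by the values of one admissible form on an event. It needs the
supremum in `sigmaR` to be over a bounded family, which is checked by comparing with
`E (∑ |X i|)^p`. -/
theorem sigma_lower {n : ℕ} {Ω : Type} [MeasureSpace Ω] [IsProbabilityMeasure (ℙ : Measure Ω)]
    {X : Ω → Fin n → ℝ} (hX : Measurable X) (h : IsLogConcave (Measure.map X ℙ)) {r p : ℝ}
    (hr : 1 ≤ r) (hp : 0 < p) (t : Fin n → ℝ)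
    (ht : ∀ x : Fin n → ℝ, |∑ i, t i * x i| ≤ lrNorm r x) {c : ℝ} (hc : 0 ≤ c)
    {A : Set (Fin n → ℝ)} (hA : ∀ x ∈ A, c ≤ |∑ i, t i * x i|) :
    (Measure.map X ℙ).real A ^ (1 / p) * c ≤ sigmaR r X p := by
  have hprob : IsProbabilityMeasure (Measure.map X ℙ) :=
    Measure.isProbabilityMeasure_map hX.aemeasurable
  set μ := Measure.map X ℙ with hμ
  have hint : ∀ t : Fin n → ℝ, ∫ ω, |∑ i, t i * X ω i| ^ p = ∫ x, |∑ i, t i * x i| ^ p ∂μ := by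
    intro t
    rw [hμ, integral_map hX.aemeasurable]
    exact (integrable_form h t hp).aestronglyMeasurable
  have hbdd : BddAbove (Set.range fun t : {t : Fin n → ℝ // ∀ x : Fin n → ℝ,
      |∑ i, t i * x i| ≤ lrNorm r x} => (∫ ω, |∑ i, t.1 i * X ω i| ^ p) ^ (1 / p)) := by
    refine ⟨(∫ x, (∑ i, |x i|) ^ p ∂μ) ^ (1 / p), ?_⟩
    rintro _ ⟨⟨s, hs⟩, rfl⟩
    simp only
    rw [hint]
    refine Real.rpow_le_rpow (integral_nonneg fun x => by positivity) ?_ (by positivity)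
    refine integral_mono (integrable_form h s hp) (integrable_form_abs h hp) fun x => ?_
    refine Real.rpow_le_rpow (abs_nonneg _) ?_ hp.le
    refine (Finset.abs_sum_le_sum_abs _ _).trans (Finset.sum_le_sum fun i _ => ?_)
    rw [abs_mul]
    have hsi : |s i| ≤ 1 := by
      have := hs (Pi.single i 1)
      simp only [lrNorm, Pi.single_apply, mul_ite, mul_one, mul_zero, Finset.sum_ite_eq',
        Finset.mem_univ, if_true] at this
      have e : ∀ j, |if j = i then (1 : ℝ) else 0| ^ r = if j = i then 1 else 0 := by
        intro j
        split_ifs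
        · simp
        · simp [Real.zero_rpow (by linarith : r ≠ 0)]
      simpa [e] using this
    calc |s i| * |x i| ≤ 1 * |x i| := by gcongr
      _ = |x i| := one_mul _
  refine le_trans ?_ (le_ciSup hbdd ⟨t, ht⟩)
  simp only
  rw [hint]
  have hm : μ.real A * c ^ p ≤ ∫ x, |∑ i, t i * x i| ^ p ∂μ := by
    have h1 := mul_meas_ge_le_integral_of_nonneg
      (Filter.Eventually.of_forall fun x => by positivity) (integrable_form h t hp) (c ^ p)
    rw [mul_comm]
    refine le_trans ?_ h1
    gcongr
    · exact measure_ne_top _ _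
    · intro x hx
      exact Real.rpow_le_rpow hc (hA x hx) hp.le
  calc μ.real A ^ (1 / p) * c = (μ.real A * c ^ p) ^ (1 / p) := by
        rw [Real.mul_rpow measureReal_nonneg (by positivity), ← Real.rpow_mul hc,
          mul_one_div_cancel hp.ne', Real.rpow_one]
    _ ≤ _ := Real.rpow_le_rpow (by positivity) hm (by positivity)

/-! ### A pigeonhole over unit cells -/

/-- At most `64^m` integer points have `ℓ¹` norm at most `4m`: each of them has weight
`∏ 2^{-|j k|} ≥ 2^{-4m}`, and the total weight is at most `4^m`. -/
theorem card_box_le {m : ℕ} (J : Finset (Fin m → ℤ)) (hJ : ∀ j ∈ J, ∑ k, |j k| ≤ 4 * m) :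
    (J.card : ℝ) ≤ 64 ^ m := by
  set I : Finset ℤ := Finset.Icc (-(4 * m : ℤ)) (4 * m) with hI
  have hsub : J ⊆ Fintype.piFinset fun _ : Fin m => I := by
    intro j hj
    rw [Fintype.mem_piFinset]
    intro k
    have h1 : |j k| ≤ ∑ k, |j k| :=
      Finset.single_le_sum (f := fun k => |j k|) (fun _ _ => abs_nonneg _) (Finset.mem_univ k)
    rw [hI, Finset.mem_Icc]
    exact abs_le.1 (h1.trans (hJ j hj))
  have hone : ∑ i ∈ I, (1 / 2 : ℝ) ^ i.natAbs ≤ 4 := by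
    have hcov : I ⊆ (Finset.range (4 * m + 1)).image (fun i : ℕ => (i : ℤ)) ∪
        (Finset.range (4 * m + 1)).image (fun i : ℕ => -(i : ℤ)) := by
      intro i hi
      rw [hI, Finset.mem_Icc] at hi
      rw [Finset.mem_union, Finset.mem_image, Finset.mem_image]
      rcases le_total 0 i with h | h
      · exact Or.inl ⟨i.natAbs, by rw [Finset.mem_range]; omega, by omega⟩
      · exact Or.inr ⟨i.natAbs, by rw [Finset.mem_range]; omega, by omega⟩
    calc ∑ i ∈ I, (1 / 2 : ℝ) ^ i.natAbs
        ≤ ∑ i ∈ (Finset.range (4 * m + 1)).image (fun i : ℕ => (i : ℤ)) ∪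
          (Finset.range (4 * m + 1)).image (fun i : ℕ => -(i : ℤ)), (1 / 2 : ℝ) ^ i.natAbs :=
          Finset.sum_le_sum_of_subset_of_nonneg hcov fun _ _ _ => by positivity
      _ ≤ ∑ i ∈ (Finset.range (4 * m + 1)).image (fun i : ℕ => (i : ℤ)), (1 / 2 : ℝ) ^ i.natAbs
          + ∑ i ∈ (Finset.range (4 * m + 1)).image (fun i : ℕ => -(i : ℤ)),
            (1 / 2 : ℝ) ^ i.natAbs := by
          rw [← Finset.sum_union_inter]
          have : 0 ≤ ∑ i ∈ (Finset.range (4 * m + 1)).image (fun i : ℕ => (i : ℤ)) ∩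
            (Finset.range (4 * m + 1)).image (fun i : ℕ => -(i : ℤ)), (1 / 2 : ℝ) ^ i.natAbs :=
            Finset.sum_nonneg fun _ _ => by positivity
          linarith
      _ ≤ 2 + 2 := by
          rw [Finset.sum_image (by intro a _ b _ h; simpa using h),
            Finset.sum_image (by intro a _ b _ h; simpa using h)]
          simp only [Int.natAbs_natCast, Int.natAbs_neg]
          exact add_le_add (sum_geometric_two_le _) (sum_geometric_two_le _)
      _ = 4 := by norm_num
  have hprod : ∑ j ∈ Fintype.piFinset fun _ : Fin m => I, ∏ k, (1 / 2 : ℝ) ^ (j k).natAbs ≤ 4 ^ m := by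
    have hps := Finset.prod_univ_sum (fun _ : Fin m => I) (fun _ i => (1 / 2 : ℝ) ^ i.natAbs)
    rw [← hps]
    calc ∏ _k : Fin m, ∑ i ∈ I, (1 / 2 : ℝ) ^ i.natAbs ≤ ∏ _k : Fin m, (4 : ℝ) :=
          Finset.prod_le_prod (fun _ _ => Finset.sum_nonneg fun _ _ => by positivity)
            fun _ _ => hone
      _ = 4 ^ m := by simp
  have hlow : (J.card : ℝ) * (1 / 2) ^ (4 * m) ≤ ∑ j ∈ J, ∏ k, (1 / 2 : ℝ) ^ (j k).natAbs := by
    rw [← nsmul_eq_mul]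
    refine Finset.card_nsmul_le_sum _ _ _ fun j hj => ?_
    rw [Finset.prod_pow_eq_pow_sum]
    apply pow_le_pow_of_le_one (by norm_num) (by norm_num)
    have := hJ j hj
    zify
    simpa using this
  have htot := hlow.trans ((Finset.sum_le_sum_of_subset_of_nonneg hsub fun _ _ _ => by
    positivity).trans hprod)
  rw [one_div, inv_pow, ← div_eq_mul_inv, div_le_iff₀ (by positivity)] at htot
  refine htot.trans (le_of_eq ?_)
  rw [pow_mul, ← mul_pow]
  norm_num

/-- If a linear map `y` to `ℝᵐ` sends half of the mass of `μ` to the ball `B = {∑ y_k² ≤ m}`, then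
among the preimages of the unit cells of `ℤᵐ` one contains a part of `G` of mass at least
`μ(G)² / (8 · 64^{2m})`.

The midpoints of points of the cell `j` and points of `B` lie in a set `U j`, on which the integer
part of `2y` is within `4m` of `j` in the `ℓ¹` norm. By log-concavity the part of `G` in the cell `j`
has mass `s` with `s / 2 ≤ μ(U j)²`. If all these masses are below the bound `θ`, then
`s ≤ √(2θ) μ(U j)`, and as a point lies in at most `64^m` of the sets `U j`, the sum over all cells
is at most `μ(G) / 2`, which is absurd. -/
theorem exists_big_cell {n m : ℕ} {μ : Measure (Fin n → ℝ)} [IsProbabilityMeasure μ]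
    (h : IsLogConcave μ) (y : (Fin n → ℝ) →L[ℝ] (Fin m → ℝ)) {G : Set (Fin n → ℝ)}
    (hG : MeasurableSet G) (hG0 : 0 < μ.real G)
    (hB : 1 / 2 ≤ μ.real {x | ∑ k, y x k ^ 2 ≤ m}) :
    ∃ j : Fin m → ℤ, μ.real G ^ 2 / (8 * (64 ^ m) ^ 2) ≤ μ.real (G ∩ {x | ∀ k, ⌊y x k⌋ = j k}) := by
  by_contra! hcon
  set τ := μ.real G with hτ
  set N : ℝ := 64 ^ m with hN
  have hN0 : 0 < N := by positivity
  have hymeas : ∀ k, Measurable fun x => y x k := fun k =>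
    ((continuous_apply k).comp y.continuous).measurable
  have hcell : ∀ j : Fin m → ℤ, MeasurableSet {x | ∀ k, ⌊y x k⌋ = j k} := by
    intro j
    have : {x | ∀ k, ⌊y x k⌋ = j k} = ⋂ k, (fun x => ⌊y x k⌋) ⁻¹' {j k} := by
      ext x; simp
    rw [this]
    exact MeasurableSet.iInter fun k => (hymeas k).floor (measurableSet_singleton _)
  have hBm : MeasurableSet {x | ∑ k, y x k ^ 2 ≤ (m : ℝ)} :=
    measurableSet_le (Finset.measurable_sum _ fun k _ => (hymeas k).pow_const 2) measurable_const
  let U : (Fin m → ℤ) → Set (Fin n → ℝ) := fun j => {z | ∑ k, |j k - ⌊2 * y z k⌋| ≤ 4 * m}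
  have hUm : ∀ j, MeasurableSet (U j) := fun j =>
    measurableSet_le (Finset.measurable_sum _ fun k _ => by
      exact (measurable_from_top (f := fun a : ℤ => |j k - a|)).comp
        ((hymeas k).const_mul 2).floor) measurable_const
  have hkey : ∀ j, μ.real (G ∩ {x | ∀ k, ⌊y x k⌋ = j k}) ≤ τ / (2 * N) * μ.real (U j) := by
    intro j
    have h1 := lc_null_real h (S := G ∩ {x | ∀ k, ⌊y x k⌋ = j k})
      (T := {x | ∑ k, y x k ^ 2 ≤ (m : ℝ)}) (U := U j) (hG.inter (hcell j)).nullMeasurableSet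
      hBm.nullMeasurableSet (l := 1 / 2) (by norm_num) (by norm_num) ?_
    · set s := μ.real (G ∩ {x | ∀ k, ⌊y x k⌋ = j k})
      have hs0 : 0 ≤ s := measureReal_nonneg
      have hB0 : 0 ≤ μ.real {x | ∑ k, y x k ^ 2 ≤ (m : ℝ)} := measureReal_nonneg
      have h2 : s * (1 / 2) ≤ μ.real (U j) ^ 2 := by
        have h3 : (1 : ℝ) - 1 / 2 = 1 / 2 := by norm_num
        rw [h3, ← Real.sqrt_eq_rpow, ← Real.sqrt_eq_rpow, ← Real.sqrt_mul hs0] at h1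
        have h4 := (Real.sqrt_le_left measureReal_nonneg).1 h1
        nlinarith
      have h3 := (hcon j).le
      have h4 : s ^ 2 ≤ (τ / (2 * N) * μ.real (U j)) ^ 2 := by
        calc s ^ 2 = s * s := sq s
          _ ≤ τ ^ 2 / (8 * N ^ 2) * (2 * μ.real (U j) ^ 2) := by
            apply mul_le_mul h3 (by linarith) hs0 (by positivity)
          _ = _ := by field_simp; ring
      exact (abs_le_of_sq_le_sq' h4 (by positivity)).2
    · rintro x ⟨_, hx⟩ b hb
      simp only [Set.mem_ofPred_eq] at hx hb
      have e : ∀ k, 2 * y ((1 / 2 : ℝ) • x + (1 - 1 / 2 : ℝ) • b) k = y x k + y b k := by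
        intro k
        simp only [map_add, map_smul, Pi.add_apply, Pi.smul_apply, smul_eq_mul]
        ring
      have hterm : ∀ k, ((|j k - ⌊2 * y ((1 / 2 : ℝ) • x + (1 - 1 / 2 : ℝ) • b) k⌋| : ℤ) : ℝ)
          ≤ 2 * y b k ^ 2 + 2 := by
        intro k
        rw [e, ← hx k]
        set a : ℤ := ⌊y x k⌋ - ⌊y x k + y b k⌋ with ha
        have ha1 : |(a : ℝ)| ≤ |y b k| + 1 := by
          have f1 := Int.floor_le (y x k)
          have f2 := Int.lt_floor_add_one (y x k)
          have f3 := Int.floor_le (y x k + y b k)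
          have f4 := Int.lt_floor_add_one (y x k + y b k)
          have f5 := le_abs_self (y b k)
          have f6 := neg_abs_le (y b k)
          rw [ha]
          push_cast
          rw [abs_le]
          constructor <;> linarith
        have ha2 : |(a : ℝ)| ≤ |(a : ℝ)| ^ 2 := by
          rcases eq_or_ne a 0 with h0 | h0
          · simp [h0]
          · have : (1 : ℤ) ≤ |a| := Int.one_le_abs h0
            have : (1 : ℝ) ≤ |(a : ℝ)| := by exact_mod_cast this
            nlinarith
        have ha3 : |(a : ℝ)| ^ 2 ≤ (|y b k| + 1) ^ 2 := by gcongr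
        have ha4 : |y b k| ^ 2 = y b k ^ 2 := sq_abs _
        push_cast
        nlinarith [sq_nonneg (|y b k| - 1)]
      have hsum := Finset.sum_le_sum fun k (_ : k ∈ Finset.univ) => hterm k
      rw [Finset.sum_add_distrib, ← Finset.mul_sum] at hsum
      simp only [Finset.sum_const, Finset.card_univ, Fintype.card_fin, nsmul_eq_mul] at hsum
      have : ((∑ k, |j k - ⌊2 * y ((1 / 2 : ℝ) • x + (1 - 1 / 2 : ℝ) • b) k⌋| : ℤ) : ℝ)
          ≤ ((4 * m : ℤ) : ℝ) := by
        push_cast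
        push_cast at hsum
        linarith
      exact Int.cast_le.1 this
  have hcount : ∀ J : Finset (Fin m → ℤ), ∑ j ∈ J, μ.real (U j) ≤ N := by
    intro J
    have e1 : ∑ j ∈ J, μ (U j) = ∫⁻ z, ∑ j ∈ J, (U j).indicator 1 z ∂μ := by
      rw [lintegral_finsetSum _ fun j _ => measurable_one.indicator (hUm j)]
      exact Finset.sum_congr rfl fun j _ => (lintegral_indicator_one (hUm j)).symm
    have e2 : ∀ z, ∑ j ∈ J, (U j).indicator (1 : (Fin n → ℝ) → ℝ≥0∞) z ≤ ENNReal.ofReal N := by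
      intro z
      have : ∑ j ∈ J, (U j).indicator (1 : (Fin n → ℝ) → ℝ≥0∞) z = ((J.filter fun j => z ∈ U j).card : ℝ≥0∞) := by
        simp only [Set.indicator_apply, Pi.one_apply]
        rw [Finset.sum_boole]
      rw [this, ← ENNReal.ofReal_natCast]
      apply ENNReal.ofReal_le_ofReal
      have hinj : Function.Injective fun j : Fin m → ℤ => fun k => j k - ⌊2 * y z k⌋ := by
        intro a b hab
        ext k
        have := congrFun hab k
        simpa using this
      rw [← Finset.card_image_of_injective _ hinj]
      refine card_box_le _ fun j hj => ?_
      obtain ⟨i, hi, rfl⟩ := Finset.mem_image.1 hj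
      exact (Finset.mem_filter.1 hi).2
    have e3 : ∑ j ∈ J, μ (U j) ≤ ENNReal.ofReal N := by
      rw [e1]
      refine (lintegral_mono e2).trans ?_
      simp
    have e4 := ENNReal.toReal_le_of_le_ofReal hN0.le e3
    rwa [ENNReal.toReal_sum fun j _ => measure_ne_top _ _] at e4
  have hcover : μ G ≤ ∑' j : Fin m → ℤ, μ (G ∩ {x | ∀ k, ⌊y x k⌋ = j k}) := by
    refine (measure_mono ?_).trans (measure_iUnion_le _)
    intro x hx
    exact Set.mem_iUnion.2 ⟨fun k => ⌊y x k⌋, hx, fun k => rfl⟩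
  have hle : μ G ≤ ENNReal.ofReal (τ / 2) := by
    refine hcover.trans ?_
    rw [ENNReal.tsum_eq_iSup_sum]
    refine iSup_le fun J => ?_
    rw [Finset.sum_congr rfl fun j _ => (ofReal_measureReal (μ := μ)
      (s := G ∩ {x | ∀ k, ⌊y x k⌋ = j k})).symm,
      ← ENNReal.ofReal_sum_of_nonneg fun _ _ => measureReal_nonneg]
    apply ENNReal.ofReal_le_ofReal
    calc ∑ j ∈ J, μ.real (G ∩ {x | ∀ k, ⌊y x k⌋ = j k})
        ≤ ∑ j ∈ J, τ / (2 * N) * μ.real (U j) := Finset.sum_le_sum fun j _ => hkey j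
      _ = τ / (2 * N) * ∑ j ∈ J, μ.real (U j) := by rw [Finset.mul_sum]
      _ ≤ τ / (2 * N) * N := by gcongr; exact hcount J
      _ = τ / 2 := by field_simp
  have := ENNReal.toReal_le_of_le_ofReal (by positivity) hle
  have h2 : τ ≤ τ / 2 := this
  linarith

/-! ### Gaussian projections -/

/-- `ℝⁿ` with the Euclidean norm, where the standard Gaussian measure lives. -/
abbrev Eucl (n : ℕ) := EuclideanSpace ℝ (Fin n)

theorem map_inner_stdGaussian {n : ℕ} (v : Eucl n) :
    (ProbabilityTheory.stdGaussian (Eucl n)).map (fun g => inner ℝ v g) =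
      ProbabilityTheory.gaussianReal 0 (‖v‖ ^ 2).toNNReal := by
  have h := ProbabilityTheory.IsGaussian.map_eq_gaussianReal
    (μ := ProbabilityTheory.stdGaussian (Eucl n)) (innerSL ℝ v)
  rw [ProbabilityTheory.variance_dual_stdGaussian,
    ProbabilityTheory.integral_strongDual_stdGaussian, innerSL_apply_norm] at h
  exact h

theorem lintegral_inner_sq {n : ℕ} (v : Eucl n) :
    ∫⁻ g, ENNReal.ofReal (inner ℝ v g ^ 2) ∂(ProbabilityTheory.stdGaussian (Eucl n)) =
      ENNReal.ofReal (‖v‖ ^ 2) := by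
  have hm : Measurable fun g : Eucl n => inner ℝ v g := by fun_prop
  have h1 : ∫⁻ g, ENNReal.ofReal (inner ℝ v g ^ 2) ∂(ProbabilityTheory.stdGaussian (Eucl n)) =
      ∫⁻ s, ENNReal.ofReal (s ^ 2) ∂(ProbabilityTheory.gaussianReal 0 (‖v‖ ^ 2).toNNReal) := by
    rw [← map_inner_stdGaussian, lintegral_map (by fun_prop) hm]
  have h2 := ProbabilityTheory.variance_fun_id_gaussianReal (μ := 0) (v := (‖v‖ ^ 2).toNNReal)
  have hint : Integrable (fun s : ℝ => s ^ 2)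
      (ProbabilityTheory.gaussianReal 0 (‖v‖ ^ 2).toNNReal) :=
    (ProbabilityTheory.memLp_id_gaussianReal (μ := 0) (v := (‖v‖ ^ 2).toNNReal) 2).integrable_sq
  rw [h1, ← ofReal_integral_eq_lintegral_ofReal hint
    (Filter.Eventually.of_forall fun s => sq_nonneg s)]
  rw [ProbabilityTheory.variance_eq_integral (by fun_prop)] at h2
  simp only [ProbabilityTheory.integral_id_gaussianReal, sub_zero] at h2
  rw [h2, Real.coe_toNNReal _ (by positivity)]

/-- The density of `⟨v, g⟩` is at most `1 / (2‖v‖)`. -/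
theorem gaussian_small_ball {n : ℕ} {v : Eucl n} {η ε : ℝ} (hη : 0 ≤ η) (hε : 0 < ε)
    (hv : ε ≤ ‖v‖) :
    ProbabilityTheory.stdGaussian (Eucl n) {g | |inner ℝ v g| ≤ η} ≤ ENNReal.ofReal (η / ε) := by
  have hm : Measurable fun g : Eucl n => inner ℝ v g := by fun_prop
  have hv0 : 0 < ‖v‖ := hε.trans_le hv
  have h1 : ProbabilityTheory.stdGaussian (Eucl n) {g | |inner ℝ v g| ≤ η} =
      ProbabilityTheory.gaussianReal 0 (‖v‖ ^ 2).toNNReal (Set.Icc (-η) η) := by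
    rw [← map_inner_stdGaussian, Measure.map_apply hm measurableSet_Icc]
    congr 1
    ext g
    simp [abs_le]
  have hne : (‖v‖ ^ 2).toNNReal ≠ 0 := by
    rw [ne_eq, Real.toNNReal_eq_zero, not_le]; positivity
  rw [h1, ProbabilityTheory.gaussianReal_apply _ hne]
  have hpdf : ∀ s, ProbabilityTheory.gaussianPDF 0 (‖v‖ ^ 2).toNNReal s ≤
      ENNReal.ofReal (1 / (2 * ε)) := by
    intro s
    apply ENNReal.ofReal_le_ofReal
    rw [ProbabilityTheory.gaussianPDFReal, Real.coe_toNNReal _ (by positivity), one_div]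
    have hs : 2 * ε ≤ √(2 * Real.pi * ‖v‖ ^ 2) := by
      apply Real.le_sqrt_of_sq_le
      have := Real.pi_gt_three
      nlinarith [mul_pos hε hε, mul_self_le_mul_self hε.le hv]
    calc (√(2 * Real.pi * ‖v‖ ^ 2))⁻¹ * Real.exp (-(s - 0) ^ 2 / (2 * ‖v‖ ^ 2))
        ≤ (2 * ε)⁻¹ * 1 := by
          gcongr
          apply Real.exp_le_one_iff.2
          apply div_nonpos_of_nonpos_of_nonneg
          · nlinarith [sq_nonneg (s - 0)]
          · positivity
      _ = _ := mul_one _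
  calc ∫⁻ s in Set.Icc (-η) η, ProbabilityTheory.gaussianPDF 0 (‖v‖ ^ 2).toNNReal s
      ≤ ∫⁻ _s in Set.Icc (-η) η, ENNReal.ofReal (1 / (2 * ε)) := lintegral_mono fun s => hpdf s
    _ = ENNReal.ofReal (1 / (2 * ε)) * ENNReal.ofReal (η - -η) := by
        rw [setLIntegral_const, Real.volume_Icc]
    _ = ENNReal.ofReal (η / ε) := by
        rw [← ENNReal.ofReal_mul (by positivity)]
        congr 1
        field_simp
        ring

/-- The law of an `m × n` matrix with independent standard Gaussian entries, as rows. -/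
noncomputable def gaussRows (n m : ℕ) : Measure (Fin m → Eucl n) :=
  Measure.pi fun _ => ProbabilityTheory.stdGaussian (Eucl n)

instance (n m : ℕ) : IsProbabilityMeasure (gaussRows n m) := by
  unfold gaussRows; infer_instance

/-- Markov's inequality for the squared norm of the image of a fixed vector under a Gaussian matrix,
with expectation `m ‖v‖²`. -/
theorem gaussRows_markov {n m : ℕ} (hm : 1 ≤ m) (v : Eucl n) {η : ℝ} (hη : 0 < η) :
    gaussRows n m {W | η ^ 2 * m < ∑ k, inner ℝ v (W k) ^ 2} ≤
      ENNReal.ofReal (‖v‖ ^ 2 / η ^ 2) := by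
  have hm0 : (0 : ℝ) < m := by exact_mod_cast hm
  have hmeas : ∀ k : Fin m, Measurable fun W : Fin m → Eucl n => ENNReal.ofReal (inner ℝ v (W k) ^ 2) := by
    intro k; fun_prop
  have h1 : ∫⁻ W, ∑ k, ENNReal.ofReal (inner ℝ v (W k) ^ 2) ∂(gaussRows n m) =
      m * ENNReal.ofReal (‖v‖ ^ 2) := by
    rw [lintegral_finsetSum _ fun k _ => hmeas k]
    have : ∀ k : Fin m, ∫⁻ W, ENNReal.ofReal (inner ℝ v (W k) ^ 2) ∂(gaussRows n m) =
        ENNReal.ofReal (‖v‖ ^ 2) := by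
      intro k
      rw [← lintegral_inner_sq v]
      exact (measurePreserving_eval (fun _ : Fin m => ProbabilityTheory.stdGaussian (Eucl n)) k).lintegral_comp
        (f := fun g => ENNReal.ofReal (inner ℝ v g ^ 2)) (by fun_prop)
    simp [this]
  have h2 := mul_meas_ge_le_lintegral₀ (μ := gaussRows n m)
    (f := fun W => ∑ k, ENNReal.ofReal (inner ℝ v (W k) ^ 2))
    (Finset.measurable_sum _ fun k _ => hmeas k).aemeasurable (ENNReal.ofReal (η ^ 2 * m))
  rw [h1] at h2
  have hpos : 0 < η ^ 2 * m := by positivity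
  have h3 : gaussRows n m {W | η ^ 2 * m < ∑ k, inner ℝ v (W k) ^ 2} ≤
      gaussRows n m {W | ENNReal.ofReal (η ^ 2 * m) ≤ ∑ k, ENNReal.ofReal (inner ℝ v (W k) ^ 2)} := by
    apply measure_mono
    intro W hW
    simp only [Set.mem_ofPred_eq] at hW ⊢
    rw [← ENNReal.ofReal_sum_of_nonneg fun _ _ => sq_nonneg _]
    exact ENNReal.ofReal_le_ofReal hW.le
  refine h3.trans ?_
  rw [mul_comm, ← ENNReal.le_div_iff_mul_le (by left; simpa using hpos) (by left; simp)] at h2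
  refine h2.trans (le_of_eq ?_)
  rw [← ENNReal.ofReal_natCast, ← ENNReal.ofReal_mul hm0.le, ← ENNReal.ofReal_div_of_pos hpos]
  congr 1
  field_simp

/-- A Gaussian matrix sends a vector of norm at least `ε` to a cube of half-width `η` with
probability at most `(η/ε)^m`, by independence of the rows. -/
theorem gaussRows_small_ball {n m : ℕ} {v : Eucl n} {η ε : ℝ} (hη : 0 ≤ η) (hε : 0 < ε)
    (hv : ε ≤ ‖v‖) :
    gaussRows n m {W | ∀ k, |inner ℝ v (W k)| ≤ η} ≤ ENNReal.ofReal ((η / ε) ^ m) := by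
  have : {W : Fin m → Eucl n | ∀ k, |inner ℝ v (W k)| ≤ η} =
      Set.univ.pi fun _ => {g | |inner ℝ v g| ≤ η} := by
    ext W; simp
  rw [this, gaussRows, Measure.pi_pi, ENNReal.ofReal_pow (by positivity)]
  calc ∏ _k : Fin m, ProbabilityTheory.stdGaussian (Eucl n) {g | |inner ℝ v g| ≤ η}
      ≤ ∏ _k : Fin m, ENNReal.ofReal (η / ε) :=
        Finset.prod_le_prod' fun _ _ => gaussian_small_ball hη hε hv
    _ = _ := by simp

/-- By Fubini, a bound on the probability over `W` for each fixed `x` bounds the expectation over `W`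
of the mass of the bad points `x`. -/
theorem lintegral_section_le {α β : Type*} [MeasurableSpace α] [MeasurableSpace β]
    (Γ : Measure α) (ρ : Measure β) [SFinite Γ] [SFinite ρ] {Z : Set (α × β)}
    (hZ : MeasurableSet Z) {b : β → ℝ≥0∞} (hb : ∀ x, Γ {W | (W, x) ∈ Z} ≤ b x) :
    ∫⁻ W, ρ {x | (W, x) ∈ Z} ∂Γ ≤ ∫⁻ x, b x ∂ρ := by
  have h1 : (Γ.prod ρ) Z = ∫⁻ W, ρ {x | (W, x) ∈ Z} ∂Γ := Measure.prod_apply hZ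
  have h2 : (Γ.prod ρ) Z = ∫⁻ x, Γ {W | (W, x) ∈ Z} ∂ρ := Measure.prod_apply_symm hZ
  rw [← h1, h2]
  exact lintegral_mono hb

/-! ### Localization -/

/-- The ratio between the localization radius and the width of the slabs. -/
def slabRatio : ℝ := 384 * 64 * 9 * 64 ^ 4

/-- Numerical check: the expected mass of the pairs of far points with close images is negligible
compared with the square of the mass of the cell provided by `exists_big_cell`. -/
theorem slabRatio_bound {m : ℕ} (hm : 1 ≤ m) {τ : ℝ} (hτ : Real.exp (-m) / 8 ≤ τ) :
    3 * (τ ^ 2 * (1 / slabRatio) ^ m) ≤ (τ ^ 2 / (8 * (64 ^ m) ^ 2)) ^ 2 / 2 := by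
  have hτ0 : 0 < τ := lt_of_lt_of_le (by positivity) hτ
  have hL0 : 0 < slabRatio := by unfold slabRatio; norm_num
  have h9 : 1 ≤ τ ^ 2 * (64 * 9 ^ m) := by
    have h1 : Real.exp (-m) * 3 ^ m ≥ 1 := by
      have h3 : Real.exp m ≤ 3 ^ m := by
        rw [← Real.exp_one_pow]
        have := Real.exp_one_lt_d9
        gcongr
        linarith
      calc Real.exp (-m) * 3 ^ m ≥ Real.exp (-m) * Real.exp m := by gcongr
        _ = 1 := by rw [← Real.exp_add]; simp
    have h2 : 1 ≤ 8 * τ * 3 ^ m := by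
      have : Real.exp (-m) ≤ 8 * τ := by linarith
      calc 1 ≤ Real.exp (-m) * 3 ^ m := h1
        _ ≤ _ := by gcongr
    calc (1 : ℝ) ≤ (8 * τ * 3 ^ m) ^ 2 := one_le_pow₀ h2
      _ = τ ^ 2 * (64 * 9 ^ m) := by
        rw [show (9 : ℝ) = 3 ^ 2 by norm_num, ← pow_mul]; ring
  have hpow : 384 * 64 * 9 ^ m * (64 ^ m) ^ 4 ≤ slabRatio ^ m := by
    have : (384 * 64 : ℝ) ≤ (384 * 64) ^ m := le_self_pow₀ (by norm_num) (by omega)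
    unfold slabRatio
    rw [mul_pow, mul_pow, ← pow_mul 64 4 m, ← pow_mul 64 m 4, mul_comm 4 m]
    gcongr
  have hfin : 384 * (64 ^ m) ^ 4 ≤ τ ^ 2 * slabRatio ^ m := by
    calc (384 * (64 ^ m) ^ 4 : ℝ) ≤ 384 * (64 ^ m) ^ 4 * (τ ^ 2 * (64 * 9 ^ m)) :=
          le_mul_of_one_le_right (by positivity) h9
      _ = τ ^ 2 * (384 * 64 * 9 ^ m * (64 ^ m) ^ 4) := by ring
      _ ≤ _ := by gcongr
  have hLm : 0 < slabRatio ^ m := by positivity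
  have e1 : 3 * (τ ^ 2 * (1 / slabRatio) ^ m) = 3 * τ ^ 2 / slabRatio ^ m := by
    rw [one_div, inv_pow]; field_simp
  have e2 : (τ ^ 2 / (8 * (64 ^ m) ^ 2)) ^ 2 / 2 = τ ^ 4 / (128 * (64 ^ m) ^ 4) := by
    field_simp; norm_num
  rw [e1, e2, div_le_div_iff₀ hLm (by positivity)]
  nlinarith [mul_le_mul_of_nonneg_left hfin (sq_nonneg τ)]

/-- Numerical check: the mass provided by `localize` is at least `e^{-48m}`. -/
theorem cell_mass_bound {m : ℕ} (hm : 1 ≤ m) {τ : ℝ} (hτ : Real.exp (-m) / 8 ≤ τ) :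
    Real.exp (-(48 * m)) ≤ (τ ^ 2 / (8 * (64 ^ m) ^ 2)) ^ 2 / 4 := by
  have e2 : (τ ^ 2 / (8 * (64 ^ m) ^ 2)) ^ 2 / 4 = τ ^ 4 / (256 * (64 ^ m) ^ 4) := by
    field_simp; ring
  have h1 : (Real.exp (-m) / 8) ^ 4 ≤ τ ^ 4 := by gcongr
  have h2 : (2 : ℝ) ^ (44 * m) ≤ Real.exp (44 * m) := by
    have : Real.exp (44 * m) = Real.exp 1 ^ (44 * m) := by
      rw [Real.exp_one_pow]; push_cast; rfl
    rw [this]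
    have := Real.exp_one_gt_d9
    gcongr
    linarith
  have h3 : (2 : ℝ) ^ 20 * 2 ^ (24 * m) ≤ 2 ^ (44 * m) := by
    rw [← pow_add]
    exact pow_le_pow_right₀ (by norm_num) (by omega)
  have h4 : ((64 : ℝ) ^ m) ^ 4 = 2 ^ (24 * m) := by
    rw [show (64 : ℝ) = 2 ^ 6 by norm_num, ← pow_mul, ← pow_mul]; congr 1; ring
  rw [e2, le_div_iff₀ (by positivity), h4]
  have h5 : Real.exp (-(48 * m)) * Real.exp (44 * m) = Real.exp (-m) ^ 4 := by
    rw [← Real.exp_add, ← Real.exp_nat_mul]; congr 1; push_cast; ring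
  have h6 : Real.exp (-(48 * m)) * ((2 : ℝ) ^ 20 * 2 ^ (24 * m)) ≤ Real.exp (-m) ^ 4 := by
    rw [← h5]; gcongr; exact h3.trans h2
  have h7 : (Real.exp (-m) / 8) ^ 4 = Real.exp (-m) ^ 4 / 2 ^ 12 := by rw [div_pow]; norm_num
  rw [h7] at h1
  rw [div_le_iff₀ (by norm_num)] at h1
  linarith

/-- Localization: if `T x` is small in mean square and `G` has mass at least `e^{-m}/8`, some ball of
radius `ε` around the image of a point of `G` has a preimage in `G` of mass at least `e^{-48m}`.

A random `m × n` Gaussian matrix `W`, scaled by `1/η`, sends most of the mass of `T x` to the ball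
of radius `√m`, and sends few pairs of points at distance at least `ε` to the same unit cell. For a
suitable `W`, most pairs of points in the cell of `exists_big_cell` are then at distance less than
`ε`, and one of them can be taken as the centre. The mass lost depends on `m` only, not on `n`. -/
theorem localize {n m : ℕ} {μ : Measure (Fin n → ℝ)} [IsProbabilityMeasure μ]
    (h : IsLogConcave μ) (T : (Fin n → ℝ) →L[ℝ] Eucl n) (hm : 1 ≤ m) {ε η : ℝ} (hε : 0 < ε)
    (hη : η = ε / slabRatio) {G : Set (Fin n → ℝ)} (hG : MeasurableSet G)
    (hGm : Real.exp (-m) / 8 ≤ μ.real G)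
    (hT : ∫⁻ x, ENNReal.ofReal (‖T x‖ ^ 2) ∂μ ≤ ENNReal.ofReal (η ^ 2 / 4)) :
    ∃ y ∈ G, Real.exp (-(48 * m)) ≤ μ.real (G ∩ {x | ‖T x - T y‖ < ε}) := by
  set τ := μ.real G with hτ
  have hτ0 : 0 < τ := lt_of_lt_of_le (by positivity) hGm
  have hτ1 : τ ≤ 1 := measureReal_le_one
  have hL0 : 0 < slabRatio := by unfold slabRatio; norm_num
  have hη0 : 0 < η := by rw [hη]; positivity
  have hηε : η / ε = 1 / slabRatio := by rw [hη]; field_simp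
  set a : ℝ := τ ^ 2 * (1 / slabRatio) ^ m with ha
  have ha0 : 0 < a := by positivity
  set θ : ℝ := τ ^ 2 / (8 * (64 ^ m) ^ 2) with hθ
  have hθ0 : 0 < θ := by positivity
  have haθ : 3 * a ≤ θ ^ 2 / 2 := slabRatio_bound hm hGm
  set ν := μ.restrict G with hν
  have hνu : ν Set.univ = ENNReal.ofReal τ := by
    rw [hν, Measure.restrict_apply_univ, hτ, ofReal_measureReal]
  -- `Z1`: the image of a point leaves the ball; `Z2`: two far points have close images
  let Z1 : Set ((Fin m → Eucl n) × (Fin n → ℝ)) :=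
    {z | η ^ 2 * m < ∑ k, inner ℝ (T z.2) (z.1 k) ^ 2}
  let Z2 : Set ((Fin m → Eucl n) × ((Fin n → ℝ) × (Fin n → ℝ))) :=
    {z | (∀ k, |inner ℝ (T z.2.1 - T z.2.2) (z.1 k)| ≤ η) ∧ ε ≤ ‖T z.2.1 - T z.2.2‖}
  have hZ1 : MeasurableSet Z1 := by
    apply IsOpen.measurableSet
    exact isOpen_lt continuous_const (by fun_prop)
  have hZ2 : MeasurableSet Z2 := by
    apply IsClosed.measurableSet
    have e : Z2 = (⋂ k, {z | |inner ℝ (T z.2.1 - T z.2.2) (z.1 k)| ≤ η}) ∩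
        {z | ε ≤ ‖T z.2.1 - T z.2.2‖} := by
      ext z; simp [Z2]
    rw [e]
    exact (isClosed_iInter fun k => isClosed_le (by fun_prop) continuous_const).inter
      (isClosed_le continuous_const (by fun_prop))
  have hf1 : ∫⁻ W, μ {x | (W, x) ∈ Z1} ∂(gaussRows n m) ≤ ENNReal.ofReal (1 / 4) := by
    refine (lintegral_section_le _ _ hZ1 (b := fun x => ENNReal.ofReal (‖T x‖ ^ 2 / η ^ 2))
      fun x => gaussRows_markov hm (T x) hη0).trans ?_
    have : ∀ x, ENNReal.ofReal (‖T x‖ ^ 2 / η ^ 2) =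
        ENNReal.ofReal (1 / η ^ 2) * ENNReal.ofReal (‖T x‖ ^ 2) := by
      intro x
      rw [← ENNReal.ofReal_mul (by positivity)]; congr 1; ring
    simp only [this]
    rw [lintegral_const_mul' _ _ ENNReal.ofReal_ne_top]
    calc _ ≤ ENNReal.ofReal (1 / η ^ 2) * ENNReal.ofReal (η ^ 2 / 4) := by gcongr
      _ = ENNReal.ofReal (1 / 4) := by
        rw [← ENNReal.ofReal_mul (by positivity)]; congr 1; field_simp
  have hf2 : ∫⁻ W, (ν.prod ν) {x | (W, x) ∈ Z2} ∂(gaussRows n m) ≤ ENNReal.ofReal a := by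
    refine (lintegral_section_le _ _ hZ2 (b := fun _ => ENNReal.ofReal ((η / ε) ^ m))
      fun x => ?_).trans ?_
    · by_cases hx : ε ≤ ‖T x.1 - T x.2‖
      · exact (measure_mono fun W hW => hW.1).trans (gaussRows_small_ball hη0.le hε hx)
      · have : {W | (W, x) ∈ Z2} = ∅ := by
          ext W
          simp only [Set.mem_ofPred_eq, Set.mem_empty_iff_false, iff_false]
          exact fun hW => hx hW.2
        rw [this]; simp
    · rw [lintegral_const, ← Set.univ_prod_univ, Measure.prod_prod, hνu,
        ← ENNReal.ofReal_mul hτ0.le, ← ENNReal.ofReal_mul (by positivity), ha, hηε]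
      apply ENNReal.ofReal_le_ofReal
      apply le_of_eq; ring
  have hm1 : Measurable fun W => μ {x | (W, x) ∈ Z1} := measurable_measure_prodMk_left hZ1
  have hm2 : Measurable fun W => (ν.prod ν) {x | (W, x) ∈ Z2} := measurable_measure_prodMk_left hZ2
  -- one matrix for which both masses are controlled; the weight `8 a` balances the two bounds
  obtain ⟨W, hW⟩ := exists_le_lintegral (μ := gaussRows n m)
    (f := fun W => ENNReal.ofReal (8 * a) * μ {x | (W, x) ∈ Z1} + (ν.prod ν) {x | (W, x) ∈ Z2})
    ((hm1.const_mul _).add hm2).aemeasurable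
  have hW3 : ENNReal.ofReal (8 * a) * μ {x | (W, x) ∈ Z1} + (ν.prod ν) {x | (W, x) ∈ Z2} ≤
      ENNReal.ofReal (3 * a) := by
    refine hW.trans ?_
    rw [lintegral_add_right _ hm2, lintegral_const_mul _ hm1]
    calc _ ≤ ENNReal.ofReal (8 * a) * ENNReal.ofReal (1 / 4) + ENNReal.ofReal a := by gcongr
      _ = ENNReal.ofReal (3 * a) := by
        rw [← ENNReal.ofReal_mul (by positivity), ← ENNReal.ofReal_add (by positivity) ha0.le]
        congr 1; ring
  have hW1 : μ.real {x | (W, x) ∈ Z1} ≤ 3 / 8 := by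
    have h1 := (le_self_add).trans hW3
    have h2 := ENNReal.toReal_le_of_le_ofReal (by positivity) h1
    rw [ENNReal.toReal_mul, ENNReal.toReal_ofReal (by positivity)] at h2
    have h3 : 8 * a * μ.real {x | (W, x) ∈ Z1} ≤ 3 * a := h2
    by_contra! hc
    nlinarith
  have hW2 : (ν.prod ν).real {x | (W, x) ∈ Z2} ≤ 3 * a :=
    ENNReal.toReal_le_of_le_ofReal (by positivity) ((le_add_self).trans hW3)
  let y : (Fin n → ℝ) →L[ℝ] (Fin m → ℝ) :=
    ContinuousLinearMap.pi fun k => (1 / η) • ((innerSL ℝ (W k)).comp T)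
  have hy : ∀ x k, y x k = inner ℝ (T x) (W k) / η := by
    intro x k
    simp only [y, ContinuousLinearMap.pi_apply, _root_.smul_apply,
      ContinuousLinearMap.comp_apply, innerSL_apply_apply, smul_eq_mul]
    rw [real_inner_comm]; ring
  have hB : 1 / 2 ≤ μ.real {x | ∑ k, y x k ^ 2 ≤ (m : ℝ)} := by
    have : {x | ∑ k, y x k ^ 2 ≤ (m : ℝ)} = {x | (W, x) ∈ Z1}ᶜ := by
      ext x
      simp only [Set.mem_ofPred_eq, Set.mem_compl_iff, Z1, not_lt, hy, div_pow,
        ← Finset.sum_div]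
      rw [div_le_iff₀ (by positivity), mul_comm]
    have hZs : MeasurableSet {x | (W, x) ∈ Z1} := measurable_prodMk_left hZ1
    rw [this, probReal_compl_eq_one_sub hZs]
    linarith
  obtain ⟨j, hj⟩ := exists_big_cell h y hG hτ0 hB
  set S : Set (Fin n → ℝ) := {x | ∀ k, ⌊y x k⌋ = j k} with hS
  have hSm : MeasurableSet S := by
    have : S = ⋂ k, (fun x => ⌊y x k⌋) ⁻¹' {j k} := by
      ext x; simp [hS]
    rw [this]
    exact MeasurableSet.iInter fun k =>
      (((continuous_apply k).comp y.continuous).measurable).floor (measurableSet_singleton _)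
  have hνS : θ ≤ ν.real S := by
    rw [hν, measureReal_restrict_apply hSm, Set.inter_comm]; exact hj
  set D : Set ((Fin n → ℝ) × (Fin n → ℝ)) := {z | ‖T z.1 - T z.2‖ < ε} with hD
  have hDm : MeasurableSet D := (isOpen_lt (by fun_prop) continuous_const).measurableSet
  have hcov : S ×ˢ S ⊆ {x | (W, x) ∈ Z2} ∪ D := by
    rintro ⟨x, x'⟩ ⟨hx, hx'⟩
    by_cases hd : ‖T x - T x'‖ < ε
    · exact Or.inr hd
    · refine Or.inl ⟨fun k => ?_, not_lt.1 hd⟩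
      have h1 : |y x k - y x' k| < 1 :=
        Int.abs_sub_lt_one_of_floor_eq_floor ((hx k).trans (hx' k).symm)
      rw [hy, hy, ← sub_div, abs_div, abs_of_pos hη0, div_lt_one hη0] at h1
      simp only [inner_sub_left]
      exact h1.le
  have hDlow : θ ^ 2 / 2 ≤ (ν.prod ν).real D := by
    have h1 : (ν.prod ν).real (S ×ˢ S) = ν.real S * ν.real S := measureReal_prod_prod _ _
    have h2 : (ν.prod ν).real (S ×ˢ S) ≤ (ν.prod ν).real {x | (W, x) ∈ Z2} + (ν.prod ν).real D :=
      (measureReal_mono hcov).trans (measureReal_union_le _ _)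
    nlinarith
  refine (by_contra fun hcon => ?_ : ∃ y ∈ G, θ ^ 2 / 4 ≤ μ.real (G ∩ {x | ‖T x - T y‖ < ε})).imp
    fun y hy => ⟨hy.1, (cell_mass_bound hm hGm).trans hy.2⟩
  push Not at hcon
  have hup : (ν.prod ν) D ≤ ENNReal.ofReal (θ ^ 2 / 4) := by
    rw [Measure.prod_apply hDm]
    calc ∫⁻ x, ν (Prod.mk x ⁻¹' D) ∂ν ≤ ∫⁻ _, ENNReal.ofReal (θ ^ 2 / 4) ∂ν := by
          apply lintegral_mono_ae
          filter_upwards [ae_restrict_mem hG] with x hx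
          have h1 := (hcon x hx).le
          have h2 : ν (Prod.mk x ⁻¹' D) = μ (G ∩ {x' | ‖T x' - T x‖ < ε}) := by
            rw [hν, Measure.restrict_apply (measurable_prodMk_left hDm), Set.inter_comm]
            congr 2
            ext x'
            simp only [hD, Set.mem_preimage, Set.mem_ofPred_eq]
            rw [norm_sub_rev]
          rw [h2, ← ofReal_measureReal]
          exact ENNReal.ofReal_le_ofReal h1
      _ ≤ ENNReal.ofReal (θ ^ 2 / 4) := by
          rw [lintegral_const, hνu, ← ENNReal.ofReal_mul (by positivity)]
          apply ENNReal.ofReal_le_ofReal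
          nlinarith [sq_nonneg θ]
  have hup' : (ν.prod ν).real D ≤ θ ^ 2 / 4 := ENNReal.toReal_le_of_le_ofReal (by positivity) hup
  nlinarith [sq_pos_of_pos hθ0]

/-! ### Large coordinates and the test form -/

/-- The test vector attached to the point `y`: it sees the coordinates in `I` which are large at `y`,
with the sign they have at `y`. -/
noncomputable def testVec {n : ℕ} (I : Finset (Fin n)) (w b y : Fin n → ℝ) (Q : ℝ) (i : Fin n) : ℝ :=
  if i ∈ I ∧ b i ≤ |y i| then Q * (w i / b i) * (if 0 ≤ y i then 1 else -1) else 0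

theorem testVec_sum {n : ℕ} (I : Finset (Fin n)) (w b y : Fin n → ℝ) (Q : ℝ) (x : Fin n → ℝ) :
    ∑ i, testVec I w b y Q i * x i = ∑ i ∈ I, testVec I w b y Q i * x i := by
  symm
  apply Finset.sum_subset (Finset.subset_univ I)
  intro i _ hi
  simp [testVec, hi]

theorem testVec_abs_le {n : ℕ} {I : Finset (Fin n)} {w b : Fin n → ℝ} {Q : ℝ} (hQ : 0 ≤ Q)
    (hw : ∀ i ∈ I, 0 ≤ w i) (hb : ∀ i ∈ I, 0 < b i) (y : Fin n → ℝ) (x : ℝ) {i : Fin n}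
    (hi : i ∈ I) : |testVec I w b y Q i * x| ≤ Q * (w i * (|x| / b i)) := by
  have hbi := hb i hi
  have hwi := hw i hi
  rw [abs_mul]
  have h1 : |testVec I w b y Q i| ≤ Q * (w i / b i) := by
    have h0 : 0 ≤ Q * (w i / b i) := by positivity
    unfold testVec
    split_ifs <;> simp [abs_of_nonneg h0, h0]
  calc _ ≤ Q * (w i / b i) * |x| := by gcongr
    _ = _ := by ring

/-- With weights `w i = b i ^ r / S`, where `S = ∑ b i ^ r`, and scale `S^{1/r}`, the test vector is in
the unit ball of the dual of `ℓ_r`; this is Jensen's inequality for `w`. -/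
theorem testVec_feasible {n : ℕ} {I : Finset (Fin n)} {b : Fin n → ℝ} {r : ℝ} (hr : 1 ≤ r)
    (hI : I.Nonempty) (hb : ∀ i ∈ I, 0 < b i) (y x : Fin n → ℝ) :
    |∑ i, testVec I (fun i => b i ^ r / ∑ j ∈ I, b j ^ r) b y ((∑ j ∈ I, b j ^ r) ^ (1 / r)) i * x i|
      ≤ lrNorm r x := by
  have hr0 : 0 < r := by linarith
  set S := ∑ j ∈ I, b j ^ r with hS
  have hS0 : 0 < S := Finset.sum_pos (fun i hi => Real.rpow_pos_of_pos (hb i hi) r) hI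
  set w : Fin n → ℝ := fun i => b i ^ r / S with hw
  have hw0 : ∀ i ∈ I, 0 ≤ w i := fun i hi => by
    have := Real.rpow_pos_of_pos (hb i hi) r
    simp only [hw]; positivity
  have hw1 : ∑ i ∈ I, w i = 1 := by
    rw [← Finset.sum_div, div_self hS0.ne']
  have hQ : 0 ≤ S ^ (1 / r) := by positivity
  rw [testVec_sum]
  calc |∑ i ∈ I, testVec I w b y (S ^ (1 / r)) i * x i|
      ≤ ∑ i ∈ I, |testVec I w b y (S ^ (1 / r)) i * x i| := Finset.abs_sum_le_sum_abs _ _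
    _ ≤ ∑ i ∈ I, S ^ (1 / r) * (w i * (|x i| / b i)) :=
        Finset.sum_le_sum fun i hi => testVec_abs_le hQ hw0 hb y (x i) hi
    _ = S ^ (1 / r) * ∑ i ∈ I, w i * (|x i| / b i) := by rw [Finset.mul_sum]
    _ ≤ S ^ (1 / r) * (∑ i ∈ I, w i * (|x i| / b i) ^ r) ^ (1 / r) := by
        gcongr
        exact Real.arith_mean_le_rpow_mean I w (fun i => |x i| / b i) hw0 hw1
          (fun i hi => div_nonneg (abs_nonneg _) (hb i hi).le) hr
    _ = S ^ (1 / r) * ((∑ i ∈ I, |x i| ^ r) / S) ^ (1 / r) := by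
        congr 2
        rw [Finset.sum_div]
        refine Finset.sum_congr rfl fun i hi => ?_
        have := Real.rpow_pos_of_pos (hb i hi) r
        rw [Real.div_rpow (abs_nonneg _) (hb i hi).le]
        simp only [hw]
        field_simp
    _ = (∑ i ∈ I, |x i| ^ r) ^ (1 / r) := by
        have : 0 ≤ ∑ i ∈ I, |x i| ^ r := Finset.sum_nonneg fun _ _ => by positivity
        rw [← Real.mul_rpow hS0.le (by positivity)]
        congr 1; field_simp
    _ ≤ lrNorm r x := by
        unfold lrNorm
        gcongr
        exact Finset.subset_univ I

/-- If a proportion `1/8` of the coordinates of `y` is large, the test vector of `y` takes a value of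
order `Q` at every `x` close to `y` in the weighted `ℓ²` distance: the value at `y` is at least
`Q / 8`, and the error is at most `Q / 16` by Cauchy–Schwarz. -/
theorem testVec_lower {n : ℕ} {I : Finset (Fin n)} {w b : Fin n → ℝ} {Q : ℝ} (hQ : 0 ≤ Q)
    (hw : ∀ i ∈ I, 0 ≤ w i) (hw1 : ∑ i ∈ I, w i = 1) (hb : ∀ i ∈ I, 0 < b i) {x y : Fin n → ℝ}
    (hy : 1 / 8 ≤ ∑ i ∈ I, w i * (if b i ≤ |y i| then 1 else 0))
    (hxy : ∑ i ∈ I, w i * ((x i - y i) / b i) ^ 2 ≤ (1 / 16) ^ 2) :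
    Q / 16 ≤ ∑ i, testVec I w b y Q i * x i := by
  rw [testVec_sum]
  have h1 : ∀ i ∈ I, Q * (w i * (if b i ≤ |y i| then 1 else 0)) - Q * (w i * (|x i - y i| / b i)) ≤
      testVec I w b y Q i * x i := by
    intro i hi
    have hbi := hb i hi
    have hwi := hw i hi
    have e : testVec I w b y Q i * x i =
        testVec I w b y Q i * y i + testVec I w b y Q i * (x i - y i) := by ring
    have e1 := testVec_abs_le hQ hw hb y (x i - y i) hi
    have e2 := (abs_le.1 e1).1
    have e3 : Q * (w i * (if b i ≤ |y i| then 1 else 0)) ≤ testVec I w b y Q i * y i := by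
      by_cases hc : b i ≤ |y i|
      · have e4 : testVec I w b y Q i * y i = Q * (w i * (|y i| / b i)) := by
          have ht : testVec I w b y Q i = Q * (w i / b i) * (if 0 ≤ y i then 1 else -1) :=
            if_pos ⟨hi, hc⟩
          rw [ht]
          by_cases h0 : 0 ≤ y i
          · rw [if_pos h0, abs_of_nonneg h0]; ring
          · rw [if_neg h0, abs_of_neg (not_le.1 h0)]; ring
        rw [e4, if_pos hc]
        have : 1 ≤ |y i| / b i := (one_le_div hbi).2 hc
        gcongr
      · simp [testVec, hc]
    linarith
  have h2 := Finset.sum_le_sum h1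
  rw [Finset.sum_sub_distrib, ← Finset.mul_sum, ← Finset.mul_sum] at h2
  have h3 : ∑ i ∈ I, w i * (|x i - y i| / b i) ≤ 1 / 16 := by
    have h4 := Finset.sum_mul_sq_le_sq_mul_sq I (fun i => √(w i))
      (fun i => √(w i) * (|x i - y i| / b i))
    have e1 : ∑ i ∈ I, √(w i) * (√(w i) * (|x i - y i| / b i)) =
        ∑ i ∈ I, w i * (|x i - y i| / b i) :=
      Finset.sum_congr rfl fun i hi => by rw [← mul_assoc, Real.mul_self_sqrt (hw i hi)]
    have e2 : ∑ i ∈ I, √(w i) ^ 2 = 1 := by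
      rw [← hw1]; exact Finset.sum_congr rfl fun i hi => Real.sq_sqrt (hw i hi)
    have e3 : ∑ i ∈ I, (√(w i) * (|x i - y i| / b i)) ^ 2 =
        ∑ i ∈ I, w i * ((x i - y i) / b i) ^ 2 :=
      Finset.sum_congr rfl fun i hi => by
        rw [mul_pow, Real.sq_sqrt (hw i hi), div_pow, sq_abs, div_pow]
    rw [e1, e2, e3, one_mul] at h4
    exact (abs_le_of_sq_le_sq' (h4.trans hxy) (by norm_num)).2
  nlinarith

/-- Reverse Markov: an average of events, each of conditional probability at least `1/4`,
is at least `1/8` with conditional probability at least `1/8`. -/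
theorem average_level {α : Type*} [MeasurableSpace α] {ι : Type*} {ν : Measure α}
    [IsFiniteMeasure ν] {I : Finset ι} {w : ι → ℝ} (hw : ∀ i ∈ I, 0 ≤ w i)
    (hw1 : ∑ i ∈ I, w i = 1) {B : ι → Set α} (hB : ∀ i, MeasurableSet (B i))
    (hlow : ∀ i ∈ I, 1 / 4 * ν.real Set.univ ≤ ν.real (B i)) :
    1 / 8 * ν.real Set.univ ≤ ν.real {x | 1 / 8 ≤ ∑ i ∈ I, w i * (B i).indicator 1 x} := by
  set g : α → ℝ := fun x => ∑ i ∈ I, w i * (B i).indicator 1 x with hg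
  have hind : ∀ i, Integrable ((B i).indicator (1 : α → ℝ)) ν := fun i =>
    (integrable_const (1 : ℝ)).indicator (hB i)
  have hgi : Integrable g ν := integrable_finsetSum _ fun i _ => (hind i).const_mul (w i)
  have hgm : Measurable g := by
    refine Finset.measurable_sum _ fun i _ => ?_
    exact (measurable_one.indicator (hB i)).const_mul (w i)
  have hF : MeasurableSet {x | 1 / 8 ≤ g x} := measurableSet_le measurable_const hgm
  have hint : ∫ x, g x ∂ν = ∑ i ∈ I, w i * ν.real (B i) := by
    rw [hg, integral_finsetSum _ fun i _ => (hind i).const_mul (w i)]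
    refine Finset.sum_congr rfl fun i _ => ?_
    rw [integral_const_mul, integral_indicator_one (hB i)]
  have h1 : 1 / 4 * ν.real Set.univ ≤ ∫ x, g x ∂ν := by
    rw [hint]
    calc 1 / 4 * ν.real Set.univ = ∑ i ∈ I, w i * (1 / 4 * ν.real Set.univ) := by
          rw [← Finset.sum_mul, hw1, one_mul]
      _ ≤ _ := Finset.sum_le_sum fun i hi => mul_le_mul_of_nonneg_left (hlow i hi) (hw i hi)
  have hFi : Integrable ({x | 1 / 8 ≤ g x}.indicator (1 : α → ℝ)) ν :=
    (integrable_const (1 : ℝ)).indicator hF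
  have h2 : ∫ x, g x ∂ν ≤ ∫ x, ({x | 1 / 8 ≤ g x}.indicator (1 : α → ℝ) x + 1 / 8) ∂ν := by
    refine integral_mono hgi
      (hFi.add (integrable_const _)) fun x => ?_
    by_cases hx : 1 / 8 ≤ g x
    · have : g x ≤ 1 := by
        rw [← hw1]
        refine Finset.sum_le_sum fun i hi => ?_
        have := hw i hi
        by_cases hxi : x ∈ B i <;> simp [hxi, this]
      have hx' : x ∈ {x | 1 / 8 ≤ g x} := hx
      simp only [Set.indicator_of_mem hx', Pi.one_apply]
      linarith
    · have hx' : x ∉ {x | 1 / 8 ≤ g x} := hx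
      simp only [Set.indicator_of_notMem hx']
      linarith
  rw [integral_add hFi (integrable_const _),
    integral_indicator_one hF, integral_const, smul_eq_mul] at h2
  linarith

/-- If, given `K`, each `|X i|`, `i ∈ I`, exceeds a level `b i` which is large compared with its
standard deviation with probability at least `1/4`, then the `ℓ_r` norm of the levels is at most a
constant times the weak moment of order `p = -log P(K)`. -/
theorem core_claim {n : ℕ} {Ω : Type} [MeasureSpace Ω] [IsProbabilityMeasure (ℙ : Measure Ω)]
    {X : Ω → Fin n → ℝ} (hX : Measurable X) (h : IsLogConcave (Measure.map X ℙ)) {r : ℝ}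
    (hr : 1 ≤ r) {K : Set (Fin n → ℝ)} (hK : Convex ℝ K) (hK0 : 0 < (Measure.map X ℙ).real K)
    (hK1 : (Measure.map X ℙ).real K ≤ (Real.exp 1)⁻¹) {I : Finset (Fin n)} {b : Fin n → ℝ}
    (hI : I.Nonempty) (hb : ∀ i ∈ I, 0 < b i)
    (hlow : ∀ i ∈ I, 1 / 4 * (Measure.map X ℙ).real K ≤
      (Measure.map X ℙ).real ({x | b i ≤ |x i|} ∩ K))
    (hd : ∀ i ∈ I, 32 * slabRatio * √(∫ x, x i ^ 2 ∂(Measure.map X ℙ)) ≤ b i) :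
    (∑ i ∈ I, b i ^ r) ^ (1 / r) ≤
      16 * Real.exp 96 * sigmaR r X (-Real.log ((Measure.map X ℙ).real K)) := by
  have hprob : IsProbabilityMeasure (Measure.map X (ℙ : Measure Ω)) :=
    Measure.isProbabilityMeasure_map hX.aemeasurable
  set μ := Measure.map X (ℙ : Measure Ω) with hμ
  have hr0 : 0 < r := by linarith
  have hL0 : 0 < slabRatio := by unfold slabRatio; norm_num
  set p := -Real.log (μ.real K) with hp
  have hp1 : 1 ≤ p := by
    have := Real.log_le_log hK0 hK1
    rw [← Real.exp_neg, Real.log_exp] at this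
    linarith
  have hKp : μ.real K = Real.exp (-p) := by rw [hp, neg_neg, Real.exp_log hK0]
  set m := ⌈p⌉₊ with hm
  have hpm : p ≤ m := Nat.le_ceil p
  have hmp : (m : ℝ) ≤ 2 * p := by
    have := Nat.ceil_lt_add_one (by linarith : 0 ≤ p)
    linarith
  have hm1 : 1 ≤ m := by
    have : (1 : ℝ) ≤ m := hp1.trans hpm
    exact_mod_cast this
  set S := ∑ j ∈ I, b j ^ r with hS
  have hS0 : 0 < S := Finset.sum_pos (fun i hi => Real.rpow_pos_of_pos (hb i hi) r) hI
  set w : Fin n → ℝ := fun i => b i ^ r / S with hw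
  have hw0 : ∀ i ∈ I, 0 ≤ w i := fun i hi => by
    have := Real.rpow_pos_of_pos (hb i hi) r
    simp only [hw]; positivity
  have hw1 : ∑ i ∈ I, w i = 1 := by
    rw [← Finset.sum_div, div_self hS0.ne']
  -- the weighted coordinate map
  let T : (Fin n → ℝ) →L[ℝ] Eucl n :=
    (EuclideanSpace.equiv (Fin n) ℝ).symm.toContinuousLinearMap.comp
      (ContinuousLinearMap.pi fun i =>
        (if i ∈ I then √(w i) / b i else 0) • ContinuousLinearMap.proj i)
  have hTi : ∀ x i, T x i = (if i ∈ I then √(w i) / b i else 0) * x i := by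
    intro x i
    change ((if i ∈ I then √(w i) / b i else 0) •
      (ContinuousLinearMap.proj i : (Fin n → ℝ) →L[ℝ] ℝ)) x = _
    rw [_root_.smul_apply, ContinuousLinearMap.proj_apply, smul_eq_mul]
  have hTn : ∀ x, ‖T x‖ ^ 2 = ∑ i ∈ I, w i * (x i / b i) ^ 2 := by
    intro x
    rw [EuclideanSpace.real_norm_sq_eq]
    symm
    rw [← Finset.sum_subset (Finset.subset_univ I)]
    · refine Finset.sum_congr rfl fun i hi => ?_
      rw [hTi, if_pos hi, mul_pow, div_pow (√(w i)), Real.sq_sqrt (hw0 i hi), div_pow]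
      ring
    · intro i _ hi
      rw [hTi, if_neg hi]; ring
  set η : ℝ := 1 / 16 / slabRatio with hη
  have hη0 : 0 < η := by positivity
  have hT : ∫⁻ x, ENNReal.ofReal (‖T x‖ ^ 2) ∂μ ≤ ENNReal.ofReal (η ^ 2 / 4) := by
    have hint : ∀ i ∈ I, Integrable (fun x : Fin n → ℝ => w i * (x i / b i) ^ 2) μ := by
      intro i _
      simp only [div_pow]
      exact ((integrable_sq h i).div_const _).const_mul _
    simp only [hTn]
    rw [← ofReal_integral_eq_lintegral_ofReal (integrable_finsetSum _ hint)
      (Filter.Eventually.of_forall fun x => Finset.sum_nonneg fun i hi =>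
        mul_nonneg (hw0 i hi) (sq_nonneg _)), integral_finsetSum _ hint]
    apply ENNReal.ofReal_le_ofReal
    calc ∑ i ∈ I, ∫ x, w i * (x i / b i) ^ 2 ∂μ ≤ ∑ i ∈ I, w i * (η ^ 2 / 4) := by
          refine Finset.sum_le_sum fun i hi => ?_
          rw [integral_const_mul]
          refine mul_le_mul_of_nonneg_left ?_ (hw0 i hi)
          simp only [div_pow]
          rw [integral_div]
          have hbi := hb i hi
          have hM : 0 ≤ ∫ x, x i ^ 2 ∂μ := integral_nonneg fun x => sq_nonneg _
          rw [div_le_iff₀ (by positivity)]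
          have h1 : (32 * slabRatio * √(∫ x, x i ^ 2 ∂μ)) ^ 2 ≤ b i ^ 2 := by
            have := hd i hi
            gcongr
          rw [mul_pow, Real.sq_sqrt hM] at h1
          calc ∫ x, x i ^ 2 ∂μ = η ^ 2 / 4 * ((32 * slabRatio) ^ 2 * ∫ x, x i ^ 2 ∂μ) := by
                rw [hη]; field_simp; ring
            _ ≤ _ := by gcongr
      _ = η ^ 2 / 4 := by rw [← Finset.sum_mul, hw1, one_mul]
  -- the points at which a proportion `1/8` of the coordinates is large
  set F : Set (Fin n → ℝ) :=
    {x | 1 / 8 ≤ ∑ i ∈ I, w i * ({x : Fin n → ℝ | b i ≤ |x i|}).indicator 1 x} with hF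
  have hFm : MeasurableSet F := by
    refine measurableSet_le measurable_const (Finset.measurable_sum _ fun i _ => ?_)
    exact (measurable_one.indicator (measurableSet_abs_ge i _)).const_mul _
  have hFK : Real.exp (-m) / 8 ≤ μ.real (F ∩ K) := by
    have := average_level (ν := μ.restrict K) hw0 hw1 (B := fun i => {x : Fin n → ℝ | b i ≤ |x i|})
      (fun i => measurableSet_abs_ge i _) ?_
    · rw [measureReal_restrict_apply MeasurableSet.univ, Set.univ_inter,
        measureReal_restrict_apply hFm, hKp] at this
      have : Real.exp (-m) ≤ Real.exp (-p) := Real.exp_le_exp.2 (by linarith)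
      linarith
    · intro i hi
      rw [measureReal_restrict_apply MeasurableSet.univ, Set.univ_inter,
        measureReal_restrict_apply (measurableSet_abs_ge i _)]
      exact hlow i hi
  -- `F ∩ K` is only null-measurable; a measurable subset of full measure replaces it
  obtain ⟨G, hGsub, hGm, hGae⟩ :=
    (hFm.nullMeasurableSet.inter (convex_null h hK)).exists_measurable_subset_ae_eq
  have hGr : Real.exp (-m) / 8 ≤ μ.real G := by
    rw [measureReal_congr hGae]; exact hFK
  obtain ⟨y, hyG, hyA⟩ := localize h T hm1 (ε := 1 / 16) (by norm_num) hη hGm hGr hT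
  have hyF : 1 / 8 ≤ ∑ i ∈ I, w i * (if b i ≤ |y i| then 1 else 0) := by
    have : y ∈ F := (hGsub hyG).1
    simpa only [hF, Set.mem_ofPred_eq, Set.indicator_apply, Pi.one_apply] using this
  have hsig := sigma_lower hX h hr (p := p) (by linarith) (testVec I w b y (S ^ (1 / r)))
    (testVec_feasible hr hI hb y) (c := S ^ (1 / r) / 16) (by positivity)
    (A := G ∩ {x | ‖T x - T y‖ < 1 / 16}) ?_
  · have h1 : Real.exp (-96) ≤ μ.real (G ∩ {x | ‖T x - T y‖ < 1 / 16}) ^ (1 / p) := by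
      calc Real.exp (-96) ≤ Real.exp (-(48 * m)) ^ (1 / p) := by
            rw [← Real.exp_mul]
            apply Real.exp_le_exp.2
            rw [mul_one_div, neg_div, neg_le_neg_iff, div_le_iff₀ (by linarith)]
            linarith
        _ ≤ _ := by gcongr
    have h2 : Real.exp (-96) * (S ^ (1 / r) / 16) ≤ sigmaR r X p :=
      (mul_le_mul_of_nonneg_right h1 (by positivity)).trans hsig
    calc S ^ (1 / r) = 16 * Real.exp 96 * (Real.exp (-96) * (S ^ (1 / r) / 16)) := by
          rw [Real.exp_neg]; field_simp
      _ ≤ _ := by gcongr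
  · rintro x ⟨_, hx⟩
    refine (testVec_lower (by positivity) hw0 hw1 hb hyF ?_).trans (le_abs_self _)
    rw [Set.mem_ofPred_eq, ← map_sub] at hx
    have := hTn (x - y)
    simp only [Pi.sub_apply] at this
    rw [← this]
    gcongr

/-! ### Summation over the levels -/

theorem sum_pow_le_two_mul {q : ℝ} (hq : 2 ≤ q) (k : ℕ) : ∑ j ∈ Finset.range (k + 1), q ^ j ≤ 2 * q ^ k := by
  induction k with
  | zero => simp
  | succ k ih =>
    rw [Finset.sum_range_succ]
    have : 2 * q ^ k ≤ q ^ (k + 1) := by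
      rw [pow_succ, mul_comm]; gcongr
    linarith

/-- A truncated sum of a geometric progression of ratio at least `2` over levels satisfying `P` is
dominated by the term of the last such level. -/
theorem exists_top_level (P : ℕ → Prop) [DecidablePred P] {q : ℝ} (hq : 2 ≤ q) (N : ℕ) (hP : ∃ k < N, P k) :
    ∃ k, P k ∧ ∑ j ∈ Finset.range N, (if P j then q ^ j else 0) ≤ 2 * q ^ k := by
  set A := (Finset.range N).filter P with hA
  have hne : A.Nonempty := by
    obtain ⟨k, hk, hPk⟩ := hP
    exact ⟨k, Finset.mem_filter.2 ⟨Finset.mem_range.2 hk, hPk⟩⟩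
  refine ⟨A.max' hne, (Finset.mem_filter.1 (A.max'_mem hne)).2, ?_⟩
  rw [← Finset.sum_filter]
  refine le_trans ?_ (sum_pow_le_two_mul hq _)
  refine Finset.sum_le_sum_of_subset_of_nonneg (fun j hj => ?_) fun _ _ _ => by positivity
  rw [Finset.mem_range]
  exact Nat.lt_succ_of_le (A.le_max' j hj)

theorem sigmaR_nonneg {n : ℕ} {Ω : Type} [MeasureSpace Ω] (X : Ω → Fin n → ℝ) (r p : ℝ) :
    0 ≤ sigmaR r X p :=
  Real.iSup_nonneg fun _ => Real.rpow_nonneg (integral_nonneg fun _ => by positivity) _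

/-- The sum of the constant of `core_claim`, in front of the weak moment, and of the largest ratio
`b i / d i` to which that claim does not apply. -/
noncomputable def totalConst : ℝ := 16 * Real.exp 96 + 32 * slabRatio

/-- The bound for finitely many levels. Each coordinate is represented by its last level, which
`borell_quarter` turns into `b i`; the coordinates with `b i ≥ 32 slabRatio d i` are handled by
`core_claim`, and the others can only exist when `t ≤ 64 slabRatio u`. -/
theorem partial_sum_bound {n : ℕ} {Ω : Type} [MeasureSpace Ω] [IsProbabilityMeasure (ℙ : Measure Ω)]
    {X : Ω → Fin n → ℝ} (hX : Measurable X) (h : IsLogConcave (Measure.map X ℙ)) {r : ℝ}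
    (hr : 1 ≤ r) {K : Set (Fin n → ℝ)} (hK : Convex ℝ K) (hK0 : 0 < (Measure.map X ℙ).real K)
    (hK1 : (Measure.map X ℙ).real K ≤ (Real.exp 1)⁻¹) {t u : ℝ} (ht : 0 < t) (hu : 1 ≤ u)
    (d : Fin n → ℝ) (hd : ∀ i, d i = √(∫ x, x i ^ 2 ∂(Measure.map X ℙ)))
    (P : ℕ → Fin n → Prop) [∀ k i, Decidable (P k i)]
    (hP : ∀ k i, P k i → Real.exp (-u) * (Measure.map X ℙ).real K ≤
      (Measure.map X ℙ).real ({x | 2 ^ k * t * d i ≤ x i} ∩ K)) (N : ℕ) :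
    ∑ k ∈ Finset.range N, (2 : ℝ) ^ ((k : ℝ) * r) * ∑ i, (if P k i then d i ^ r else 0) ≤
      (4 * totalConst * u / t) ^ r *
        (sigmaR r X (-Real.log ((Measure.map X ℙ).real K)) ^ r +
          (∑ i, d i ^ r) * (if t ≤ u * (64 * slabRatio) then 1 else 0)) := by
  have hprob : IsProbabilityMeasure (Measure.map X (ℙ : Measure Ω)) :=
    Measure.isProbabilityMeasure_map hX.aemeasurable
  set μ := Measure.map X (ℙ : Measure Ω) with hμ
  set σ := sigmaR r X (-Real.log (μ.real K)) with hσ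
  have hσ0 : 0 ≤ σ := sigmaR_nonneg _ _ _
  have hr0 : 0 < r := by linarith
  have hu0 : 0 < u := by linarith
  have hL0 : 0 < slabRatio := by unfold slabRatio; norm_num
  have hd0 : ∀ i, 0 ≤ d i := fun i => by rw [hd]; positivity
  have hq : (2 : ℝ) ≤ 2 ^ r := by
    simpa using Real.rpow_le_rpow_of_exponent_le (by norm_num : (1 : ℝ) ≤ 2) hr
  have hqk : ∀ k : ℕ, (2 : ℝ) ^ ((k : ℝ) * r) = (2 ^ r) ^ k := fun k => by
    rw [mul_comm, Real.rpow_mul (by norm_num), Real.rpow_natCast]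
  have hqk' : ∀ k : ℕ, ((2 : ℝ) ^ r) ^ k = (2 ^ k) ^ r := fun k => by
    rw [← hqk, Real.rpow_mul (by norm_num), Real.rpow_natCast]
  -- the coordinates which contribute, with their last level `κ`
  set J : Finset (Fin n) := Finset.univ.filter fun i => 0 < d i ∧ ∃ k < N, P k i with hJ
  have hex : ∀ i, ∃ k, i ∈ J → P k i ∧
      ∑ j ∈ Finset.range N, (if P j i then ((2 : ℝ) ^ r) ^ j else 0) ≤ 2 * (2 ^ r) ^ k := by
    intro i
    by_cases hi : i ∈ J
    · obtain ⟨k, hk⟩ := exists_top_level (fun k => P k i) hq N (Finset.mem_filter.1 hi).2.2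
      exact ⟨k, fun _ => hk⟩
    · exact ⟨0, fun h => absurd h hi⟩
  choose κ hκ using hex
  set b : Fin n → ℝ := fun i => 2 ^ κ i * t * d i / (2 * u) with hb
  have hJd : ∀ i ∈ J, 0 < d i := fun i hi => (Finset.mem_filter.1 hi).2.1
  have hb0 : ∀ i ∈ J, 0 < b i := fun i hi => by
    have := hJd i hi
    simp only [hb]; positivity
  have hlow : ∀ i ∈ J, 1 / 4 * μ.real K ≤ μ.real ({x | b i ≤ |x i|} ∩ K) := fun i hi => by
    have hdi := hJd i hi
    exact borell_quarter h hK hK0 i (s := 2 ^ κ i * t * d i) (by positivity) hu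
      (hP _ _ (hκ i hi).1)
  have hsum : ∑ k ∈ Finset.range N, (2 : ℝ) ^ ((k : ℝ) * r) * ∑ i, (if P k i then d i ^ r else 0) ≤
      2 * (2 * u / t) ^ r * ∑ i ∈ J, b i ^ r := by
    calc _ = ∑ i, d i ^ r * ∑ k ∈ Finset.range N, (if P k i then ((2 : ℝ) ^ r) ^ k else 0) := by
          simp only [hqk, Finset.mul_sum]
          rw [Finset.sum_comm]
          refine Finset.sum_congr rfl fun i _ => Finset.sum_congr rfl fun k _ => ?_
          split_ifs <;> ring
      _ = ∑ i ∈ J, d i ^ r * ∑ k ∈ Finset.range N, (if P k i then ((2 : ℝ) ^ r) ^ k else 0) := by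
          symm
          refine Finset.sum_subset (Finset.subset_univ J) fun i _ hi => ?_
          rcases (hd0 i).eq_or_lt with h0 | h0
          · rw [← h0, Real.zero_rpow hr0.ne', zero_mul]
          · have hn : ∀ k ∈ Finset.range N, (if P k i then ((2 : ℝ) ^ r) ^ k else 0) = 0 := by
              intro k hk
              refine if_neg fun hPk => hi ?_
              exact Finset.mem_filter.2 ⟨Finset.mem_univ i, h0, k, Finset.mem_range.1 hk, hPk⟩
            rw [Finset.sum_eq_zero hn, mul_zero]
      _ ≤ ∑ i ∈ J, 2 * (2 * u / t) ^ r * b i ^ r := by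
          refine Finset.sum_le_sum fun i hi => ?_
          calc _ ≤ d i ^ r * (2 * (2 ^ r) ^ κ i) := by
                have := hd0 i
                gcongr
                exact (hκ i hi).2
            _ = 2 * (2 ^ κ i * d i) ^ r := by
                rw [hqk', Real.mul_rpow (by positivity) (hd0 i)]; ring
            _ = 2 * ((2 * u / t) * b i) ^ r := by
                congr 2; simp only [hb]; field_simp
            _ = _ := by
                rw [Real.mul_rpow (by positivity) (hb0 i hi).le, mul_assoc]
      _ = _ := by rw [Finset.mul_sum]
  set D := ∑ i, d i ^ r with hD
  have hD0 : 0 ≤ D := Finset.sum_nonneg fun i _ => Real.rpow_nonneg (hd0 i) r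
  set χ : ℝ := if t ≤ u * (64 * slabRatio) then 1 else 0 with hχ
  have hχ0 : 0 ≤ χ := by rw [hχ]; split_ifs <;> norm_num
  set J1 := J.filter fun i => 32 * slabRatio * d i ≤ b i with hJ1
  set J2 := J.filter fun i => ¬ 32 * slabRatio * d i ≤ b i with hJ2
  have hs1 : ∑ i ∈ J1, b i ^ r ≤ (16 * Real.exp 96 * σ) ^ r := by
    rcases J1.eq_empty_or_nonempty with he | hne
    · rw [he, Finset.sum_empty]; positivity
    · have hsub : ∀ i ∈ J1, i ∈ J := fun i hi => (Finset.mem_filter.1 hi).1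
      have := core_claim hX h hr hK hK0 hK1 hne (fun i hi => hb0 i (hsub i hi))
        (fun i hi => hlow i (hsub i hi)) fun i hi => by
          rw [← hd]; exact (Finset.mem_filter.1 hi).2
      have hnn : 0 ≤ ∑ i ∈ J1, b i ^ r :=
        Finset.sum_nonneg fun i hi => Real.rpow_nonneg (hb0 i (hsub i hi)).le r
      calc ∑ i ∈ J1, b i ^ r = ((∑ i ∈ J1, b i ^ r) ^ (1 / r)) ^ r := by
            rw [← Real.rpow_mul hnn, one_div_mul_cancel hr0.ne', Real.rpow_one]
        _ ≤ _ := by gcongr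
  have hs2 : ∑ i ∈ J2, b i ^ r ≤ (32 * slabRatio) ^ r * (D * χ) := by
    have hmem : ∀ i ∈ J2, i ∈ J ∧ b i < 32 * slabRatio * d i := fun i hi =>
      ⟨(Finset.mem_filter.1 hi).1, not_le.1 (Finset.mem_filter.1 hi).2⟩
    by_cases hc : t ≤ u * (64 * slabRatio)
    · rw [hχ, if_pos hc, mul_one, hD, Finset.mul_sum]
      calc ∑ i ∈ J2, b i ^ r ≤ ∑ i ∈ J2, (32 * slabRatio) ^ r * d i ^ r := by
            refine Finset.sum_le_sum fun i hi => ?_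
            rw [← Real.mul_rpow (by positivity) (hd0 i)]
            exact Real.rpow_le_rpow (hb0 i (hmem i hi).1).le (hmem i hi).2.le hr0.le
        _ ≤ _ := Finset.sum_le_sum_of_subset_of_nonneg (Finset.subset_univ _) fun i _ _ => by
            have := hd0 i
            positivity
    · have he : J2 = ∅ := by
        rw [Finset.eq_empty_iff_forall_notMem]
        intro i hi
        obtain ⟨hiJ, hlt⟩ := hmem i hi
        have hdi := hJd i hiJ
        apply hc
        have h1 : (1 : ℝ) ≤ 2 ^ κ i := one_le_pow₀ (by norm_num)
        have h2 : t * d i / (2 * u) ≤ b i := by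
          simp only [hb]
          gcongr
          exact le_mul_of_one_le_left ht.le h1
        have h3 := h2.trans_lt hlt
        rw [div_lt_iff₀ (by positivity)] at h3
        have h4 : t * d i < u * (64 * slabRatio) * d i := by linarith
        exact (lt_of_mul_lt_mul_right h4 hdi.le).le
      rw [he, Finset.sum_empty]
      positivity
  have hC0 : 0 < totalConst := by unfold totalConst; positivity
  have hs1' : ∑ i ∈ J1, b i ^ r ≤ totalConst ^ r * σ ^ r := by
    refine hs1.trans ?_
    rw [Real.mul_rpow (by positivity) hσ0]
    gcongr
    unfold totalConst
    linarith
  have hs2' : ∑ i ∈ J2, b i ^ r ≤ totalConst ^ r * (D * χ) := by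
    refine hs2.trans ?_
    gcongr
    unfold totalConst
    linarith [Real.exp_pos 96]
  have hsplit : ∑ i ∈ J, b i ^ r = ∑ i ∈ J1, b i ^ r + ∑ i ∈ J2, b i ^ r :=
    (Finset.sum_filter_add_sum_filter_not _ _ _).symm
  calc _ ≤ 2 * (2 * u / t) ^ r * ∑ i ∈ J, b i ^ r := hsum
    _ ≤ 2 * (2 * u / t) ^ r * (totalConst ^ r * (σ ^ r + D * χ)) := by
        rw [hsplit]
        gcongr
        linarith
    _ ≤ 2 ^ r * (2 * u / t) ^ r * (totalConst ^ r * (σ ^ r + D * χ)) := by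
        gcongr
    _ = (4 * totalConst * u / t) ^ r * (σ ^ r + D * χ) := by
        rw [← mul_assoc, ← Real.mul_rpow (by norm_num) (by positivity),
          ← Real.mul_rpow (by positivity) hC0.le]
        congr 2; ring

/-- **Proposition 2.1 (ii).** There are universal constants `C₈, C₉` such that for a log-concave
random vector `X` in `ℝⁿ`, `r ∈ [1,∞)`, a convex set `K` with `A = {X ∈ K}`,
`0 < P(A) ≤ 1/e`, and all `t > 0`, `u ≥ 1`:
`∑ₖ 2^{kr} ∑ᵢ dᵢ^r 1_{P(A ∩ {Xᵢ ≥ 2^k t dᵢ}) ≥ e^{-u} P(A)}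
  ≤ (C₈ u / t)^r (σ_{r,X}(-log P(A))^r + d^r 1_{t ≤ u C₉})`. -/
theorem conditional_level_set_bound :
    ∃ C₈ C₉ : ℝ, 0 < C₈ ∧ 0 < C₉ ∧
      ∀ (n : ℕ) (Ω : Type) [MeasureSpace Ω], IsProbabilityMeasure (ℙ : Measure Ω) →
      ∀ X : Ω → Fin n → ℝ, Measurable X → IsLogConcave (Measure.map X ℙ) →
      ∀ r : ℝ, 1 ≤ r →
      ∀ K : Set (Fin n → ℝ), Convex ℝ K →
      0 < ℙ (X ⁻¹' K) → (ℙ (X ⁻¹' K)).toReal ≤ (Real.exp 1)⁻¹ →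
      ∀ t u : ℝ, 0 < t → 1 ≤ u →
        (∑' k : ℕ, ENNReal.ofReal ((2 : ℝ) ^ ((k : ℝ) * r) *
            ∑ i, if ENNReal.ofReal (Real.exp (-u)) * ℙ (X ⁻¹' K) ≤
                ℙ (X ⁻¹' K ∩
                  {ω | (2 : ℝ) ^ (k : ℕ) * t * Real.sqrt (∫ ω', (X ω' i) ^ 2) ≤ X ω i})
              then Real.sqrt (∫ ω', (X ω' i) ^ 2) ^ r else 0)) ≤
          ENNReal.ofReal ((C₈ * u / t) ^ r *
            (sigmaR r X (-Real.log (ℙ (X ⁻¹' K)).toReal) ^ r +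
              ((∑ i, Real.sqrt (∫ ω, (X ω i) ^ 2) ^ r) ^ (1 / r)) ^ r *
                (if t ≤ u * C₉ then (1 : ℝ) else 0))) := by
  have hL0 : 0 < slabRatio := by unfold slabRatio; norm_num
  have hC0 : 0 < totalConst := by unfold totalConst; positivity
  refine ⟨4 * totalConst, 64 * slabRatio, by positivity, by positivity, ?_⟩
  intro n Ω _ hΩ X hX h r hr K hK hK0 hK1 t u ht hu
  have hprob : IsProbabilityMeasure (Measure.map X (ℙ : Measure Ω)) :=
    Measure.isProbabilityMeasure_map hX.aemeasurable
  have hKn : NullMeasurableSet K (Measure.map X (ℙ : Measure Ω)) := convex_null h hK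
  have hPK : Measure.map X (ℙ : Measure Ω) K = ℙ (X ⁻¹' K) :=
    Measure.map_apply₀ hX.aemeasurable hKn
  have hPKr : (Measure.map X (ℙ : Measure Ω)).real K = (ℙ (X ⁻¹' K)).toReal := by
    rw [Measure.real, hPK]
  have hr0 : 0 < r := by linarith
  have hint : ∀ i, ∫ ω, X ω i ^ 2 = ∫ x, x i ^ 2 ∂(Measure.map X (ℙ : Measure Ω)) := fun i =>
    (integral_map hX.aemeasurable
      (f := fun x : Fin n → ℝ => x i ^ 2)
      (by fun_prop : Measurable fun x : Fin n → ℝ => x i ^ 2).aestronglyMeasurable).symm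
  have hD0 : 0 ≤ ∑ i, √(∫ ω, X ω i ^ 2) ^ r := Finset.sum_nonneg fun i _ => by positivity
  rw [← Real.rpow_mul hD0, one_div_mul_cancel hr0.ne', Real.rpow_one, ← hPKr]
  refine ENNReal.tsum_le_of_sum_range_le fun N => ?_
  rw [← ENNReal.ofReal_sum_of_nonneg fun k _ => mul_nonneg (by positivity)
    (Finset.sum_nonneg fun i _ => by split_ifs <;> positivity)]
  apply ENNReal.ofReal_le_ofReal
  refine partial_sum_bound hX h hr hK ?_ (hPKr ▸ hK1) ht hu (fun i => √(∫ ω, X ω i ^ 2))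
    (fun i => by simp only [hint]) (fun k i => ENNReal.ofReal (Real.exp (-u)) * ℙ (X ⁻¹' K) ≤
      ℙ (X ⁻¹' K ∩ {ω | (2 : ℝ) ^ (k : ℕ) * t * Real.sqrt (∫ ω', (X ω' i) ^ 2) ≤ X ω i})) ?_ N
  · rw [hPKr]
    exact ENNReal.toReal_pos hK0.ne' (measure_ne_top _ _)
  · intro k i hki
    set s := (2 : ℝ) ^ k * t * √(∫ ω', X ω' i ^ 2) with hs
    have hsm : MeasurableSet {x : Fin n → ℝ | s ≤ x i} :=
      measurableSet_le measurable_const (by fun_prop)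
    have e : Measure.map X (ℙ : Measure Ω) ({x | s ≤ x i} ∩ K) = ℙ (X ⁻¹' K ∩ {ω | s ≤ X ω i}) := by
      rw [Measure.map_apply₀ hX.aemeasurable (hsm.nullMeasurableSet.inter hKn), Set.preimage_inter,
        Set.inter_comm]
      rfl
    rw [← e, ← hPK] at hki
    have := ENNReal.toReal_mono (measure_ne_top _ _) hki
    rwa [ENNReal.toReal_mul, ENNReal.toReal_ofReal (Real.exp_pos _).le] at this
end

section
/- There exists a universal constant C such that for every log-concave random vector X in ℝⁿ and every r ∈ [1, ∞), one has (Σ_{i=1}^n (E X_i²)^{r/2})^{1/r} ≤ C·E‖X‖_r, where ‖x‖_r = (Σ_{i=1}^n |x_i|^r)^{1/r}. -/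
/-!
Both sides are compared with `‖(E|X i|)ᵢ‖_r`.

* Each coordinate `Y = X i` satisfies `E Y² ≤ (100 E|Y|)²`. Log-concavity with `λ = 1/2`, applied to
  `{|Y| ≥ 3s}` and `{|Y| ≤ s}`, whose midpoints lie in `{|Y| ≥ s}`, gives
  `P(|Y| ≥ 3s) P(|Y| ≤ s) ≤ P(|Y| ≥ s)²`. Hence, once `P(|Y| ≥ t) ≤ 1/20`, the tails at
  `3 ^ k * t` decrease at least like `19 ^ (-k)`. As `19 > 3²`, this yields `E Y² ≤ 25 t²`. Some
  such `t` always exists, so `Y` is square integrable, and by Markov's inequality `t = 20 E|Y|` is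
  then admissible (if `E|Y| = 0` then `Y = 0` almost surely).
* `‖(E|X i|)ᵢ‖_r ≤ E‖X‖_r` is the inequality `‖∫ F‖ ≤ ∫ ‖F‖` for `F = (|X i|)ᵢ` valued in `ℓ_r`.
-/

open MeasureTheory
open scoped Pointwise ENNReal ProbabilityTheory Classical

open Filter Topology

/-- Measures of closed sets are limits of measures of their bounded, hence compact, parts, so the
midpoint form of log-concavity passes from compact to closed sets. -/
lemma IsLogConcave.midpoint_closed {n : ℕ} {μ : Measure (Fin n → ℝ)} [IsFiniteMeasure μ]
    (h : IsLogConcave μ) {A B D : Set (Fin n → ℝ)} (hA : IsClosed A) (hB : IsClosed B)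
    (hD : ∀ a ∈ A, ∀ b ∈ B, (1 / 2 : ℝ) • a + (1 / 2 : ℝ) • b ∈ D) :
    μ A * μ B ≤ μ D ^ 2 := by
  have compact_case : ∀ K L : Set (Fin n → ℝ), IsCompact K → IsCompact L → K ⊆ A → L ⊆ B →
      μ K * μ L ≤ μ D ^ 2 := by
    intro K L hK hL hKA hLB
    rcases K.eq_empty_or_nonempty with rfl | hKn
    · simp
    rcases L.eq_empty_or_nonempty with rfl | hLn
    · simp
    have h1 := h K L hKn hLn hK hL (1 / 2) (by norm_num) (by norm_num)
    have h2 : μ K ^ (1 / 2 : ℝ) * μ L ^ (1 / 2 : ℝ) ≤ μ D := by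
      have h12 : (1 : ℝ) - 1 / 2 = 1 / 2 := by norm_num
      rw [h12] at h1
      refine h1.trans (measure_mono ?_)
      rintro _ ⟨_, ⟨a, ha, rfl⟩, _, ⟨b, hb, rfl⟩, rfl⟩
      exact hD a (hKA ha) b (hLB hb)
    rw [← ENNReal.mul_rpow_of_nonneg _ _ (by norm_num)] at h2
    have h3 := ENNReal.rpow_le_rpow h2 (z := 2) (by norm_num)
    rw [← ENNReal.rpow_mul] at h3
    simpa using h3
  have tend : ∀ S : Set (Fin n → ℝ),
      Tendsto (fun m : ℕ => μ (S ∩ Metric.closedBall 0 m)) atTop (𝓝 (μ S)) := by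
    intro S
    have hmono : Monotone (fun m : ℕ => S ∩ Metric.closedBall (0 : Fin n → ℝ) m) := by
      intro a b hab
      exact Set.inter_subset_inter_right _ (Metric.closedBall_subset_closedBall (by exact_mod_cast hab))
    have := tendsto_measure_iUnion_atTop (μ := μ) hmono
    rwa [← Set.inter_iUnion, Metric.iUnion_closedBall_nat, Set.inter_univ] at this
  have ht := ENNReal.Tendsto.mul (tend A) (Or.inr (measure_ne_top μ B)) (tend B)
    (Or.inr (measure_ne_top μ A))
  refine le_of_tendsto' ht fun m => ?_
  exact compact_case _ _ ((isCompact_closedBall 0 (m : ℝ)).inter_left hA)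
    ((isCompact_closedBall 0 (m : ℝ)).inter_left hB) Set.inter_subset_left Set.inter_subset_left

lemma tail_ineq {n : ℕ} {Ω : Type*} [MeasurableSpace Ω] {P : Measure Ω} [IsProbabilityMeasure P]
    {X : Ω → Fin n → ℝ} (hX : Measurable X) (h : IsLogConcave (P.map X)) (i : Fin n) (s : ℝ) :
    P.real {ω | 3 * s ≤ |X ω i|} * P.real {ω | |X ω i| ≤ s} ≤ P.real {ω | s ≤ |X ω i|} ^ 2 := by
  have : IsFiniteMeasure (P.map X) := inferInstance
  have hc : Continuous fun x : Fin n → ℝ => |x i| := by fun_prop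
  have hA : IsClosed {x : Fin n → ℝ | 3 * s ≤ |x i|} := isClosed_le continuous_const hc
  have hB : IsClosed {x : Fin n → ℝ | |x i| ≤ s} := isClosed_le hc continuous_const
  have hD : IsClosed {x : Fin n → ℝ | s ≤ |x i|} := isClosed_le continuous_const hc
  have key := h.midpoint_closed hA hB (D := {x : Fin n → ℝ | s ≤ |x i|}) (by
    intro a ha b hb
    simp only [Set.mem_ofPred_eq, Pi.add_apply, Pi.smul_apply, smul_eq_mul] at *
    have h1 : |1 / 2 * a i| ≤ |1 / 2 * a i + 1 / 2 * b i| + |1 / 2 * b i| := by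
      simpa using abs_sub (1 / 2 * a i + 1 / 2 * b i) (1 / 2 * b i)
    rw [abs_mul, abs_mul _ (b i), abs_of_pos (by norm_num : (0 : ℝ) < 1 / 2)] at h1
    linarith)
  rw [Measure.map_apply hX hA.measurableSet, Measure.map_apply hX hB.measurableSet,
    Measure.map_apply hX hD.measurableSet] at key
  have := ENNReal.toReal_mono (by finiteness) key
  simpa [ENNReal.toReal_mul, ENNReal.toReal_pow, Measure.real] using this

/-- Borell-type bound: if the tail at `t` is at most `1/20` then the tails at `3 ^ k * t` decrease
at least like `19 ^ (-k)`, which controls the second moment. -/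
lemma lintegral_sq_le {Ω : Type*} [MeasurableSpace Ω] {P : Measure Ω} [IsProbabilityMeasure P]
    {Y : Ω → ℝ} (hY : Measurable Y)
    (h : ∀ s : ℝ, P.real {ω | 3 * s ≤ |Y ω|} * P.real {ω | |Y ω| ≤ s} ≤
      P.real {ω | s ≤ |Y ω|} ^ 2)
    {t : ℝ} (ht : 0 < t) (hq : P.real {ω | t ≤ |Y ω|} ≤ 1 / 20) :
    ∫⁻ ω, ENNReal.ofReal (Y ω ^ 2) ∂P ≤ ENNReal.ofReal (25 * t ^ 2) := by
  have hms : ∀ s : ℝ, MeasurableSet {ω | s ≤ |Y ω|} := fun s =>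
    measurableSet_le measurable_const (by fun_prop)
  have step : ∀ s : ℝ, t ≤ s →
      P.real {ω | 3 * s ≤ |Y ω|} ≤ (1 / 19) * P.real {ω | s ≤ |Y ω|} := by
    intro s hs
    have h1 : P.real {ω | s ≤ |Y ω|} ≤ 1 / 20 :=
      (measureReal_mono (fun ω (hω : s ≤ |Y ω|) => hs.trans hω)).trans hq
    have h2 : 19 / 20 ≤ P.real {ω | |Y ω| ≤ s} := by
      have h3 : P.real {ω | s ≤ |Y ω|}ᶜ ≤ P.real {ω | |Y ω| ≤ s} :=
        measureReal_mono (fun ω (hω : ¬ s ≤ |Y ω|) => (not_le.1 hω).le)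
      rw [probReal_compl_eq_one_sub (hms s)] at h3
      linarith
    have h0 : 0 ≤ P.real {ω | s ≤ |Y ω|} := measureReal_nonneg
    have h0' : 0 ≤ P.real {ω | 3 * s ≤ |Y ω|} := measureReal_nonneg
    have := h s
    nlinarith [mul_le_mul_of_nonneg_left h2 h0', mul_le_mul_of_nonneg_left h1 h0]
  have tail : ∀ k : ℕ, P.real {ω | 3 ^ k * t ≤ |Y ω|} ≤ (1 / 19) ^ k := by
    intro k
    induction k with
    | zero => simp
    | succ k ih =>
      have h1 := step (3 ^ k * t) (le_mul_of_one_le_left ht.le (one_le_pow₀ (by norm_num)))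
      rw [← mul_assoc, ← pow_succ'] at h1
      rw [pow_succ' (1 / 19 : ℝ)]
      linarith
  -- On `3 ^ k * t ≤ |Y| < 3 ^ (k + 1) * t` the `k`-th term alone dominates `Y²`.
  have pw : ∀ ω, ENNReal.ofReal (Y ω ^ 2) ≤ ENNReal.ofReal (t ^ 2) +
      ∑' k : ℕ, ({ω | 3 ^ k * t ≤ |Y ω|}).indicator
        (fun _ => ENNReal.ofReal (t ^ 2 * 9 ^ (k + 1))) ω := by
    intro ω
    rcases le_or_gt t |Y ω| with hω | hω
    · obtain ⟨k, hk1, hk2⟩ := exists_nat_pow_near (x := |Y ω| / t) (y := 3)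
        ((one_le_div ht).2 hω) (by norm_num)
      rw [le_div_iff₀ ht] at hk1
      rw [div_lt_iff₀ ht] at hk2
      refine le_trans ?_ (le_trans (ENNReal.le_tsum k) le_add_self)
      rw [Set.indicator_of_mem (by exact hk1)]
      apply ENNReal.ofReal_le_ofReal
      rw [← sq_abs]
      calc |Y ω| ^ 2 ≤ (3 ^ (k + 1) * t) ^ 2 := by gcongr
        _ = t ^ 2 * 9 ^ (k + 1) := by
          rw [mul_pow, ← pow_mul, mul_comm (k + 1), pow_mul]; norm_num; ring
    · refine le_trans (ENNReal.ofReal_le_ofReal ?_) le_self_add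
      rw [← sq_abs]
      gcongr
  have hsum : Summable (fun k : ℕ => 9 * t ^ 2 * (9 / 19 : ℝ) ^ k) :=
    (summable_geometric_of_lt_one (by norm_num) (by norm_num)).mul_left _
  calc ∫⁻ ω, ENNReal.ofReal (Y ω ^ 2) ∂P
      ≤ ∫⁻ ω, (ENNReal.ofReal (t ^ 2) + ∑' k : ℕ, ({ω | 3 ^ k * t ≤ |Y ω|}).indicator
        (fun _ => ENNReal.ofReal (t ^ 2 * 9 ^ (k + 1))) ω) ∂P := lintegral_mono pw
    _ = ENNReal.ofReal (t ^ 2) +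
        ∑' k : ℕ, ENNReal.ofReal (t ^ 2 * 9 ^ (k + 1)) * P {ω | 3 ^ k * t ≤ |Y ω|} := by
      rw [lintegral_add_left measurable_const, lintegral_tsum
        (fun k => (measurable_const.indicator (hms _)).aemeasurable)]
      simp only [lintegral_const, measure_univ, mul_one, lintegral_indicator_const (hms _)]
    _ ≤ ENNReal.ofReal (t ^ 2) + ∑' k : ℕ, ENNReal.ofReal (9 * t ^ 2 * (9 / 19 : ℝ) ^ k) := by
      gcongr with k
      rw [← ofReal_measureReal, ← ENNReal.ofReal_mul (by positivity)]
      apply ENNReal.ofReal_le_ofReal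
      calc t ^ 2 * 9 ^ (k + 1) * P.real {ω | 3 ^ k * t ≤ |Y ω|}
          ≤ t ^ 2 * 9 ^ (k + 1) * (1 / 19) ^ k := by gcongr; exact tail k
        _ = 9 * t ^ 2 * (9 / 19 : ℝ) ^ k := by
          rw [pow_succ, div_pow, div_pow]; ring
    _ ≤ ENNReal.ofReal (25 * t ^ 2) := by
      rw [← ENNReal.ofReal_tsum_of_nonneg (fun k => by positivity) hsum,
        ← ENNReal.ofReal_add (by positivity) (tsum_nonneg fun k => by positivity), tsum_mul_left,
        tsum_geometric_of_lt_one (by norm_num) (by norm_num)]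
      apply ENNReal.ofReal_le_ofReal
      norm_num
      nlinarith [sq_nonneg t]

lemma integrable_and_sq_le {Ω : Type*} [MeasurableSpace Ω] {P : Measure Ω}
    [IsProbabilityMeasure P] {Y : Ω → ℝ} (hY : Measurable Y)
    (h : ∀ s : ℝ, P.real {ω | 3 * s ≤ |Y ω|} * P.real {ω | |Y ω| ≤ s} ≤
      P.real {ω | s ≤ |Y ω|} ^ 2) :
    Integrable Y P ∧ ∫ ω, Y ω ^ 2 ∂P ≤ (100 * ∫ ω, |Y ω| ∂P) ^ 2 := by
  have hms : ∀ s : ℝ, MeasurableSet {ω | s ≤ |Y ω|} := fun s =>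
    measurableSet_le measurable_const (by fun_prop)
  obtain ⟨t, ht, hq⟩ : ∃ t : ℝ, 0 < t ∧ P.real {ω | t ≤ |Y ω|} ≤ 1 / 20 := by
    have hlim : Tendsto (fun m : ℕ => P {ω | (m : ℝ) ≤ |Y ω|}) atTop
        (𝓝 (P (⋂ m : ℕ, {ω | (m : ℝ) ≤ |Y ω|}))) := by
      apply tendsto_measure_iInter_atTop (fun m => (hms _).nullMeasurableSet)
      · intro a b hab ω hω
        exact le_trans (by exact_mod_cast hab) (show (b : ℝ) ≤ |Y ω| from hω)
      · exact ⟨0, measure_ne_top _ _⟩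
    have hemp : (⋂ m : ℕ, {ω | (m : ℝ) ≤ |Y ω|}) = ∅ := by
      ext ω
      obtain ⟨m, hm⟩ := exists_nat_gt |Y ω|
      simp only [Set.mem_iInter, Set.mem_ofPred_eq, Set.mem_empty_iff_false, iff_false, not_forall]
      exact ⟨m, not_le.2 hm⟩
    rw [hemp, measure_empty] at hlim
    have hlim' := (ENNReal.tendsto_toReal ENNReal.zero_ne_top).comp hlim
    have hev := hlim'.eventually (gt_mem_nhds (show ENNReal.toReal 0 < 1 / 20 by norm_num))
    obtain ⟨m, hm, hm1⟩ := (hev.and (eventually_ge_atTop 1)).exists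
    exact ⟨m, by exact_mod_cast hm1, le_of_lt hm⟩
  have hfin := lintegral_sq_le hY h ht hq
  have hsq : Integrable (fun ω => Y ω ^ 2) P := by
    refine (lintegral_ofReal_ne_top_iff_integrable (by fun_prop)
      (ae_of_all _ fun ω => sq_nonneg _)).1 ?_
    exact ne_top_of_le_ne_top ENNReal.ofReal_ne_top hfin
  have hint : Integrable Y P :=
    ((memLp_two_iff_integrable_sq hY.aestronglyMeasurable).2 hsq).integrable (by norm_num)
  refine ⟨hint, ?_⟩
  have h0 : 0 ≤ ∫ ω, |Y ω| ∂P := integral_nonneg fun ω => abs_nonneg _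
  rcases h0.eq_or_lt with he | hpos
  · have hz := (integral_eq_zero_iff_of_nonneg (fun ω => abs_nonneg (Y ω)) hint.abs).1 he.symm
    rw [← he, integral_eq_zero_of_ae]
    · norm_num
    · filter_upwards [hz] with ω hω
      have : Y ω = 0 := abs_eq_zero.1 hω
      simp [this]
  · have hM := mul_meas_ge_le_integral_of_nonneg (ae_of_all P fun ω => abs_nonneg (Y ω)) hint.abs
      (20 * ∫ ω, |Y ω| ∂P)
    have hq' : P.real {ω | 20 * ∫ ω, |Y ω| ∂P ≤ |Y ω|} ≤ 1 / 20 := by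
      refine le_of_mul_le_mul_left ?_ (show 0 < 20 * ∫ ω, |Y ω| ∂P by positivity)
      linarith
    have := lintegral_sq_le hY h (by positivity) hq'
    rw [← ofReal_integral_eq_lintegral_ofReal hsq (ae_of_all _ fun ω => sq_nonneg _),
      ENNReal.ofReal_le_ofReal_iff (by positivity)] at this
    linarith

lemma lrNorm_integral_abs_le {n : ℕ} {Ω : Type*} [MeasurableSpace Ω] {P : Measure Ω}
    {X : Ω → Fin n → ℝ} (hX : ∀ i, Integrable (fun ω => X ω i) P) {r : ℝ} (hr : 1 ≤ r) :
    lrNorm r (fun i => ∫ ω, |X ω i| ∂P) ≤ ∫ ω, lrNorm r (X ω) ∂P := by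
  have : Fact (1 ≤ ENNReal.ofReal r) := ⟨by simpa using hr⟩
  have hr' : (ENNReal.ofReal r).toReal = r := ENNReal.toReal_ofReal (by linarith)
  have hn : ∀ x : PiLp (ENNReal.ofReal r) (fun _ : Fin n => ℝ), ‖x‖ = lrNorm r (fun i => x i) := by
    intro x
    rw [PiLp.norm_eq_sum (by rw [hr']; linarith), hr']
    rfl
  let F : Ω → PiLp (ENNReal.ofReal r) (fun _ : Fin n => ℝ) :=
    fun ω => WithLp.toLp _ fun i => |X ω i|
  have h1 := norm_integral_le_integral_norm (μ := P) F
  have h2 : ∀ i, (∫ ω, F ω ∂P) i = ∫ ω, |X ω i| ∂P := fun i =>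
    eval_integral_piLp (fun i => (hX i).abs) i
  simp only [hn, h2] at h1
  simpa [F, lrNorm] using h1

/-- There is a universal constant `C` such that for every log-concave random vector `X`
in `ℝⁿ` and `r ∈ [1,∞)`: `(∑ᵢ (EXᵢ²)^{r/2})^{1/r} ≤ C E‖X‖_r`. -/
theorem variance_sum_le_mean_lr_norm :
    ∃ C : ℝ, 0 < C ∧
      ∀ (n : ℕ) (Ω : Type) [MeasureSpace Ω], IsProbabilityMeasure (ℙ : Measure Ω) →
      ∀ X : Ω → Fin n → ℝ, Measurable X → IsLogConcave (Measure.map X ℙ) →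
      ∀ r : ℝ, 1 ≤ r →
        (∑ i, (∫ ω, (X ω i) ^ 2) ^ (r / 2)) ^ (1 / r) ≤ C * ∫ ω, lrNorm r (X ω) := by
  refine ⟨100, by norm_num, ?_⟩
  intro n Ω _ _ X hX hlc r hr
  have hr0 : 0 < r := by linarith
  have hc := fun i => integrable_and_sq_le (P := (ℙ : Measure Ω)) (Y := fun ω => X ω i)
    (by fun_prop) (tail_ineq hX hlc i)
  have hnn : ∀ i, 0 ≤ ∫ ω, |X ω i| := fun i => integral_nonneg fun ω => abs_nonneg _
  have hnn2 : ∀ i, 0 ≤ ∫ ω, X ω i ^ 2 := fun i => integral_nonneg fun ω => sq_nonneg _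
  refine le_trans ?_ (mul_le_mul_of_nonneg_left
    (lrNorm_integral_abs_le (P := (ℙ : Measure Ω)) (fun i => (hc i).1) hr) (by norm_num))
  calc (∑ i, (∫ ω, (X ω i) ^ 2) ^ (r / 2)) ^ (1 / r)
      ≤ (∑ i, 100 ^ r * (∫ ω, |X ω i|) ^ r) ^ (1 / r) := by
        refine Real.rpow_le_rpow (Finset.sum_nonneg fun i _ => Real.rpow_nonneg (hnn2 i) _)
          (Finset.sum_le_sum fun i _ => ?_) (by positivity)
        refine (Real.rpow_le_rpow (hnn2 i) (hc i).2 (by positivity)).trans_eq ?_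
        rw [← Real.mul_rpow (by norm_num) (hnn i), ← Real.rpow_natCast,
          ← Real.rpow_mul (mul_nonneg (by norm_num) (hnn i))]
        congr 1
        push_cast
        ring
    _ = 100 * lrNorm r (fun i => ∫ ω, |X ω i|) := by
        rw [← Finset.mul_sum, Real.mul_rpow (by positivity)
          (Finset.sum_nonneg fun i _ => Real.rpow_nonneg (hnn i) _), ← Real.rpow_mul (by norm_num),
          mul_one_div_cancel hr0.ne', Real.rpow_one]
        simp only [lrNorm, abs_of_nonneg (hnn _)]
end

section
/- There exists a universal constant c > 0 such that the following holds. Let Y be a log-concave random vector in ℝⁿ and let w₁, …, w_n ≥ 0 be nonnegative weights. Set S := Σ_{i=1}^n w_i·Y_i². If 0 < E S < ∞, then P(S ≥ (1/2)·E S) ≥ c. -/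
/-!
The proof avoids second moments of `S` and works with its tails directly. Write
`q(x) = ∑ᵢ wᵢ xᵢ²` and `a = E S / 2`. Since `q(2z - y) ≤ 6 q(z) + 3 q(y)`, the midpoint of a
point with `q ≥ 9u` and a point with `q < u` satisfies `q ≥ u`. Log-concavity with `λ = 1/2` then
gives (a form of Borell's lemma, `tail_mul_le`)
`P(S ≥ 9u) · P(S < u) ≤ P(S ≥ u)²`.

If `P(S ≥ a) < 1/100`, this yields `P(S ≥ 9u) ≤ P(S ≥ u) / 99` for all `u ≥ a`. Split the layer-cake
integral `E S = ∫₀^∞ P(S ≥ u) du` at `a` and `9a`: the first two pieces are at most `a` and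
`8a/100`, and the last is at most `∫₀^∞ P(9S ≥ u) / 99 du = E S / 11`. As `E S = 2a`, this
gives `2a ≤ a + 8a/100 + 2a/11`, which is false for `a > 0`.
-/

open MeasureTheory
open scoped Pointwise ENNReal ProbabilityTheory Classical

/-- A midpoint of a point with `∑ wᵢ xᵢ² ≥ 9u` and a point with `∑ wᵢ yᵢ² < u` satisfies
`∑ wᵢ zᵢ² ≥ u`. -/
lemma midpoint_quad {n : ℕ} (w : Fin n → ℝ) (hw : ∀ i, 0 ≤ w i) (x y : Fin n → ℝ) (u : ℝ)
    (hx : 9 * u ≤ ∑ i, w i * x i ^ 2) (hy : ∑ i, w i * y i ^ 2 < u) :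
    u ≤ ∑ i, w i * (((1 / 2 : ℝ) • x + (1 - 1 / 2 : ℝ) • y) i) ^ 2 := by
  set z := (1 / 2 : ℝ) • x + (1 - 1 / 2 : ℝ) • y with hz
  have h : ∑ i, w i * x i ^ 2 ≤ 6 * ∑ i, w i * z i ^ 2 + 3 * ∑ i, w i * y i ^ 2 := by
    rw [Finset.mul_sum, Finset.mul_sum, ← Finset.sum_add_distrib]
    refine Finset.sum_le_sum fun i _ => ?_
    have hxi : x i = 2 * z i - y i := by
      simp only [hz, Pi.add_apply, Pi.smul_apply, smul_eq_mul]; ring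
    rw [hxi]
    nlinarith [mul_nonneg (hw i) (sq_nonneg (z i + y i))]
  linarith

/-- Log-concavity at `λ = 1/2`, extended from compact sets to measurable sets by inner
regularity. -/
lemma IsLogConcave.mul_le_sq {n : ℕ} {μ : Measure (Fin n → ℝ)} [IsProbabilityMeasure μ]
    (h : IsLogConcave μ) {A B D : Set (Fin n → ℝ)} (hA : MeasurableSet A) (hB : MeasurableSet B)
    (hD : ∀ x ∈ A, ∀ y ∈ B, (1 / 2 : ℝ) • x + (1 - 1 / 2 : ℝ) • y ∈ D) :
    μ A * μ B ≤ μ D ^ 2 := by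
  refine ENNReal.mul_le_of_forall_lt fun a ha b hb => ?_
  obtain ⟨K, hKA, hK, haK⟩ := hA.exists_lt_isCompact ha
  obtain ⟨L, hLB, hL, hbL⟩ := hB.exists_lt_isCompact hb
  have hK0 : K.Nonempty := nonempty_of_measure_ne_zero (ne_bot_of_gt haK)
  have hL0 : L.Nonempty := nonempty_of_measure_ne_zero (ne_bot_of_gt hbL)
  have key := h K L hK0 hL0 hK hL (1 / 2) (by norm_num) (by norm_num)
  have hsub : (1 / 2 : ℝ) • K + (1 - 1 / 2 : ℝ) • L ⊆ D := by
    rintro _ ⟨_, ⟨x, hx, rfl⟩, _, ⟨y, hy, rfl⟩, rfl⟩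
    exact hD x (hKA hx) y (hLB hy)
  have key2 := pow_le_pow_left' (key.trans (measure_mono hsub)) 2
  have hsq (t : ℝ≥0∞) : (t ^ (1 / 2 : ℝ)) ^ 2 = t := by
    rw [← ENNReal.rpow_natCast, ← ENNReal.rpow_mul]; norm_num
  have e : (1 - 1 / 2 : ℝ) = 1 / 2 := by norm_num
  rw [e, mul_pow, hsq, hsq] at key2
  exact (mul_le_mul' haK.le hbL.le).trans key2

/-- A form of Borell's lemma for the level sets of a weighted sum of squares. -/
lemma tail_mul_le {n : ℕ} {Ω : Type} [MeasureSpace Ω] [IsProbabilityMeasure (ℙ : Measure Ω)]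
    {Y : Ω → Fin n → ℝ} (hY : Measurable Y) (hlc : IsLogConcave (Measure.map Y ℙ))
    {w : Fin n → ℝ} (hw : ∀ i, 0 ≤ w i) (u : ℝ) :
    ℙ {ω | 9 * u ≤ ∑ i, w i * Y ω i ^ 2} * ℙ {ω | ∑ i, w i * Y ω i ^ 2 < u} ≤
      ℙ {ω | u ≤ ∑ i, w i * Y ω i ^ 2} ^ 2 := by
  have hq : Measurable fun x : Fin n → ℝ => ∑ i, w i * x i ^ 2 := by fun_prop
  have : IsProbabilityMeasure (Measure.map Y ℙ) :=
    Measure.isProbabilityMeasure_map hY.aemeasurable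
  have hA : MeasurableSet {x : Fin n → ℝ | 9 * u ≤ ∑ i, w i * x i ^ 2} :=
    measurableSet_le measurable_const hq
  have hB : MeasurableSet {x : Fin n → ℝ | ∑ i, w i * x i ^ 2 < u} :=
    measurableSet_lt hq measurable_const
  have hD : MeasurableSet {x : Fin n → ℝ | u ≤ ∑ i, w i * x i ^ 2} :=
    measurableSet_le measurable_const hq
  have := hlc.mul_le_sq hA hB (D := {x : Fin n → ℝ | u ≤ ∑ i, w i * x i ^ 2})
    fun x hx y hy => midpoint_quad w hw x y u hx hy
  rwa [Measure.map_apply hY hA, Measure.map_apply hY hB, Measure.map_apply hY hD] at this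

/-- There is a universal constant `c > 0` such that for every log-concave random vector `Y` in
`ℝⁿ` and nonnegative weights `w`, the random variable `S = ∑ᵢ wᵢ Yᵢ²` satisfies
`P(S ≥ (1/2) E S) ≥ c` whenever `0 < E S < ∞`. -/
theorem paley_zygmund_weighted_square :
    ∃ c : ℝ, 0 < c ∧
      ∀ (n : ℕ) (Ω : Type) [MeasureSpace Ω], IsProbabilityMeasure (ℙ : Measure Ω) →
      ∀ Y : Ω → Fin n → ℝ, Measurable Y → IsLogConcave (Measure.map Y ℙ) →
      ∀ w : Fin n → ℝ, (∀ i, 0 ≤ w i) →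
      Integrable (fun ω => ∑ i, w i * (Y ω i) ^ 2) →
      0 < (∫ ω, ∑ i, w i * (Y ω i) ^ 2) →
        ENNReal.ofReal c ≤
          ℙ {ω | (1 / 2) * (∫ ω', ∑ i, w i * (Y ω' i) ^ 2) ≤
              ∑ i, w i * (Y ω i) ^ 2} := by
  refine ⟨1 / 100, by norm_num, ?_⟩
  intro n Ω _ hP Y hY hlc w hw hint hpos
  have htail := tail_mul_le hY hlc hw
  have hSm : Measurable fun ω => ∑ i, w i * Y ω i ^ 2 := by fun_prop
  have hS0 : ∀ ω, 0 ≤ ∑ i, w i * Y ω i ^ 2 := fun ω =>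
    Finset.sum_nonneg fun i _ => mul_nonneg (hw i) (sq_nonneg _)
  obtain ⟨S, hS⟩ : ∃ S : Ω → ℝ, S = fun ω => ∑ i, w i * Y ω i ^ 2 := ⟨_, rfl⟩
  have hSω : ∀ ω, ∑ i, w i * Y ω i ^ 2 = S ω := fun ω => by rw [hS]
  simp only [hSω] at hint hpos hSm hS0 htail ⊢
  obtain ⟨a, ha⟩ : ∃ a : ℝ, a = 1 / 2 * ∫ ω, S ω := ⟨_, rfl⟩
  have hES : ∫ ω, S ω = 2 * a := by rw [ha]; ring
  have ha0 : 0 < a := by rw [ha]; positivity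
  rw [← ha]
  by_contra hlt
  rw [not_le] at hlt
  have hmono : ∀ u, a ≤ u → ℙ {ω | u ≤ S ω} ≤ ENNReal.ofReal (1 / 100) := fun u hu =>
    (measure_mono fun ω (hω : u ≤ S ω) => hu.trans hω).trans hlt.le
  have hdecay : ∀ u, a ≤ u → ℙ {ω | 9 * u ≤ S ω} ≤
      ENNReal.ofReal (1 / 99) * ℙ {ω | u ≤ S ω} := by
    intro u hu
    have h1 := hmono u hu
    have h2 := htail u
    have hcompl : {ω | S ω < u} = {ω | u ≤ S ω}ᶜ := by ext; simp
    have hm : MeasurableSet {ω | u ≤ S ω} := measurableSet_le measurable_const hSm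
    have h3 := probReal_compl_eq_one_sub (μ := (ℙ : Measure Ω)) hm
    rw [← hcompl] at h3
    rw [← ofReal_measureReal, ENNReal.ofReal_le_ofReal_iff (by norm_num)] at h1
    rw [← ofReal_measureReal, ← ofReal_measureReal, ← ofReal_measureReal,
      ← ENNReal.ofReal_mul measureReal_nonneg, ← ENNReal.ofReal_pow measureReal_nonneg,
      ENNReal.ofReal_le_ofReal_iff (by positivity), h3] at h2
    rw [← ofReal_measureReal, ← ofReal_measureReal, ← ENNReal.ofReal_mul (by norm_num),
      ENNReal.ofReal_le_ofReal_iff (by positivity)]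
    have p1 : 0 ≤ (ℙ : Measure Ω).real {ω | u ≤ S ω} := measureReal_nonneg
    have p2 : 0 ≤ (ℙ : Measure Ω).real {ω | 9 * u ≤ S ω} := measureReal_nonneg
    nlinarith
  have hlayer : ∫⁻ u in Set.Ioi 0, ℙ {ω | u ≤ S ω} = ENNReal.ofReal (2 * a) := by
    rw [← hES, ofReal_integral_eq_lintegral_ofReal hint (ae_of_all _ hS0),
      lintegral_eq_lintegral_meas_le _ (ae_of_all _ hS0) hSm.aemeasurable]
  -- The layer-cake formula for `9 S` replaces a change of variables in the tail integral.
  have hlayer9 : ∫⁻ u in Set.Ioi 0, ℙ {ω | u ≤ 9 * S ω} = ENNReal.ofReal (18 * a) := by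
    have h9 : ∫ ω, 9 * S ω = 18 * a := by rw [integral_const_mul, hES]; ring
    have h90 : ∀ ω, 0 ≤ 9 * S ω := fun ω => by linarith [hS0 ω]
    rw [← h9, ofReal_integral_eq_lintegral_ofReal (hint.const_mul 9) (ae_of_all _ h90),
      lintegral_eq_lintegral_meas_le _ (ae_of_all _ h90) (hSm.const_mul 9).aemeasurable]
  have hI1 : ∫⁻ u in Set.Ioc 0 a, ℙ {ω | u ≤ S ω} ≤ ENNReal.ofReal a := by
    refine (lintegral_mono fun _ => prob_le_one).trans ?_
    simp
  have hI2 : ∫⁻ u in Set.Ioc a (9 * a), ℙ {ω | u ≤ S ω} ≤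
      ENNReal.ofReal (1 / 100 * (8 * a)) := by
    refine (setLIntegral_mono measurable_const fun u hu => hmono u hu.1.le).trans ?_
    rw [setLIntegral_const, Real.volume_Ioc, ← ENNReal.ofReal_mul (by norm_num)]
    exact ENNReal.ofReal_le_ofReal (by linarith)
  have hI3 : ∫⁻ u in Set.Ioi (9 * a), ℙ {ω | u ≤ S ω} ≤
      ENNReal.ofReal (1 / 99 * (18 * a)) := by
    have hpt : ∀ u ∈ Set.Ioi (9 * a), ℙ {ω | u ≤ S ω} ≤
        ENNReal.ofReal (1 / 99) * ℙ {ω | u ≤ 9 * S ω} := by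
      intro u hu
      have h := hdecay (u / 9) (by have := Set.mem_Ioi.1 hu; linarith)
      have e1 : 9 * (u / 9) = u := by ring
      have e2 : {ω | u / 9 ≤ S ω} = {ω | u ≤ 9 * S ω} := by
        ext ω; exact div_le_iff₀' (show (0 : ℝ) < 9 by norm_num)
      rwa [e1, e2] at h
    refine (setLIntegral_mono' measurableSet_Ioi hpt).trans ?_
    rw [lintegral_const_mul' _ _ ENNReal.ofReal_ne_top, ENNReal.ofReal_mul (by norm_num),
      ← hlayer9]
    gcongr
    linarith
  have hsplit : Set.Ioi (0 : ℝ) ⊆ (Set.Ioc 0 a ∪ Set.Ioc a (9 * a)) ∪ Set.Ioi (9 * a) := by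
    intro u hu
    rcases le_or_gt u a with h | h
    · exact Or.inl (Or.inl ⟨hu, h⟩)
    rcases le_or_gt u (9 * a) with h' | h'
    · exact Or.inl (Or.inr ⟨h, h'⟩)
    · exact Or.inr h'
  have htot : ENNReal.ofReal (2 * a) ≤
      ENNReal.ofReal (a + 1 / 100 * (8 * a) + 1 / 99 * (18 * a)) := by
    rw [← hlayer, ENNReal.ofReal_add (by positivity) (by positivity),
      ENNReal.ofReal_add (by positivity) (by positivity)]
    refine (lintegral_mono_set hsplit).trans ((lintegral_union_le _ _ _).trans ?_)
    exact add_le_add ((lintegral_union_le _ _ _).trans (add_le_add hI1 hI2)) hI3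
  rw [ENNReal.ofReal_le_ofReal_iff (by positivity)] at htot
  linarith
end

section
/- Let Z be a log-concave real random variable with E Z² < ∞. Then for every t ≥ 0, P(|Z| ≥ t) ≤ exp( 2 − t / (2e·(E Z²)^{1/2}) ). -/
/-!
This is Borell's argument. Put `s = e (E Z²)^{1/2}`, so that Chebyshev's inequality gives
`P(|Z| ≥ s) ≤ e⁻²`, and hence `P(|Z| ≤ s) ≥ 1 - e⁻² ≥ e⁻¹`. For `r ≥ 1` and `l = 2 / (r + 1)`,
a convex combination `l x + (1 - l) y` with `|x| ≥ r s` and `|y| ≤ s` has absolute value at least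
`l r s - (1 - l) s = s`. Log-concavity therefore gives
`P(|Z| ≥ r s)^l * e^{-(1 - l)} ≤ e⁻²`, that is `P(|Z| ≥ r s) ≤ exp (-(r + 3) / 2)`, which is stronger
than the required `exp (2 - r / 2)`. For `r < 1`, the required bound is at least `1`.
-/

open MeasureTheory
open scoped Pointwise ENNReal ProbabilityTheory Classical

/-- For `l = 2 / (r + 1)`, averaging a point outside `(-rs, rs)` with a point of `[-s, s]` gives a
point outside `(-s, s)`. -/
lemma smul_add_smul_subset_tail {s r : ℝ} (hr : 1 ≤ r) {K : Set ℝ}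
    (hK : K ⊆ {x | r * s ≤ |x|}) :
    (2 / (r + 1)) • K + (1 - 2 / (r + 1)) • Set.Icc (-s) s ⊆ {x | s ≤ |x|} := by
  rintro _ ⟨_, ⟨x, hx, rfl⟩, _, ⟨y, hy, rfl⟩, rfl⟩
  have hx' : r * s ≤ |x| := hK hx
  have hy' : |y| ≤ s := abs_le.2 hy
  set l : ℝ := 2 / (r + 1) with hl
  have hl0 : 0 ≤ l := by positivity
  have hl1 : l ≤ 1 := by rw [hl, div_le_one (by linarith)]; linarith
  have hlr : l * (r + 1) = 2 := by rw [hl]; field_simp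
  change s ≤ |l * x + (1 - l) * y|
  have h1 : |l * x| - |(1 - l) * y| ≤ |l * x + (1 - l) * y| := by
    have h := abs_sub_abs_le_abs_sub (l * x) (-((1 - l) * y))
    rwa [abs_neg, sub_neg_eq_add] at h
  rw [abs_mul, abs_mul, abs_of_nonneg hl0, abs_of_nonneg (by linarith : 0 ≤ 1 - l)] at h1
  have h2 : l * (r * s) ≤ l * |x| := mul_le_mul_of_nonneg_left hx' hl0
  have h3 : (1 - l) * |y| ≤ (1 - l) * s := mul_le_mul_of_nonneg_left hy' (by linarith)
  have h4 : l * (r * s) - (1 - l) * s = s := by linear_combination s * hlr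
  linarith

/-- The numerical step: solving `x^l y^{1-l} ≤ e⁻²` for `x`, where `l = 2 / (r + 1)` and
`y ≥ e⁻¹`. -/
lemma le_exp_of_rpow_mul_rpow_le {r x y : ℝ} (hr : 1 ≤ r) (hx : 0 ≤ x) (hy : Real.exp (-1) ≤ y)
    (h : x ^ (2 / (r + 1)) * y ^ (1 - 2 / (r + 1)) ≤ Real.exp (-2)) :
    x ≤ Real.exp (2 - r / 2) := by
  set l : ℝ := 2 / (r + 1) with hl
  have hl0 : 0 < l := by positivity
  have hl1 : l ≤ 1 := by rw [hl, div_le_one (by linarith)]; linarith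
  have hlr : l * (r + 1) = 2 := by rw [hl]; field_simp
  have h1 : Real.exp (-(1 - l)) ≤ y ^ (1 - l) := by
    have := Real.rpow_le_rpow (Real.exp_pos _).le hy (by linarith : 0 ≤ 1 - l)
    rwa [← Real.exp_mul, neg_one_mul] at this
  have h2 : x ^ l * Real.exp (-(1 - l)) ≤ Real.exp (-2) :=
    (mul_le_mul_of_nonneg_left h1 (by positivity)).trans h
  have h3 : x ^ l ≤ Real.exp (2 - r / 2) ^ l := by
    have h4 : x ^ l ≤ Real.exp (-1 - l) := by
      have h5 : Real.exp (-2) = Real.exp (-1 - l) * Real.exp (-(1 - l)) := by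
        rw [← Real.exp_add]; congr 1; ring
      rw [h5] at h2
      exact le_of_mul_le_mul_right h2 (Real.exp_pos _)
    refine h4.trans ?_
    rw [← Real.exp_mul, Real.exp_le_exp]
    nlinarith
  exact (Real.rpow_le_rpow_iff hx (Real.exp_pos _).le hl0).1 h3

/-- Borell's inequality for a log-concave probability measure on `ℝ` whose tail beyond `s` has mass
at most `e⁻²`. -/
lemma IsLogConcave.tail_le {μ : Measure ℝ} [IsProbabilityMeasure μ] (hμ : IsLogConcave μ)
    {s r : ℝ} (hs : 0 < s) (hr : 1 ≤ r) (htail : μ.real {x | s ≤ |x|} ≤ Real.exp (-2)) :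
    μ {x | r * s ≤ |x|} ≤ ENNReal.ofReal (Real.exp (2 - r / 2)) := by
  have hmeas : ∀ a : ℝ, MeasurableSet {x : ℝ | a ≤ |x|} := fun a =>
    measurableSet_le measurable_const measurable_id.abs
  -- Log-concavity speaks of compact sets only, so the tail is exhausted from inside.
  by_contra! hlt
  obtain ⟨K, hKsub, hKc, hKlt⟩ := (hmeas (r * s)).exists_lt_isCompact hlt
  have hKne : K.Nonempty := nonempty_of_measure_ne_zero (bot_lt_of_lt hKlt).ne'
  have hl1 : 2 / (r + 1) ≤ 1 := by rw [div_le_one (by linarith)]; linarith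
  have hlc := (hμ K (Set.Icc (-s) s) hKne ⟨0, by simp [hs.le]⟩ hKc isCompact_Icc
    (2 / (r + 1)) (by positivity) hl1).trans (measure_mono (smul_add_smul_subset_tail hr hKsub))
  have hcentre : Real.exp (-1) ≤ μ.real (Set.Icc (-s) s) := by
    have h1 : 1 - μ.real {x | s ≤ |x|} ≤ μ.real (Set.Icc (-s) s) := by
      rw [← probReal_compl_eq_one_sub (hmeas s)]
      refine measureReal_mono fun x hx => ?_
      have hx' : |x| < s := not_le.1 hx
      exact abs_le.1 hx'.le
    have h2 : Real.exp (-2) = Real.exp (-1) * Real.exp (-1) := by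
      rw [← Real.exp_add]; norm_num
    have h3 : Real.exp (-1) ≤ 1 / 2 := by
      rw [Real.exp_neg, ← one_div]
      exact one_div_le_one_div_of_le two_pos (by linarith [Real.add_one_le_exp 1])
    nlinarith [Real.exp_pos (-1)]
  have hreal : μ.real K ^ (2 / (r + 1)) * μ.real (Set.Icc (-s) s) ^ (1 - 2 / (r + 1))
      ≤ Real.exp (-2) := by
    have h := ENNReal.toReal_mono (measure_ne_top _ _) hlc
    rw [ENNReal.toReal_mul, ← ENNReal.toReal_rpow, ← ENNReal.toReal_rpow] at h
    exact h.trans htail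
  have hfin := le_exp_of_rpow_mul_rpow_le hr measureReal_nonneg hcentre hreal
  refine hKlt.not_ge ?_
  rw [← ofReal_measureReal (μ := μ) (s := K)]
  exact ENNReal.ofReal_le_ofReal hfin

/-- If `Z` is a log-concave real random variable with finite second moment, then
`P(|Z| ≥ t) ≤ exp(2 − t/(2e (E Z²)^{1/2}))` for all `t ≥ 0`. -/
theorem tail_bound_logconcave_real
    (Ω : Type) [MeasureSpace Ω] [IsProbabilityMeasure (ℙ : Measure Ω)]
    (Z : Ω → ℝ) (hZ : Measurable Z) (hlc : IsLogConcave (Measure.map Z ℙ))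
    (hint : Integrable fun ω => (Z ω) ^ 2) (t : ℝ) (ht : 0 ≤ t) :
    ℙ {ω | t ≤ |Z ω|} ≤
      ENNReal.ofReal
        (Real.exp (2 - t / (2 * Real.exp 1 * Real.sqrt (∫ ω, (Z ω) ^ 2)))) := by
  set σ : ℝ := Real.sqrt (∫ ω, (Z ω) ^ 2) with hσ
  have hσ0 : 0 ≤ σ := Real.sqrt_nonneg _
  have he : 0 < Real.exp 1 := Real.exp_pos 1
  have htrivial : ∀ a : ℝ, a ≤ 2 → ℙ {ω | t ≤ |Z ω|} ≤ ENNReal.ofReal (Real.exp (2 - a)) := by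
    intro a ha
    refine prob_le_one.trans ?_
    rw [ENNReal.one_le_ofReal]
    exact Real.one_le_exp (by linarith)
  rcases hσ0.eq_or_lt with h0 | hpos
  -- If `σ = 0`, the quotient is `0` by convention and the bound is `e²`.
  · exact htrivial _ (by simp [← h0])
  set s : ℝ := Real.exp 1 * σ with hs
  have hspos : 0 < s := mul_pos he hpos
  have hquot : t / (2 * Real.exp 1 * σ) = t / s / 2 := by
    rw [hs, div_div]; congr 1; ring
  rw [hquot]
  rcases lt_or_ge (t / s) 1 with hr | hr
  · exact htrivial _ (by linarith)
  have hprob : IsProbabilityMeasure (Measure.map Z ℙ) :=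
    Measure.isProbabilityMeasure_map hZ.aemeasurable
  have hmeas : ∀ a : ℝ, MeasurableSet {x : ℝ | a ≤ |x|} := fun a =>
    measurableSet_le measurable_const measurable_id.abs
  have htail : (Measure.map Z ℙ).real {x | s ≤ |x|} ≤ Real.exp (-2) := by
    rw [map_measureReal_apply hZ (hmeas s)]
    have hcheb := mul_meas_ge_le_integral_of_nonneg (μ := (ℙ : Measure Ω))
      (f := fun ω => (Z ω) ^ 2) (Filter.Eventually.of_forall fun ω => sq_nonneg (Z ω)) hint (s ^ 2)
    have hset : {ω | s ^ 2 ≤ (Z ω) ^ 2} = Z ⁻¹' {x | s ≤ |x|} := by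
      ext ω
      simp only [Set.mem_ofPred_eq, Set.mem_preimage]
      rw [sq_le_sq, abs_of_pos hspos]
    rw [hset] at hcheb
    have hσ2 : ∫ ω, (Z ω) ^ 2 = σ ^ 2 :=
      (Real.sq_sqrt (integral_nonneg fun ω => sq_nonneg (Z ω))).symm
    have hs2 : s ^ 2 = σ ^ 2 * Real.exp 2 := by
      rw [hs, mul_pow, ← Real.exp_nat_mul]; norm_num [mul_comm]
    rw [hσ2, hs2, mul_assoc] at hcheb
    have h1 := (mul_le_iff_le_one_right (by positivity : 0 < σ ^ 2)).1 hcheb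
    rw [Real.exp_neg, ← one_div, le_div_iff₀ (Real.exp_pos 2), mul_comm]
    exact h1
  have h := hlc.tail_le hspos hr htail
  rw [div_mul_cancel₀ t hspos.ne', Measure.map_apply hZ (hmeas t)] at h
  exact h
end

section
/- There exists a universal constant C₅ such that the following holds. Let Z be a log-concave random vector in ℝⁿ and let f : ℝⁿ → ℝ be a seminorm. Then for all p ≥ q ≥ 1, (E f(Z)^p)^{1/p} ≤ C₅·(p/q)·(E f(Z)^q)^{1/q}. -/
/-!
Write `μ` for the law of `Z`; it suffices to bound `∫ f ^ p ∂μ` in terms of `M`, where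
`M ^ q = ∫ f ^ q ∂μ`. The argument is Borell's lemma.

* For `0 < l < 1` and `t = 2 / l - 1`, the seminorm inequality gives
  `l • {f > t s} + (1 - l) • {f ≤ s} ⊆ {f > s}`, so log-concavity and inner regularity yield
  `μ {f > t s} ^ l * μ {f ≤ s} ^ (1 - l) ≤ μ {f > s}` (`borell`).
* With `s = e² M`, Markov's inequality gives `μ {f > s} ≤ e ^ (-2 q)`, and Borell's inequality
  then upgrades this to the exponential tail `μ {f > t s} ≤ e ^ (-q (t + 1) / 2)` (`borell_tail`).
* Cutting the range of `f` into the levels `k s`, this bounds the exponential moment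
  `∫ exp (q f / (4 s)) ∂μ` by `6 e ^ (q / 2)` (`lintegral_exp_le`).
* Finally `x ^ p ≤ p ^ p * exp x` at `x = q f / (4 s)` gives
  `∫ f ^ p ∂μ ≤ (4 s p / q) ^ p * 6 e ^ (q / 2)`, and `p ≥ q ≥ 1` turns the `p`-th root into
  `24 e ^ 3 (p / q) M`.
-/

open MeasureTheory
open scoped Pointwise ENNReal ProbabilityTheory Classical

/-! ### Borell's lemma and exponential tails -/

lemma seminorm_continuous {n : ℕ} (f : Seminorm ℝ (Fin n → ℝ)) : Continuous f :=
  f.convexOn.locallyLipschitz.continuous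

/-- The set inclusion behind Borell's lemma. -/
lemma borell_subset {n : ℕ} (f : Seminorm ℝ (Fin n → ℝ)) {s l : ℝ} (hl0 : 0 < l) (hl1 : l < 1)
    {K L : Set (Fin n → ℝ)} (hK : K ⊆ {x | (2 / l - 1) * s < f x}) (hL : L ⊆ {x | f x ≤ s}) :
    l • K + (1 - l) • L ⊆ {x | s < f x} := by
  rintro _ ⟨_, ⟨x, hx, rfl⟩, _, ⟨y, hy, rfl⟩, rfl⟩
  have h1 : (2 / l - 1) * s < f x := hK hx
  have h2 : f y ≤ s := hL hy
  have h3 : f (l • x) ≤ f (l • x + (1 - l) • y) + f ((1 - l) • y) := by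
    simpa using map_sub_le_add f (l • x + (1 - l) • y) ((1 - l) • y)
  rw [map_smul_eq_mul, map_smul_eq_mul, Real.norm_of_nonneg hl0.le,
    Real.norm_of_nonneg (by linarith)] at h3
  have h4 : l * ((2 / l - 1) * s) < l * f x := mul_lt_mul_of_pos_left h1 hl0
  have h5 : l * ((2 / l - 1) * s) = (2 - l) * s := by field_simp
  have h6 : (1 - l) * f y ≤ (1 - l) * s := mul_le_mul_of_nonneg_left h2 (by linarith)
  change s < f (l • x + (1 - l) • y)
  linarith

/-- Passing from compact subsets to a measurable set in an inequality for `μ K ^ l`. -/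
lemma rpow_mul_le_of_compact {n : ℕ} (μ : Measure (Fin n → ℝ)) [IsFiniteMeasure μ]
    {A : Set (Fin n → ℝ)} (hA : MeasurableSet A) {l : ℝ} (hl : 0 < l) {d c : ℝ≥0∞}
    (hd : d ≠ ∞)
    (h : ∀ K ⊆ A, IsCompact K → K.Nonempty → μ K ^ l * d ≤ c) : μ A ^ l * d ≤ c := by
  rcases eq_or_ne d 0 with rfl | hd0
  · simp
  rw [← ENNReal.le_div_iff_mul_le (Or.inl hd0) (Or.inl hd), ← ENNReal.le_rpow_inv_iff hl,
    hA.measure_eq_iSup_isCompact]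
  refine iSup₂_le fun K hK => iSup_le fun hKc => ?_
  rcases K.eq_empty_or_nonempty with rfl | hne
  · simp
  rw [ENNReal.le_rpow_inv_iff hl, ENNReal.le_div_iff_mul_le (Or.inl hd0) (Or.inl hd)]
  exact h K hK hKc hne

/-- Borell's lemma for a seminorm. -/
lemma borell_s15 {n : ℕ} (μ : Measure (Fin n → ℝ)) [IsProbabilityMeasure μ] (hμ : IsLogConcave μ)
    (f : Seminorm ℝ (Fin n → ℝ)) {s l : ℝ} (hl0 : 0 < l) (hl1 : l < 1) :
    μ {x | (2 / l - 1) * s < f x} ^ l * μ {x | f x ≤ s} ^ (1 - l) ≤ μ {x | s < f x} := by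
  have hf := seminorm_continuous f
  have hl1' : 0 < 1 - l := by linarith
  refine rpow_mul_le_of_compact μ (measurableSet_lt measurable_const hf.measurable) hl0
    (ENNReal.rpow_ne_top_of_nonneg hl1'.le (measure_ne_top _ _))
    fun K hK hKc hKn => ?_
  rw [mul_comm]
  refine rpow_mul_le_of_compact μ (measurableSet_le hf.measurable measurable_const) hl1'
    (ENNReal.rpow_ne_top_of_nonneg hl0.le (measure_ne_top _ _))
    fun L hL hLc hLn => ?_
  rw [mul_comm]
  exact (hμ K L hKn hLn hKc hLc l hl0.le hl1.le).trans
    (measure_mono (borell_subset f hl0 hl1 hK hL))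

/-- Exponential decay of the tail of a seminorm, from smallness at a single level. -/
lemma borell_tail {n : ℕ} (μ : Measure (Fin n → ℝ)) [IsProbabilityMeasure μ]
    (hμ : IsLogConcave μ) (f : Seminorm ℝ (Fin n → ℝ)) {s q : ℝ} (hq : 1 ≤ q)
    (hs : μ.real {x | s < f x} ≤ Real.exp (-2 * q)) {t : ℝ} (ht : 1 < t) :
    μ.real {x | t * s < f x} ≤ Real.exp (-q * (t + 1) / 2) := by
  have hf := seminorm_continuous f
  -- The value of `l` for which `2 / l - 1 = t`.
  obtain ⟨l, hl⟩ : ∃ l : ℝ, l = 2 / (t + 1) := ⟨_, rfl⟩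
  have hl0 : 0 < l := by rw [hl]; positivity
  have hl1 : l < 1 := by rw [hl, div_lt_one (by linarith)]; linarith
  have hlt : 2 / l - 1 = t := by rw [hl]; field_simp; ring
  have hB := ENNReal.toReal_mono (measure_ne_top _ _) (borell_s15 μ hμ f (s := s) hl0 hl1)
  rw [ENNReal.toReal_mul, ← ENNReal.toReal_rpow, ← ENNReal.toReal_rpow, hlt] at hB
  change μ.real _ ^ l * μ.real _ ^ (1 - l) ≤ μ.real _ at hB
  set a := μ.real {x | t * s < f x} with ha
  set b := μ.real {x | f x ≤ s} with hb
  have ha0 : 0 ≤ a := measureReal_nonneg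
  have hbc : b = 1 - μ.real {x | s < f x} := by
    rw [hb, ← probReal_compl_eq_one_sub (measurableSet_lt measurable_const hf.measurable)]
    congr 1; ext x; simp
  have he : Real.exp (-1) < 1 / 2 := by
    rw [Real.exp_neg, inv_eq_one_div]
    exact one_div_lt_one_div_of_lt (by norm_num) (by linarith [Real.exp_one_gt_d9])
  have hb1 : Real.exp (-1) ≤ b := by
    have : Real.exp (-2 * q) ≤ Real.exp (-1) := Real.exp_le_exp.2 (by linarith)
    linarith
  have hb2 : Real.exp (-(1 - l)) ≤ b ^ (1 - l) := by
    have := Real.rpow_le_rpow (Real.exp_pos _).le hb1 (by linarith : 0 ≤ 1 - l)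
    rwa [← Real.exp_mul, neg_one_mul] at this
  have h1 : a ^ l * Real.exp (-(1 - l)) ≤ Real.exp (-2 * q) :=
    (mul_le_mul_of_nonneg_left hb2 (Real.rpow_nonneg ha0 _)).trans (hB.trans hs)
  have h2 : a ^ l ≤ Real.exp (-q) := by
    have h3 : a ^ l = a ^ l * Real.exp (-(1 - l)) * Real.exp (1 - l) := by
      rw [mul_assoc, ← Real.exp_add]; simp
    rw [h3]
    refine (mul_le_mul_of_nonneg_right h1 (Real.exp_pos _).le).trans ?_
    rw [← Real.exp_add]
    exact Real.exp_le_exp.2 (by linarith)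
  have h4 := Real.rpow_le_rpow (Real.rpow_nonneg ha0 _) h2 (inv_nonneg.2 hl0.le)
  rw [Real.rpow_rpow_inv ha0 hl0.ne', ← Real.exp_mul] at h4
  refine h4.trans (le_of_eq ?_)
  rw [hl]; congr 1; field_simp

/-! ### Exponential moments -/

lemma tsum_exp_le : ∑' k : ℕ, ENNReal.ofReal (Real.exp (-((k : ℝ) + 3) / 4)) ≤
    ENNReal.ofReal 5 := by
  have hr : Real.exp (-1 / 4) ≤ 4 / 5 := by
    have h : (5 / 4 : ℝ) ≤ Real.exp (1 / 4) := by
      linarith [Real.add_one_le_exp (1 / 4 : ℝ)]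
    rw [show (-1 / 4 : ℝ) = -(1 / 4) by ring, Real.exp_neg, show (4 / 5 : ℝ) = (5 / 4)⁻¹ by norm_num]
    exact inv_anti₀ (by norm_num) h
  have hs : Summable fun k : ℕ => (4 / 5 : ℝ) ^ k :=
    summable_geometric_of_lt_one (by norm_num) (by norm_num)
  have h1 : ∀ k : ℕ, ENNReal.ofReal (Real.exp (-((k : ℝ) + 3) / 4)) ≤
      ENNReal.ofReal ((4 / 5 : ℝ) ^ k) := fun k => by
    refine ENNReal.ofReal_le_ofReal ?_
    calc Real.exp (-((k : ℝ) + 3) / 4) ≤ Real.exp (k * (-1 / 4)) :=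
          Real.exp_le_exp.2 (by linarith)
      _ = Real.exp (-1 / 4) ^ k := Real.exp_nat_mul _ _
      _ ≤ (4 / 5) ^ k := pow_le_pow_left₀ (Real.exp_pos _).le hr k
  refine (ENNReal.tsum_le_tsum h1).trans ?_
  rw [← ENNReal.ofReal_tsum_of_nonneg (fun k => by positivity) hs,
    tsum_geometric_of_lt_one (by norm_num) (by norm_num)]
  norm_num

/-- Pointwise bound of the exponential by a sum over the level sets `{u > (k + 2) s}`. -/
lemma exp_le_tsum_levels {s q u : ℝ} (hs : 0 < s) (hq : 1 ≤ q) :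
    ENNReal.ofReal (Real.exp (q * u / (4 * s))) ≤ ENNReal.ofReal (Real.exp (q / 2)) +
      ∑' k : ℕ, (if ((k : ℝ) + 2) * s < u then
        ENNReal.ofReal (Real.exp (q * ((k : ℝ) + 3) / 4)) else 0) := by
  have hexp : ∀ v : ℝ, u ≤ v * s → Real.exp (q * u / (4 * s)) ≤ Real.exp (q * v / 4) := by
    intro v hv
    refine Real.exp_le_exp.2 ?_
    rw [div_le_div_iff₀ (by positivity) (by norm_num)]
    nlinarith [mul_le_mul_of_nonneg_left hv (by linarith : 0 ≤ q)]
  rcases le_or_gt u (2 * s) with h | h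
  · refine le_add_right (ENNReal.ofReal_le_ofReal ((hexp 2 h).trans (le_of_eq ?_)))
    congr 1; ring
  · have hus : 2 < u / s := (lt_div_iff₀ hs).2 h
    have hc : 3 ≤ ⌈u / s⌉₊ := Nat.lt_ceil.2 (by exact_mod_cast hus)
    obtain ⟨k, hk⟩ := Nat.exists_eq_add_of_le hc
    have h1 : u ≤ ((k : ℝ) + 3) * s := by
      rw [← div_le_iff₀ hs]
      refine (Nat.le_ceil _).trans ?_
      rw [hk]; push_cast; linarith
    have h2 : ((k : ℝ) + 2) * s < u := by
      rw [← lt_div_iff₀ hs]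
      have : k + 2 < ⌈u / s⌉₊ := by omega
      exact_mod_cast Nat.lt_ceil.1 this
    refine le_add_left (le_trans ?_ (ENNReal.le_tsum k))
    rw [if_pos h2]
    exact ENNReal.ofReal_le_ofReal (hexp _ h1)

/-- Bound on an exponential moment of a seminorm under a log-concave measure. -/
lemma lintegral_exp_le {n : ℕ} (μ : Measure (Fin n → ℝ)) [IsProbabilityMeasure μ]
    (hμ : IsLogConcave μ) (f : Seminorm ℝ (Fin n → ℝ)) {s q : ℝ} (hs0 : 0 < s) (hq : 1 ≤ q)
    (hs : μ.real {x | s < f x} ≤ Real.exp (-2 * q)) :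
    ∫⁻ x, ENNReal.ofReal (Real.exp (q * f x / (4 * s))) ∂μ ≤
      ENNReal.ofReal (6 * Real.exp (q / 2)) := by
  have hf := seminorm_continuous f
  have hmeas : ∀ k : ℕ, MeasurableSet {x | ((k : ℝ) + 2) * s < f x} := fun k =>
    measurableSet_lt measurable_const hf.measurable
  refine (lintegral_mono fun x => exp_le_tsum_levels (u := f x) hs0 hq).trans ?_
  rw [lintegral_add_left measurable_const, lintegral_tsum fun k =>
    (Measurable.ite (hmeas k) measurable_const measurable_const).aemeasurable]
  have hterm : ∀ k : ℕ, ∫⁻ x, (if ((k : ℝ) + 2) * s < f x then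
      ENNReal.ofReal (Real.exp (q * ((k : ℝ) + 3) / 4)) else 0) ∂μ ≤
      ENNReal.ofReal (Real.exp (-((k : ℝ) + 3) / 4)) := by
    intro k
    have h1 : ∫⁻ x, (if ((k : ℝ) + 2) * s < f x then
        ENNReal.ofReal (Real.exp (q * ((k : ℝ) + 3) / 4)) else 0) ∂μ =
        ENNReal.ofReal (Real.exp (q * ((k : ℝ) + 3) / 4)) * μ {x | ((k : ℝ) + 2) * s < f x} := by
      rw [← lintegral_indicator_const (hmeas k)]
      refine lintegral_congr fun x => ?_
      simp [Set.indicator]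
    have hk : (0 : ℝ) ≤ k := k.cast_nonneg
    have h2 := borell_tail μ hμ f hq hs (t := (k : ℝ) + 2) (by linarith)
    rw [h1, ← ofReal_measureReal, ← ENNReal.ofReal_mul (Real.exp_pos _).le]
    refine ENNReal.ofReal_le_ofReal
      ((mul_le_mul_of_nonneg_left h2 (Real.exp_pos _).le).trans ?_)
    rw [← Real.exp_add]
    refine Real.exp_le_exp.2 ?_
    nlinarith
  have h5 := (ENNReal.tsum_le_tsum hterm).trans tsum_exp_le
  refine (add_le_add_right h5 _).trans ?_
  rw [lintegral_const, measure_univ, mul_one, ← ENNReal.ofReal_add (Real.exp_pos _).le (by norm_num)]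
  refine ENNReal.ofReal_le_ofReal ?_
  linarith [Real.one_le_exp (by linarith : 0 ≤ q / 2)]

/-! ### Comparison of moments -/

lemma rpow_le_exp {u s p q : ℝ} (hu : 0 ≤ u) (hs : 0 < s) (hq : 1 ≤ q) (hp : 1 ≤ p) :
    u ^ p ≤ (4 * s * (p / q)) ^ p * Real.exp (q * u / (4 * s)) := by
  have hq0 : 0 < q := by linarith
  have hp0 : 0 < p := by linarith
  have h1 : q * u / (4 * s) / p ≤ Real.exp (q * u / (4 * s) / p) := by
    linarith [Real.add_one_le_exp (q * u / (4 * s) / p)]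
  have h2 := Real.rpow_le_rpow (by positivity) h1 hp0.le
  rw [← Real.exp_mul, div_mul_cancel₀ _ hp0.ne'] at h2
  have h3 : u = 4 * s * (p / q) * (q * u / (4 * s) / p) := by field_simp
  calc u ^ p = (4 * s * (p / q)) ^ p * (q * u / (4 * s) / p) ^ p := by
        conv_lhs => rw [h3]
        rw [Real.mul_rpow (by positivity) (by positivity)]
    _ ≤ _ := mul_le_mul_of_nonneg_left h2 (by positivity)

lemma integral_rpow_le {n : ℕ} (μ : Measure (Fin n → ℝ)) [IsProbabilityMeasure μ]
    (hμ : IsLogConcave μ) (f : Seminorm ℝ (Fin n → ℝ)) {s p q : ℝ} (hs0 : 0 < s) (hq : 1 ≤ q)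
    (hp : 1 ≤ p) (hs : μ.real {x | s < f x} ≤ Real.exp (-2 * q)) :
    ∫ x, f x ^ p ∂μ ≤ (4 * s * (p / q)) ^ p * (6 * Real.exp (q / 2)) := by
  have hf := seminorm_continuous f
  have hc : 0 ≤ (4 * s * (p / q)) ^ p := by positivity
  rw [integral_eq_lintegral_of_nonneg_ae
    (Filter.Eventually.of_forall fun x => Real.rpow_nonneg (apply_nonneg f x) _)
    (hf.measurable.pow_const p).aestronglyMeasurable]
  refine ENNReal.toReal_le_of_le_ofReal (by positivity) ?_
  calc ∫⁻ x, ENNReal.ofReal (f x ^ p) ∂μ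
      ≤ ∫⁻ x, ENNReal.ofReal ((4 * s * (p / q)) ^ p) *
          ENNReal.ofReal (Real.exp (q * f x / (4 * s))) ∂μ := by
        refine lintegral_mono fun x => ?_
        rw [← ENNReal.ofReal_mul hc]
        exact ENNReal.ofReal_le_ofReal (rpow_le_exp (apply_nonneg f x) hs0 hq hp)
    _ = ENNReal.ofReal ((4 * s * (p / q)) ^ p) *
          ∫⁻ x, ENNReal.ofReal (Real.exp (q * f x / (4 * s))) ∂μ :=
        lintegral_const_mul' _ _ ENNReal.ofReal_ne_top
    _ ≤ _ := by
        rw [ENNReal.ofReal_mul hc]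
        exact mul_le_mul_right (lintegral_exp_le μ hμ f hs0 hq hs) _

/-- The moment comparison for a log-concave probability measure. -/
lemma moment_comparison {n : ℕ} (μ : Measure (Fin n → ℝ)) [IsProbabilityMeasure μ]
    (hμ : IsLogConcave μ) (f : Seminorm ℝ (Fin n → ℝ)) {p q : ℝ} (hq : 1 ≤ q) (hqp : q ≤ p) :
    (∫ x, f x ^ p ∂μ) ^ (1 / p) ≤
      24 * Real.exp 3 * (p / q) * (∫ x, f x ^ q ∂μ) ^ (1 / q) := by
  have hf := seminorm_continuous f
  have hp : 1 ≤ p := hq.trans hqp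
  have hq0 : 0 < q := by linarith
  have hp0 : 0 < p := by linarith
  have hnn : ∀ r : ℝ, 0 ≤ᵐ[μ] fun x => f x ^ r := fun r =>
    Filter.Eventually.of_forall fun x => Real.rpow_nonneg (apply_nonneg f x) _
  have hIq : 0 ≤ ∫ x, f x ^ q ∂μ := integral_nonneg_of_ae (hnn q)
  -- Without integrability the left-hand integral is `0` by convention.
  by_cases hint : Integrable (fun x => f x ^ p) μ
  swap
  · rw [integral_undef hint, Real.zero_rpow (by positivity)]
    positivity
  have hintq : Integrable (fun x => f x ^ q) μ := by
    refine ((integrable_const (1 : ℝ)).add hint).mono'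
      (hf.measurable.pow_const q).aestronglyMeasurable (Filter.Eventually.of_forall fun x => ?_)
    have hx := apply_nonneg f x
    rw [Real.norm_of_nonneg (Real.rpow_nonneg hx _)]
    change f x ^ q ≤ 1 + f x ^ p
    rcases le_total (f x) 1 with h | h
    · linarith [Real.rpow_le_one hx h hq0.le, Real.rpow_nonneg hx p]
    · linarith [Real.rpow_le_rpow_of_exponent_le h hqp]
  rcases hIq.eq_or_lt with h0 | hpos
  · have hae := (integral_eq_zero_iff_of_nonneg_ae (hnn q) hintq).1 h0.symm
    have : ∫ x, f x ^ p ∂μ = 0 := by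
      refine integral_eq_zero_of_ae ?_
      filter_upwards [hae] with x hx
      have : f x = 0 := (Real.rpow_eq_zero (apply_nonneg f x) hq0.ne').1 hx
      simp [this, hp0.ne']
    rw [this, Real.zero_rpow (by positivity)]
    positivity
  set M := (∫ x, f x ^ q ∂μ) ^ (1 / q) with hM
  have hM0 : 0 < M := Real.rpow_pos_of_pos hpos _
  have hMq : M ^ q = ∫ x, f x ^ q ∂μ := by
    rw [hM, one_div, Real.rpow_inv_rpow hIq hq0.ne']
  obtain ⟨s, hs⟩ : ∃ s, s = Real.exp 2 * M := ⟨_, rfl⟩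
  have hs0 : 0 < s := by rw [hs]; positivity
  have htail : μ.real {x | s < f x} ≤ Real.exp (-2 * q) := by
    have h1 := mul_meas_ge_le_integral_of_nonneg (hnn q) hintq (s ^ q)
    have h2 : μ.real {x | s < f x} ≤ μ.real {x | s ^ q ≤ f x ^ q} :=
      measureReal_mono fun x hx => Real.rpow_le_rpow hs0.le (le_of_lt hx) hq0.le
    have h3 : s ^ q = Real.exp (2 * q) * M ^ q := by
      rw [hs, Real.mul_rpow (Real.exp_pos _).le hM0.le, ← Real.exp_mul]
    have h4 : 0 < M ^ q := Real.rpow_pos_of_pos hM0 _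
    have h5 : Real.exp (2 * q) * μ.real {x | s < f x} ≤ 1 := by
      refine le_of_mul_le_mul_left ?_ h4
      calc M ^ q * (Real.exp (2 * q) * μ.real {x | s < f x})
          = s ^ q * μ.real {x | s < f x} := by rw [h3]; ring
        _ ≤ s ^ q * μ.real {x | s ^ q ≤ f x ^ q} :=
            mul_le_mul_of_nonneg_left h2 (Real.rpow_nonneg hs0.le _)
        _ ≤ M ^ q * 1 := by rw [mul_one, hMq]; exact h1
    rw [show -2 * q = -(2 * q) by ring, Real.exp_neg, inv_eq_one_div,
      le_div_iff₀ (Real.exp_pos _), mul_comm]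
    exact h5
  have hmain := integral_rpow_le μ hμ f hs0 hq hp htail
  have h6 : 6 * Real.exp (q / 2) ≤ (6 * Real.exp (1 / 2)) ^ p := by
    rw [Real.mul_rpow (by norm_num) (Real.exp_pos _).le, ← Real.exp_mul]
    refine mul_le_mul (Real.self_le_rpow_of_one_le (by norm_num) hp)
      (Real.exp_le_exp.2 (by linarith)) (Real.exp_pos _).le (by positivity)
  have h7 : ∫ x, f x ^ p ∂μ ≤ (4 * s * (p / q) * (6 * Real.exp (1 / 2))) ^ p := by
    rw [Real.mul_rpow (by positivity) (by positivity)]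
    exact hmain.trans (mul_le_mul_of_nonneg_left h6 (by positivity))
  have h8 := Real.rpow_le_rpow (integral_nonneg_of_ae (hnn p)) h7 (by positivity : 0 ≤ 1 / p)
  rw [one_div, Real.rpow_rpow_inv (by positivity) hp0.ne', ← one_div] at h8
  refine h8.trans ?_
  have h9 : Real.exp 2 * Real.exp (1 / 2) ≤ Real.exp 3 := by
    rw [← Real.exp_add]; exact Real.exp_le_exp.2 (by norm_num)
  calc 4 * s * (p / q) * (6 * Real.exp (1 / 2))
      = 24 * (Real.exp 2 * Real.exp (1 / 2)) * (p / q) * M := by rw [hs]; ring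
    _ ≤ _ := by gcongr

/-- There is a universal constant `C₅` such that for every log-concave random vector `Z` in
`ℝⁿ`, every seminorm `f` on `ℝⁿ` and all `p ≥ q ≥ 1`:
`(E f(Z)^p)^{1/p} ≤ C₅ (p/q) (E f(Z)^q)^{1/q}`. -/
theorem seminorm_moment_comparison :
    ∃ C₅ : ℝ, 0 < C₅ ∧
      ∀ (n : ℕ) (Ω : Type) [MeasureSpace Ω], IsProbabilityMeasure (ℙ : Measure Ω) →
      ∀ Z : Ω → Fin n → ℝ, Measurable Z → IsLogConcave (Measure.map Z ℙ) →
      ∀ f : Seminorm ℝ (Fin n → ℝ), ∀ p q : ℝ, 1 ≤ q → q ≤ p →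
        (∫ ω, f (Z ω) ^ p) ^ (1 / p) ≤ C₅ * (p / q) * (∫ ω, f (Z ω) ^ q) ^ (1 / q) := by
  refine ⟨24 * Real.exp 3, by positivity, fun n Ω _ hP Z hZ hlc f p q hq hqp => ?_⟩
  have : IsProbabilityMeasure (Measure.map Z ℙ) := Measure.isProbabilityMeasure_map hZ.aemeasurable
  have h := moment_comparison (Measure.map Z ℙ) hlc f hq hqp
  have hm : ∀ r : ℝ, ∫ x, f x ^ r ∂(Measure.map Z ℙ) = ∫ ω, f (Z ω) ^ r := fun r =>
    integral_map hZ.aemeasurable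
      ((seminorm_continuous f).measurable.pow_const r).aestronglyMeasurable
  rwa [hm, hm] at h
end
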